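/- arXiv:2411.17638 — 2 statements merged into one kernel-verified Lean document; each statement's English description precedes it below -/
import Mathlib

section
/- Theorem D, ℚ(i)-dihedral family: For every integer n ≥ 1, let w_n = 4^n + 1 and take r = 24·w_n. Then the quotient #{primes ℓ with 5 ≤ ℓ ≤ x and c_r(ν_r(ℓ)) = 1} / π(x) tends to (1/2)^{n+1} (in ℝ, as the natural number x → ∞). -/
open Polynomial Filter

/-- The `N`-th Fourier coefficient of the mod-2 eta power `η^r(q^{m_r})`:
the coefficient of `X^N` in `X^{b_r} · ∏_{n=1}^{N} (1 − X^{m_r·n})^r` over `ZMod 2`,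
where `m_r = 24 / gcd 24 r` and `b_r = r / gcd 24 r`. -/
noncomputable def etaCoeff (r N : ℕ) : ZMod 2 :=
  (X ^ (r / Nat.gcd 24 r) *
    ∏ n ∈ Finset.Icc 1 N,
      ((1 : Polynomial (ZMod 2)) - X ^ (24 / Nat.gcd 24 r * n)) ^ r).coeff N

/-- `ν_r(ℓ)`: the smallest multiple of `ℓ` that is `≥ b_r` and congruent to `b_r`
modulo `m_r`. -/
noncomputable def nuR (r ℓ : ℕ) : ℕ :=
  sInf {N : ℕ | ℓ ∣ N ∧ r / Nat.gcd 24 r ≤ N ∧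
    N % (24 / Nat.gcd 24 r) = (r / Nat.gcd 24 r) % (24 / Nat.gcd 24 r)}

/-- `π(x)`: the number of primes `≤ x`. -/
def primePi (x : ℕ) : ℕ := ((Finset.range (x + 1)).filter Nat.Prime).card

/-- The number of primes `ℓ` with `5 ≤ ℓ ≤ x` and `c_r(ν_r(ℓ)) = 1`. -/
noncomputable def etaDensityCount (r x : ℕ) : ℕ :=
  ((Finset.range (x + 1)).filter
    (fun ℓ => ℓ.Prime ∧ 5 ≤ ℓ ∧ etaCoeff r (nuR r ℓ) = 1)).card

section WienerIkehara

open MeasureTheory Set Topology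

/-- The Fejér kernel `2 (1 - cos v) / v ^ 2`. -/
noncomputable def fejerKernel (v : ℝ) : ℝ := if v = 0 then 1 else 2 * (1 - Real.cos v) / v ^ 2

lemma fejerKernel_nonneg (v : ℝ) : 0 ≤ fejerKernel v := by
  unfold fejerKernel
  split_ifs
  · exact zero_le_one
  · have := Real.cos_le_one v
    have : 0 ≤ 1 - Real.cos v := by linarith
    positivity

lemma fejerKernel_le_one (v : ℝ) : fejerKernel v ≤ 1 := by
  unfold fejerKernel
  split_ifs with h
  · exact le_rfl
  · rw [div_le_one (by positivity)]
    linarith [Real.one_sub_sq_div_two_le_cos (x := v)]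

lemma fejerKernel_le (v : ℝ) : fejerKernel v ≤ 5 * (1 + v ^ 2)⁻¹ := by
  rw [← div_eq_mul_inv, le_div_iff₀ (by positivity)]
  have h1 := fejerKernel_le_one v
  have h0 := fejerKernel_nonneg v
  have : fejerKernel v * v ^ 2 ≤ 4 := by
    unfold fejerKernel
    split_ifs with h
    · simp [h]
    · rw [div_mul_cancel₀ _ (by positivity)]
      linarith [Real.neg_one_le_cos v]
  linarith

lemma measurable_fejerKernel : Measurable fejerKernel := by
  unfold fejerKernel
  refine Measurable.ite (measurableSet_singleton 0) measurable_const ?_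
  fun_prop

lemma integrable_fejerKernel : Integrable fejerKernel := by
  refine Integrable.mono' (integrable_inv_one_add_sq.const_mul 5)
    measurable_fejerKernel.aestronglyMeasurable (Eventually.of_forall fun v ↦ ?_)
  rw [Real.norm_of_nonneg (fejerKernel_nonneg v)]
  exact fejerKernel_le v

lemma integral_fejerKernel_pos : 0 < ∫ v, fejerKernel v := by
  rw [integral_pos_iff_support_of_nonneg fejerKernel_nonneg integrable_fejerKernel]
  refine lt_of_lt_of_le ?_ (measure_mono (s := Ioo 0 1) ?_)
  · simp
  · intro v hv
    have hc : Real.cos v < 1 := by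
      have := Real.cos_lt_cos_of_nonneg_of_le_pi_div_two le_rfl
        (by linarith [Real.pi_gt_three, hv.2] : v ≤ Real.pi / 2) hv.1
      simpa using this
    have : 0 < 1 - Real.cos v := by linarith
    have h0 := hv.1
    rw [Function.mem_support, fejerKernel, if_neg hv.1.ne']
    positivity

lemma integral_triangle_mul_exp {r : ℝ} (hr : 0 < r) (v : ℝ) :
    ∫ t in (-r)..r, ((1 - |t| / r : ℝ) : ℂ) * Complex.exp (Complex.I * t * v) =
      ((r * fejerKernel (r * v) : ℝ) : ℂ) := by
  have hcont : ∀ w : ℝ, Continuous fun t : ℝ ↦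
      ((1 - |t| / r : ℝ) : ℂ) * Complex.exp (Complex.I * t * w) := fun w ↦ by fun_prop
  have hrc : (r : ℂ) ≠ 0 := by exact_mod_cast hr.ne'
  have hhalf : ∀ w : ℝ, w ≠ 0 →
      ∫ t in (0 : ℝ)..r, ((1 - |t| / r : ℝ) : ℂ) * Complex.exp (Complex.I * t * w) =
        (1 / r) * Complex.exp (Complex.I * r * w) / (Complex.I * w) ^ 2
          - 1 / (Complex.I * w) - (1 / r) / (Complex.I * w) ^ 2 := by
    intro w hw
    have hwc : (w : ℂ) ≠ 0 := by exact_mod_cast hw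
    have hiw : Complex.I * (w : ℂ) ≠ 0 := mul_ne_zero Complex.I_ne_zero hwc
    rw [intervalIntegral.integral_congr (g := fun t : ℝ ↦
      (1 - (t : ℂ) / r) * Complex.exp (Complex.I * t * w))]
    · rw [intervalIntegral.integral_eq_sub_of_hasDerivAt (f := fun t : ℝ ↦
        (1 - (t : ℂ) / r) * Complex.exp (Complex.I * t * w) / (Complex.I * w) +
          (1 / r) * Complex.exp (Complex.I * t * w) / (Complex.I * w) ^ 2)]
      · simp
        field_simp
        ring
      · intro t _
        have h1 : HasDerivAt (fun t : ℝ ↦ Complex.exp (Complex.I * t * w))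
            (Complex.exp (Complex.I * t * w) * (Complex.I * 1 * w)) t :=
          (((Complex.ofRealCLM.hasDerivAt (x := t)).const_mul Complex.I).mul_const (w : ℂ)).cexp
        have h2 : HasDerivAt (fun t : ℝ ↦ (1 - (t : ℂ) / r)) (-(1 / r)) t := by
          simpa using ((Complex.ofRealCLM.hasDerivAt (x := t)).div_const (r : ℂ)).const_sub 1
        refine (((h2.mul h1).div_const (Complex.I * w)).add
          ((h1.const_mul (1 / (r : ℂ))).div_const ((Complex.I * w) ^ 2))).congr_deriv ?_
        field_simp
        ring
      · exact (by fun_prop : Continuous _).intervalIntegrable _ _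
    · intro t ht
      rw [uIcc_of_le hr.le] at ht
      simp [abs_of_nonneg ht.1]
  rw [← intervalIntegral.integral_add_adjacent_intervals (b := 0)
    ((hcont v).intervalIntegrable _ _) ((hcont v).intervalIntegrable _ _)]
  have hneg : ∫ t in (-r)..0, ((1 - |t| / r : ℝ) : ℂ) * Complex.exp (Complex.I * t * v) =
      ∫ t in (0 : ℝ)..r, ((1 - |t| / r : ℝ) : ℂ) * Complex.exp (Complex.I * t * (-v : ℝ)) := by
    have := intervalIntegral.integral_comp_neg (a := 0) (b := r)
      (fun t : ℝ ↦ ((1 - |t| / r : ℝ) : ℂ) * Complex.exp (Complex.I * t * v))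
    rw [neg_zero] at this
    rw [← this]
    simp
  rw [hneg]
  by_cases hv : v = 0
  · subst hv
    have hA : ∫ t in (0 : ℝ)..r, ((1 - |t| / r : ℝ) : ℂ) * Complex.exp (Complex.I * t * (0 : ℝ)) =
        r / 2 := by
      rw [intervalIntegral.integral_congr (g := fun t : ℝ ↦ (1 - (t : ℂ) / r))]
      · rw [intervalIntegral.integral_eq_sub_of_hasDerivAt (f := fun t : ℝ ↦
          (t : ℂ) - (t : ℂ) ^ 2 / (2 * r))]
        · simp
          field_simp
          norm_num
        · intro t _
          have h := Complex.ofRealCLM.hasDerivAt (x := t)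
          refine (h.sub ((h.pow 2).div_const (2 * (r : ℂ)))).congr_deriv ?_
          simp
          field_simp
        · exact (by fun_prop : Continuous _).intervalIntegrable _ _
      · intro t ht
        rw [uIcc_of_le hr.le] at ht
        simp [abs_of_nonneg ht.1]
    simp only [neg_zero]
    rw [hA]
    simp [fejerKernel]
  · rw [hhalf v hv, hhalf (-v) (neg_ne_zero.mpr hv)]
    have hvc : (v : ℂ) ≠ 0 := by exact_mod_cast hv
    rw [fejerKernel, if_neg (mul_ne_zero hr.ne' hv)]
    push_cast
    rw [Complex.cos]
    have e1 : Complex.I * r * -v = -((r : ℂ) * v) * Complex.I := by ring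
    have e2 : Complex.I * r * v = ((r : ℂ) * v) * Complex.I := by ring
    rw [e1, e2]
    have : (Complex.I) ^ 2 = -1 := Complex.I_sq
    have hI := Complex.I_ne_zero
    simp only [mul_pow, this]
    field_simp
    ring

lemma integral_mul_exp_mul_fejerKernel {h : ℝ → ℝ} (hm : Measurable h) {M : ℝ}
    (hb : ∀ u, |h u| ≤ M) {g : ℂ → ℂ}
    (heq : ∀ s : ℂ, 0 < s.re → ∫ u in Ioi (0 : ℝ), (h u : ℂ) * Complex.exp (-s * u) = g s)
    {r : ℝ} (hr : 0 < r) {d : ℝ} (hd : 0 < d) (y : ℝ) :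
    ∫ u in Ioi (0 : ℝ), ((h u * Real.exp (-d * u) * (r * fejerKernel (r * (y - u))) : ℝ) : ℂ) =
      ∫ t in (-r)..r, ((1 - |t| / r : ℝ) : ℂ) * g (d + Complex.I * t) *
        Complex.exp (Complex.I * (y * t : ℝ)) := by
  have hM : 0 ≤ M := (abs_nonneg _).trans (hb 0)
  have hrr : -r ≤ r := by linarith
  have h1 : ∀ u : ℝ, ((h u * Real.exp (-d * u) * (r * fejerKernel (r * (y - u))) : ℝ) : ℂ) =
      ∫ t in Ioc (-r) r, (h u : ℂ) * Complex.exp (-d * u) *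
        (((1 - |t| / r : ℝ) : ℂ) * Complex.exp (Complex.I * t * ((y - u : ℝ) : ℂ))) := by
    intro u
    rw [integral_const_mul, ← intervalIntegral.integral_of_le hrr,
      integral_triangle_mul_exp hr]
    push_cast
    ring
  simp_rw [h1]
  rw [integral_integral_swap]
  · rw [intervalIntegral.integral_of_le hrr]
    refine setIntegral_congr_fun measurableSet_Ioc fun t _ ↦ ?_
    rw [← heq _ (by simpa using hd), ← integral_const_mul, ← integral_mul_const]
    congr 1
    ext u
    have e1 : Complex.exp (-d * u) * Complex.exp (Complex.I * t * ((y - u : ℝ) : ℂ)) =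
        Complex.exp (-(d + Complex.I * t) * u) * Complex.exp (Complex.I * (y * t : ℝ)) := by
      rw [← Complex.exp_add, ← Complex.exp_add]
      congr 1
      push_cast
      ring
    linear_combination (h u : ℂ) * ((1 - |t| / r : ℝ) : ℂ) * e1
  · have hi1 : Integrable (fun u : ℝ ↦ M * Real.exp (-d * u)) (volume.restrict (Ioi 0)) :=
      ((exp_neg_integrableOn_Ioi 0 hd)).const_mul M
    have hi2 : Integrable (fun _ : ℝ ↦ (1 : ℝ)) (volume.restrict (Ioc (-r) r)) := by
      simp
    refine (hi1.mul_prod hi2).mono' ?_ ?_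
    · refine Measurable.aestronglyMeasurable ?_
      unfold Function.uncurry
      have : Measurable fun p : ℝ × ℝ ↦ h p.1 := hm.comp measurable_fst
      fun_prop
    · rw [Measure.prod_restrict]
      filter_upwards [ae_restrict_mem (measurableSet_Ioi.prod measurableSet_Ioc)] with p hp
      have hp2 := hp.2
      have ht : |p.2| ≤ r := abs_le.mpr ⟨hp2.1.le, hp2.2⟩
      have ht0 : 0 ≤ 1 - |p.2| / r := by
        rw [sub_nonneg, div_le_one hr]; exact ht
      have ht1 : 1 - |p.2| / r ≤ 1 := by
        have := div_nonneg (abs_nonneg p.2) hr.le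
        linarith
      have e2 : ‖Complex.exp (-d * (p.1 : ℂ))‖ = Real.exp (-d * p.1) := by
        rw [Complex.norm_exp]; simp
      have e3 : ‖Complex.exp (Complex.I * p.2 * ((y - p.1 : ℝ) : ℂ))‖ = 1 := by
        rw [Complex.norm_exp]; simp
      simp only [Function.uncurry, norm_mul, e2, e3, mul_one, Complex.norm_real, Real.norm_eq_abs,
        abs_of_nonneg ht0]
      have := hb p.1
      calc |h p.1| * Real.exp (-d * p.1) * (1 - |p.2| / r)
          ≤ |h p.1| * Real.exp (-d * p.1) * 1 := by gcongr
        _ ≤ M * Real.exp (-d * p.1) := by rw [mul_one]; gcongr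

lemma integral_mul_fejerKernel {h : ℝ → ℝ} (hm : Measurable h) {M : ℝ}
    (hb : ∀ u, |h u| ≤ M) {g : ℂ → ℂ} (hg : ContinuousOn g {s | 0 ≤ s.re})
    (heq : ∀ s : ℂ, 0 < s.re → ∫ u in Ioi (0 : ℝ), (h u : ℂ) * Complex.exp (-s * u) = g s)
    {r : ℝ} (hr : 0 < r) (y : ℝ) :
    ∫ u in Ioi (0 : ℝ), ((h u * (r * fejerKernel (r * (y - u))) : ℝ) : ℂ) =
      ∫ t in (-r)..r, ((1 - |t| / r : ℝ) : ℂ) * g (Complex.I * t) *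
        Complex.exp (Complex.I * (y * t : ℝ)) := by
  have hrr : -r ≤ r := by linarith
  have hM : 0 ≤ M := (abs_nonneg _).trans (hb 0)
  have hlim : Tendsto (fun n : ℕ ↦ (1 : ℝ) / (n + 1)) atTop (𝓝 0) :=
    tendsto_one_div_add_atTop_nhds_zero_nat
  have hK : Integrable fun u ↦ r * fejerKernel (r * (y - u)) :=
    (((integrable_fejerKernel.comp_mul_left' hr.ne').comp_sub_left y)).const_mul r
  have hKm : Measurable fun u ↦ r * fejerKernel (r * (y - u)) :=
    (measurable_fejerKernel.comp (by fun_prop : Measurable fun u ↦ r * (y - u))).const_mul r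
  have L1 : Tendsto (fun n : ℕ ↦ ∫ u in Ioi (0 : ℝ),
      ((h u * Real.exp (-(1 / (n + 1 : ℝ)) * u) * (r * fejerKernel (r * (y - u))) : ℝ) : ℂ)) atTop
      (𝓝 (∫ u in Ioi (0 : ℝ), ((h u * (r * fejerKernel (r * (y - u))) : ℝ) : ℂ))) := by
    refine tendsto_integral_of_dominated_convergence
      (fun u ↦ M * (r * fejerKernel (r * (y - u)))) ?_ ?_ ?_ ?_
    · intro n
      refine Measurable.aestronglyMeasurable ?_
      exact Complex.measurable_ofReal.comp ((hm.mul (by fun_prop)).mul hKm)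
    · exact (hK.const_mul M).integrableOn
    · intro n
      filter_upwards [ae_restrict_mem measurableSet_Ioi] with u hu
      have hu0 : (0 : ℝ) < u := hu
      have hk := fejerKernel_nonneg (r * (y - u))
      rw [Complex.norm_real, Real.norm_eq_abs, abs_mul, abs_mul, Real.abs_exp,
        abs_of_nonneg (mul_nonneg hr.le hk)]
      have : Real.exp (-(1 / (n + 1 : ℝ)) * u) ≤ 1 := by
        rw [Real.exp_le_one_iff, neg_mul, neg_nonpos]
        positivity
      calc |h u| * Real.exp (-(1 / (n + 1 : ℝ)) * u) * (r * fejerKernel (r * (y - u)))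
          ≤ M * 1 * (r * fejerKernel (r * (y - u))) := by
            gcongr
            exact hb u
        _ = _ := by ring
    · refine Eventually.of_forall fun u ↦ ?_
      refine (Complex.continuous_ofReal.tendsto _).comp ?_
      have : Tendsto (fun n : ℕ ↦ Real.exp (-(1 / (n + 1 : ℝ)) * u)) atTop (𝓝 1) := by
        have h2 := (Real.continuous_exp.tendsto _).comp ((hlim.neg).mul_const u)
        simpa [Function.comp_def] using h2
      simpa using (this.const_mul (h u)).mul_const (r * fejerKernel (r * (y - u)))
  have L2 : Tendsto (fun n : ℕ ↦ ∫ t in (-r)..r, ((1 - |t| / r : ℝ) : ℂ) *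
      g ((1 / (n + 1 : ℝ) : ℝ) + Complex.I * t) * Complex.exp (Complex.I * (y * t : ℝ))) atTop
      (𝓝 (∫ t in (-r)..r, ((1 - |t| / r : ℝ) : ℂ) * g (Complex.I * t) *
        Complex.exp (Complex.I * (y * t : ℝ)))) := by
    have hcpt : IsCompact ((fun p : ℝ × ℝ ↦ ((p.1 : ℂ) + Complex.I * p.2)) ''
        (Icc 0 1 ×ˢ Icc (-r) r)) :=
      (isCompact_Icc.prod isCompact_Icc).image (by fun_prop)
    obtain ⟨B, hB⟩ := hcpt.exists_bound_of_continuousOn (f := g) (hg.mono (by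
      rintro _ ⟨p, hp, rfl⟩
      simpa using hp.1.1))
    have hmem : ∀ n : ℕ, (1 / (n + 1 : ℝ)) ∈ Icc (0 : ℝ) 1 := fun n ↦ by
      constructor
      · positivity
      · rw [div_le_one (by positivity)]
        linarith [n.cast_nonneg (α := ℝ)]
    refine intervalIntegral.tendsto_integral_filter_of_dominated_convergence (fun _ ↦ B) ?_ ?_ ?_ ?_
    · refine Eventually.of_forall fun n ↦ ?_
      refine ContinuousOn.aestronglyMeasurable ?_ measurableSet_uIoc
      refine ContinuousOn.mul (ContinuousOn.mul (by fun_prop) ?_) (by fun_prop)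
      refine hg.comp (by fun_prop) fun t _ ↦ ?_
      have := (hmem n).1
      show 0 ≤ (((1 / (n + 1 : ℝ) : ℝ) : ℂ) + Complex.I * t).re
      generalize (1 / (n + 1 : ℝ)) = e at this
      simpa using this
    · refine Eventually.of_forall fun n ↦ Eventually.of_forall fun t ht ↦ ?_
      rw [uIoc_of_le hrr] at ht
      have ht' : |t| ≤ r := abs_le.mpr ⟨ht.1.le, ht.2⟩
      have ht0 : 0 ≤ 1 - |t| / r := by
        rw [sub_nonneg, div_le_one hr]; exact ht'
      have ht1 : 1 - |t| / r ≤ 1 := by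
        have := div_nonneg (abs_nonneg t) hr.le
        linarith
      have e3 : ‖Complex.exp (Complex.I * (y * t : ℝ))‖ = 1 := by
        rw [Complex.norm_exp]; simp
      rw [norm_mul, norm_mul, e3, mul_one, Complex.norm_real, Real.norm_eq_abs, abs_of_nonneg ht0]
      have hb' := hB _ ⟨(1 / (n + 1 : ℝ), t), ⟨hmem n, ⟨ht.1.le, ht.2⟩⟩, rfl⟩
      calc _ ≤ 1 * ‖g ((1 / (n + 1 : ℝ) : ℝ) + Complex.I * t)‖ := by gcongr
        _ ≤ B := by rw [one_mul]; exact hb'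
    · exact intervalIntegrable_const
    · refine Eventually.of_forall fun t ht ↦ ?_
      refine Tendsto.mul_const _ (Tendsto.const_mul _ ?_)
      have hc : ContinuousWithinAt g {s | 0 ≤ s.re} (Complex.I * t) := hg _ (by simp)
      refine hc.tendsto.comp (tendsto_nhdsWithin_iff.mpr ⟨?_, ?_⟩)
      · have := ((Complex.continuous_ofReal.tendsto _).comp hlim).add_const (Complex.I * t)
        simpa [Function.comp_def] using this
      · refine Eventually.of_forall fun n ↦ ?_
        have := (hmem n).1
        show 0 ≤ (((1 / (n + 1 : ℝ) : ℝ) : ℂ) + Complex.I * t).re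
        generalize (1 / (n + 1 : ℝ)) = e at this
        simpa using this
  refine tendsto_nhds_unique L1 (L2.congr fun n ↦ ?_)
  rw [← integral_mul_exp_mul_fejerKernel hm hb heq hr (by positivity : (0 : ℝ) < 1 / (n + 1)) y]

lemma tendsto_integral_mul_fejerKernel {h : ℝ → ℝ} (hm : Measurable h) {M : ℝ}
    (hb : ∀ u, |h u| ≤ M) {g : ℂ → ℂ} (hg : ContinuousOn g {s | 0 ≤ s.re})
    (heq : ∀ s : ℂ, 0 < s.re → ∫ u in Ioi (0 : ℝ), (h u : ℂ) * Complex.exp (-s * u) = g s)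
    {r : ℝ} (hr : 0 < r) :
    Tendsto (fun y ↦ ∫ u in Ioi (0 : ℝ), h u * (r * fejerKernel (r * (y - u)))) atTop (𝓝 0) := by
  have hrr : -r ≤ r := by linarith
  have hRL := Real.tendsto_integral_exp_smul_cocompact ((Ioc (-r) r).indicator
    (fun t : ℝ ↦ ((1 - |t| / r : ℝ) : ℂ) * g (Complex.I * t)))
  have h0 : Tendsto (fun y : ℝ ↦ -y / (2 * Real.pi)) atTop (cocompact ℝ) := by
    refine Tendsto.mono_right ?_ atBot_le_cocompact
    refine Tendsto.atBot_div_const (by positivity) tendsto_neg_atTop_atBot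
  have h1 := hRL.comp h0
  have h2 : Tendsto (fun y ↦ ((∫ u in Ioi (0 : ℝ), h u * (r * fejerKernel (r * (y - u))) : ℝ) : ℂ))
      atTop (𝓝 0) := by
    refine h1.congr fun y ↦ ?_
    rw [← integral_complex_ofReal, integral_mul_fejerKernel hm hb hg heq hr,
      intervalIntegral.integral_of_le hrr, ← integral_indicator measurableSet_Ioc]
    simp only [Function.comp]
    congr 1
    ext t
    by_cases ht : t ∈ Ioc (-r) r
    · simp only [indicator_of_mem ht, Circle.smul_def, Real.fourierChar_apply, smul_eq_mul]
      rw [mul_comm]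
      congr 2
      have := Real.pi_ne_zero
      push_cast
      field_simp
    · simp [indicator_of_notMem ht]
  have := (Complex.continuous_re.tendsto _).comp h2
  simpa [Function.comp_def] using this

lemma tendsto_of_tendsto_integral_mul_fejerKernel {H : ℝ → ℝ} (hm : Measurable H) {M c : ℝ}
    (h0 : ∀ u, 0 ≤ H u) (hM : ∀ u, H u ≤ M)
    (hmono : ∀ u v, u ≤ v → H u * Real.exp (u - v) ≤ H v)
    (hlim : ∀ r : ℝ, 0 < r → Tendsto (fun y ↦ ∫ w, H (y - w / r) * fejerKernel w) atTop
      (𝓝 (c * ∫ w, fejerKernel w))) :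
    Tendsto H atTop (𝓝 c) := by
  set I := ∫ w, fejerKernel w with hI
  have hIpos : 0 < I := integral_fejerKernel_pos
  set J : ℕ → ℝ := fun k ↦ ∫ w in Ioc (-(k : ℝ)) k, fejerKernel w with hJ
  have hJlim : Tendsto J atTop (𝓝 I) := by
    have := intervalIntegral_tendsto_integral integrable_fejerKernel
      (tendsto_neg_atTop_atBot.comp tendsto_natCast_atTop_atTop)
      (tendsto_natCast_atTop_atTop (R := ℝ))
    refine this.congr fun k ↦ ?_
    simp only [Function.comp, hJ]
    rw [intervalIntegral.integral_of_le]
    linarith [k.cast_nonneg (α := ℝ)]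
  have h_integrable : ∀ r y : ℝ, Integrable fun w ↦ H (y - w / r) * fejerKernel w := fun r y ↦ by
    refine (integrable_fejerKernel.const_mul M).mono' ?_ ?_
    · exact ((hm.comp (by fun_prop : Measurable fun w ↦ y - w / r)).mul
        measurable_fejerKernel).aestronglyMeasurable
    · refine Eventually.of_forall fun w ↦ ?_
      have := fejerKernel_nonneg w
      rw [Real.norm_of_nonneg (mul_nonneg (h0 _) this)]
      gcongr
      exact hM _
  have hwin : ∀ k : ℕ, 0 < k → ∀ w ∈ Ioc (-(k : ℝ)) k, |w / (k : ℝ) ^ 2| ≤ 1 / k := by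
    intro k hk w hw
    have hk' : (0 : ℝ) < k := by exact_mod_cast hk
    rw [abs_div, abs_of_pos (by positivity : (0 : ℝ) < (k : ℝ) ^ 2), div_le_div_iff₀ (by positivity)
      hk']
    have : |w| ≤ k := abs_le.mpr ⟨hw.1.le, hw.2⟩
    nlinarith
  have hup : ∀ k : ℕ, 0 < k → ∀ y, H y * Real.exp (-(2 / k)) * J k ≤
      ∫ w, H ((y + 1 / k) - w / (k : ℝ) ^ 2) * fejerKernel w := by
    intro k hk y
    rw [hJ, ← integral_const_mul]
    refine (setIntegral_mono_on (integrable_fejerKernel.const_mul _).integrableOn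
      (h_integrable _ _).integrableOn measurableSet_Ioc fun w hw ↦ ?_).trans
      (setIntegral_le_integral (h_integrable _ _) (Eventually.of_forall fun w ↦
        mul_nonneg (h0 _) (fejerKernel_nonneg w)))
    have hb := abs_le.mp (hwin k hk w hw)
    refine mul_le_mul_of_nonneg_right ?_ (fejerKernel_nonneg w)
    refine le_trans ?_ (hmono y _ (by linarith))
    gcongr
    · exact h0 y
    · have : (2 : ℝ) / k = 1 / k + 1 / k := by ring
      linarith
  have hlo : ∀ k : ℕ, 0 < k → ∀ y,
      ∫ w, H ((y - 1 / k) - w / (k : ℝ) ^ 2) * fejerKernel w ≤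
        H y * Real.exp (2 / k) * J k + M * (I - J k) := by
    intro k hk y
    have hc : I - J k = ∫ w in (Ioc (-(k : ℝ)) k)ᶜ, fejerKernel w := by
      rw [setIntegral_compl measurableSet_Ioc integrable_fejerKernel]
    rw [hc, hJ, ← integral_const_mul, ← integral_const_mul,
      ← integral_add_compl measurableSet_Ioc (h_integrable _ _)]
    refine add_le_add ?_ ?_
    · refine setIntegral_mono_on (h_integrable _ _).integrableOn
        (integrable_fejerKernel.const_mul _).integrableOn measurableSet_Ioc fun w hw ↦ ?_
      have hb := abs_le.mp (hwin k hk w hw)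
      refine mul_le_mul_of_nonneg_right ?_ (fejerKernel_nonneg w)
      have h2 : (2 : ℝ) / k = 1 / k + 1 / k := by ring
      have h1 := hmono (y - 1 / k - w / (k : ℝ) ^ 2) y (by linarith)
      calc H (y - 1 / k - w / (k : ℝ) ^ 2)
          = H (y - 1 / k - w / (k : ℝ) ^ 2) * Real.exp (y - 1 / k - w / (k : ℝ) ^ 2 - y) *
            Real.exp (y - (y - 1 / k - w / (k : ℝ) ^ 2)) := by
            rw [mul_assoc, ← Real.exp_add]; simp
        _ ≤ H y * Real.exp (2 / k) := by
            have := h0 y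
            gcongr
            linarith
    · refine setIntegral_mono_on (h_integrable _ _).integrableOn
        (integrable_fejerKernel.const_mul _).integrableOn measurableSet_Ioc.compl fun w _ ↦ ?_
      exact mul_le_mul_of_nonneg_right (hM _) (fejerKernel_nonneg w)
  have hinv : Tendsto (fun k : ℕ ↦ (2 : ℝ) / k) atTop (𝓝 0) :=
    tendsto_const_div_atTop_nhds_zero_nat 2
  have hexp : ∀ a : ℝ, Tendsto (fun k : ℕ ↦ Real.exp (a * (2 / k))) atTop (𝓝 1) := fun a ↦ by
    have := (Real.continuous_exp.tendsto _).comp (hinv.const_mul a)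
    simpa [Function.comp_def] using this
  have hJpos : ∀ᶠ k in atTop, 0 < J k := hJlim.eventually (lt_mem_nhds hIpos)
  rw [tendsto_order]
  constructor
  · intro b hb
    have h1 : Tendsto (fun k : ℕ ↦ b * Real.exp (1 * (2 / k)) * J k + M * (I - J k)) atTop
        (𝓝 (b * 1 * I + M * (I - I))) :=
      (((hexp 1).const_mul b).mul hJlim).add ((hJlim.const_sub I).const_mul M)
    have h2 : b * 1 * I + M * (I - I) < c * I := by nlinarith
    obtain ⟨k, ⟨hk, hJk⟩, hk0⟩ := (((h1.eventually (gt_mem_nhds h2)).and hJpos).and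
      (eventually_gt_atTop 0)).exists
    have hk' : (0 : ℝ) < k := by exact_mod_cast hk0
    have h3 := ((hlim ((k : ℝ) ^ 2) (by positivity)).comp
      (tendsto_atTop_add_const_right atTop (-(1 / (k : ℝ))) tendsto_id)).eventually (lt_mem_nhds hk)
    filter_upwards [h3] with y hy
    have h4 := hlo k hk0 y
    simp only [Function.comp, id, ← sub_eq_add_neg] at hy
    rw [one_mul] at hy
    by_contra! h5
    have : H y * Real.exp (2 / k) * J k ≤ b * Real.exp (2 / k) * J k := by gcongr
    linarith
  · intro b hb
    have h1 : Tendsto (fun k : ℕ ↦ b * Real.exp ((-1) * (2 / k)) * J k) atTop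
        (𝓝 (b * 1 * I)) := ((hexp (-1)).const_mul b).mul hJlim
    have h2 : c * I < b * 1 * I := by nlinarith
    obtain ⟨k, ⟨hk, hJk⟩, hk0⟩ := (((h1.eventually (lt_mem_nhds h2)).and hJpos).and
      (eventually_gt_atTop 0)).exists
    have hk' : (0 : ℝ) < k := by exact_mod_cast hk0
    have h3 := ((hlim ((k : ℝ) ^ 2) (by positivity)).comp
      (tendsto_atTop_add_const_right atTop (1 / (k : ℝ)) tendsto_id)).eventually (gt_mem_nhds hk)
    filter_upwards [h3] with y hy
    have h4 := hup k hk0 y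
    simp only [Function.comp, id] at hy
    rw [neg_one_mul] at hy
    by_contra! h5
    have : b * Real.exp (-(2 / k)) * J k ≤ H y * Real.exp (-(2 / k)) * J k := by gcongr
    linarith

lemma LSeries_eq_integral_exp {a : ℕ → ℝ} (ha : ∀ n, 0 ≤ a n) {M : ℝ}
    (hM : ∀ n : ℕ, ∑ k ∈ Finset.Icc 1 n, a k ≤ M * n) {s : ℂ} (hs : 0 < s.re) :
    LSeries (fun n ↦ (a n : ℂ)) (1 + s) = (1 + s) * ∫ u in Ioi (0 : ℝ),
      (((∑ k ∈ Finset.Icc 1 ⌊Real.exp u⌋₊, a k) * Real.exp (-u) : ℝ) : ℂ) *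
        Complex.exp (-s * u) := by
  rw [LSeries_eq_mul_integral_of_nonneg a zero_le_one (by simpa using hs) ?_ ha]
  · congr 1
    rw [← Real.exp_zero, ← integral_comp_exp_Ioi]
    congr 1
    ext u
    rw [Complex.real_smul, Complex.cpow_def_of_ne_zero
      (by exact_mod_cast (Real.exp_pos u).ne'), ← Complex.ofReal_log (Real.exp_pos u).le,
      Real.log_exp]
    have e : Complex.exp u * Complex.exp (u * -(1 + s + 1)) =
        Complex.exp (-u) * Complex.exp (-s * u) := by
      rw [← Complex.exp_add, ← Complex.exp_add]
      congr 1
      ring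
    push_cast
    linear_combination (∑ k ∈ Finset.Icc 1 ⌊Real.exp u⌋₊, (a k : ℂ)) * e
  · refine Asymptotics.IsBigO.of_bound M (Eventually.of_forall fun n ↦ ?_)
    rw [Real.norm_of_nonneg (Finset.sum_nonneg fun k _ ↦ ha k)]
    simpa using hM n

lemma integral_comp_sub_div_mul_fejerKernel (F : ℝ → ℝ) {r : ℝ} (hr : 0 < r) (y : ℝ) :
    ∫ w, F (y - w / r) * fejerKernel w = ∫ u, F u * (r * fejerKernel (r * (y - u))) := by
  have h1 := Measure.integral_comp_mul_left (fun w ↦ F (y - w / r) * fejerKernel w) r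
  have h2 := integral_sub_left_eq_self
    (fun v ↦ F (y - v) * (r * fejerKernel (r * v))) volume y
  simp only [sub_sub_cancel] at h2
  rw [h2]
  rw [abs_of_pos (inv_pos.mpr hr), smul_eq_mul, eq_inv_mul_iff_mul_eq₀ hr.ne'] at h1
  rw [← h1, ← integral_const_mul]
  congr 1
  ext v
  rw [mul_div_cancel_left₀ _ hr.ne']
  ring

theorem tendsto_sum_div_of_continuousOn_LSeries_sub {a : ℕ → ℝ} (ha : ∀ n, 0 ≤ a n) {M : ℝ}
    (hM : ∀ n : ℕ, ∑ k ∈ Finset.Icc 1 n, a k ≤ M * n) {c : ℝ} {G : ℂ → ℂ}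
    (hG : ContinuousOn G {s | 1 ≤ s.re})
    (heq : ∀ s : ℂ, 1 < s.re → LSeries (fun n ↦ (a n : ℂ)) s - c / (s - 1) = G s) :
    Tendsto (fun n : ℕ ↦ (∑ k ∈ Finset.Icc 1 n, a k) / n) atTop (𝓝 c) := by
  set S : ℝ → ℝ := fun x ↦ ∑ k ∈ Finset.Icc 1 ⌊x⌋₊, a k with hS
  have hS0 : ∀ x, 0 ≤ S x := fun x ↦ Finset.sum_nonneg fun k _ ↦ ha k
  have hSmono : Monotone S := fun x y hxy ↦
    Finset.sum_le_sum_of_subset_of_nonneg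
      (Finset.Icc_subset_Icc_right (Nat.floor_mono hxy)) fun k _ _ ↦ ha k
  set H : ℝ → ℝ := fun u ↦ S (Real.exp u) * Real.exp (-u) with hH
  have hHm : Measurable H :=
    (hSmono.measurable.comp Real.measurable_exp).mul (by fun_prop)
  have hH0 : ∀ u, 0 ≤ H u := fun u ↦ mul_nonneg (hS0 _) (Real.exp_nonneg _)
  have hM0 : 0 ≤ M := by
    have := hM 1
    have h1 := ha 1
    simp at this
    linarith
  have hHM : ∀ u, H u ≤ M := fun u ↦ by
    calc H u ≤ M * Real.exp u * Real.exp (-u) := by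
          simp only [hH]
          gcongr
          refine (hM _).trans ?_
          gcongr
          exact Nat.floor_le (Real.exp_nonneg _)
      _ = M := by rw [mul_assoc, ← Real.exp_add]; simp
  have hHmono : ∀ u v, u ≤ v → H u * Real.exp (u - v) ≤ H v := fun u v huv ↦ by
    simp only [hH]
    rw [mul_assoc, ← Real.exp_add, show -u + (u - v) = -v by ring]
    gcongr
    exact hSmono (Real.exp_le_exp.mpr huv)
  have hHneg : ∀ u < 0, H u = 0 := fun u hu ↦ by
    have : ⌊Real.exp u⌋₊ = 0 := by
      rw [Nat.floor_eq_zero]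
      simpa using hu
    simp [hH, hS, this]
  have hg : ∀ s : ℂ, 0 < s.re → ∫ u in Ioi (0 : ℝ), ((H u - c : ℝ) : ℂ) * Complex.exp (-s * u) =
      (G (1 + s) - c) / (1 + s) := by
    intro s hs
    have hs0 : s ≠ 0 := by rintro rfl; simp at hs
    have hs1 : 1 + s ≠ 0 := by
      intro h
      have := congrArg Complex.re h
      simp at this
      linarith
    have hie : IntegrableOn (fun u : ℝ ↦ Complex.exp (-s * u)) (Ioi 0) :=
      integrableOn_exp_mul_complex_Ioi (by simpa using hs) 0
    have hiH : IntegrableOn (fun u : ℝ ↦ (H u : ℂ) * Complex.exp (-s * u)) (Ioi 0) := by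
      refine Integrable.bdd_mul (c := M) hie
        (Complex.measurable_ofReal.comp hHm).aestronglyMeasurable (Eventually.of_forall fun u ↦ ?_)
      rw [Complex.norm_real, Real.norm_of_nonneg (hH0 u)]
      exact hHM u
    have h1 := LSeries_eq_integral_exp ha hM hs
    rw [← heq _ (by simpa using hs), h1]
    have h2 : ∫ u in Ioi (0 : ℝ), Complex.exp (-s * u) = 1 / s := by
      rw [integral_exp_mul_complex_Ioi (by simpa using hs)]
      simp
    have h3 : ∫ u in Ioi (0 : ℝ), ((H u - c : ℝ) : ℂ) * Complex.exp (-s * u) =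
        (∫ u in Ioi (0 : ℝ), (H u : ℂ) * Complex.exp (-s * u)) - c * (1 / s) := by
      rw [← h2, ← integral_const_mul, ← integral_sub hiH (hie.const_mul _)]
      congr 1
      ext u
      push_cast
      ring
    rw [h3]
    simp only [hH, hS, add_sub_cancel_left]
    field_simp
    ring
  have hgc : ContinuousOn (fun s : ℂ ↦ (G (1 + s) - c) / (1 + s)) {s | 0 ≤ s.re} := by
    refine ContinuousOn.div ?_ (by fun_prop) ?_
    · refine (hG.comp (by fun_prop) fun s hs ↦ ?_).sub continuousOn_const
      simpa using hs
    · intro s hs h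
      have := congrArg Complex.re h
      simp at this hs
      linarith
  have hb : ∀ u, |H u - c| ≤ M + |c| := fun u ↦ by
    refine (abs_sub _ _).trans ?_
    rw [abs_of_nonneg (hH0 u)]
    linarith [hHM u]
  have hlim : Tendsto H atTop (𝓝 c) := by
    refine tendsto_of_tendsto_integral_mul_fejerKernel hHm hH0 hHM hHmono fun r hr ↦ ?_
    have h1 := tendsto_integral_mul_fejerKernel (hHm.sub_const c) hb hgc hg hr
    have hK : ∀ y : ℝ, Integrable fun u ↦ r * fejerKernel (r * (y - u)) := fun y ↦
      (((integrable_fejerKernel.comp_mul_left' hr.ne').comp_sub_left y)).const_mul r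
    have h2 : Tendsto (fun y : ℝ ↦ ∫ w, (Ioi (0 : ℝ)).indicator (fun _ ↦ c) (y - w / r) *
        fejerKernel w) atTop (𝓝 (∫ w, c * fejerKernel w)) := by
      refine tendsto_integral_filter_of_dominated_convergence (fun w ↦ |c| * fejerKernel w) ?_ ?_
        (integrable_fejerKernel.const_mul _) ?_
      · refine Eventually.of_forall fun y ↦ Measurable.aestronglyMeasurable ?_
        exact ((measurable_const.indicator measurableSet_Ioi).comp
          (by fun_prop : Measurable fun w ↦ y - w / r)).mul measurable_fejerKernel
      · refine Eventually.of_forall fun y ↦ Eventually.of_forall fun w ↦ ?_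
        rw [norm_mul, Real.norm_of_nonneg (fejerKernel_nonneg w)]
        refine mul_le_mul_of_nonneg_right ?_ (fejerKernel_nonneg w)
        exact norm_indicator_le_norm_self _ _
      · refine Eventually.of_forall fun w ↦ tendsto_const_nhds.congr' ?_
        filter_upwards [eventually_gt_atTop (w / r)] with y hy
        rw [indicator_of_mem (by simpa using hy)]
    rw [integral_const_mul] at h2
    have h3 := h1.add h2
    rw [zero_add] at h3
    refine h3.congr fun y ↦ ?_
    have e1 : H =ᵐ[volume] (Ioi (0 : ℝ)).indicator H := by
      filter_upwards [compl_mem_ae_iff.mpr (measure_singleton (0 : ℝ))] with u hu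
      rcases lt_or_gt_of_ne (show u ≠ 0 from hu) with h | h
      · rw [indicator_of_notMem (by simpa using h.le), hHneg u h]
      · rw [indicator_of_mem (by simpa using h)]
    rw [integral_comp_sub_div_mul_fejerKernel _ hr, integral_comp_sub_div_mul_fejerKernel _ hr,
      ← integral_indicator measurableSet_Ioi, ← integral_add]
    · refine integral_congr_ae ?_
      filter_upwards [e1] with u hu
      rw [hu]
      by_cases h : u ∈ Ioi (0 : ℝ)
      · simp only [indicator_of_mem h]
        ring
      · simp [indicator_of_notMem h]
    · exact ((hK y).bdd_mul (hHm.sub_const c).aestronglyMeasurable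
        (Eventually.of_forall hb)).indicator measurableSet_Ioi
    · exact (hK y).bdd_mul (c := |c|) (measurable_const.indicator
        measurableSet_Ioi).aestronglyMeasurable
        (Eventually.of_forall fun u ↦ norm_indicator_le_norm_self _ _)
  have := hlim.comp (Real.tendsto_log_atTop.comp (tendsto_natCast_atTop_atTop (R := ℝ)))
  refine this.congr' ?_
  filter_upwards [eventually_gt_atTop 0] with n hn
  have hn' : (0 : ℝ) < n := by exact_mod_cast hn
  simp only [Function.comp, hH, hS]
  rw [Real.exp_log hn', Real.exp_neg, Real.exp_log hn', Nat.floor_natCast, div_eq_mul_inv]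

end WienerIkehara

section EtaModTwo

open Finset

local notation "𝕏" => (PowerSeries.X : PowerSeries (ZMod 2))

instance : CharP (PowerSeries (ZMod 2)) 2 :=
  charP_of_injective_ringHom (PowerSeries.C_injective (R := ZMod 2)) 2

/-- The finite product `∏_{k=1}^n (1 - X^k)` modulo `2`. -/
noncomputable def eulerProd (n : ℕ) : PowerSeries (ZMod 2) := ∏ k ∈ Icc 1 n, (1 - 𝕏 ^ k)

/-- The factor `(1 - X ^ (2 * k)) / (1 - X ^ (2 * k - 1))` of Gauss's product for triangular
numbers, with index shifted by one. -/
noncomputable def gaussFactor (k : ℕ) : PowerSeries (ZMod 2) :=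
  (1 - 𝕏 ^ (2 * k + 2)) * (1 - 𝕏 ^ (2 * k + 1))⁻¹

lemma one_sub_X_pow_ne_zero (k : ℕ) : (1 - 𝕏 ^ (k + 1)) ≠ 0 := fun h ↦ by
  simpa using congrArg (PowerSeries.constantCoeff (R := ZMod 2)) h

lemma gaussFactor_mul (k : ℕ) : gaussFactor k * (1 - 𝕏 ^ (2 * k + 1)) = 1 - 𝕏 ^ (2 * k + 2) := by
  rw [gaussFactor, mul_assoc, PowerSeries.inv_mul_cancel, mul_one]
  simp

lemma sum_X_pow_triangular (n : ℕ) :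
    ∑ s ∈ range (2 * n), 𝕏 ^ (s * (s + 1) / 2) =
      ∑ s ∈ range n, (∏ k ∈ Ico s n, gaussFactor k) * 𝕏 ^ (s * (2 * n + 1)) := by
  induction n with
  | zero => simp
  | succ n ih =>
    set u : ℕ → PowerSeries (ZMod 2) := fun s ↦ (∏ k ∈ Ico s n, gaussFactor k) *
      𝕏 ^ (s * (2 * n + 1)) with hu
    have hrec : ∀ s < n, u (s + 1) * (1 - 𝕏 ^ (2 * s + 2)) =
        u s * 𝕏 ^ (2 * n + 1) * (1 - 𝕏 ^ (2 * s + 1)) := fun s hs ↦ by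
      simp only [hu]
      rw [← gaussFactor_mul, prod_eq_prod_Ico_succ_bot hs]
      ring
    have ht : ∀ s < n, (∏ k ∈ Ico s (n + 1), gaussFactor k) * 𝕏 ^ (s * (2 * (n + 1) + 1)) *
        (1 - 𝕏 ^ (2 * n + 1)) - u s * (1 - 𝕏 ^ (2 * n + 1)) =
        u (s + 1) * (1 - 𝕏 ^ (2 * (s + 1))) - u s * (1 - 𝕏 ^ (2 * s)) := fun s hs ↦ by
      rw [mul_add 2 s 1, mul_one, hrec s hs, prod_Ico_succ_top hs.le]
      simp only [hu]
      linear_combination (∏ k ∈ Ico s n, gaussFactor k) * 𝕏 ^ (s * (2 * (n + 1) + 1)) *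
        gaussFactor_mul n
    have htel := sum_congr rfl (fun s hs ↦ ht s (mem_range.mp hs))
    rw [sum_range_sub (fun s ↦ u s * (1 - 𝕏 ^ (2 * s))), sum_sub_distrib, ← sum_mul, ← sum_mul,
      ← ih] at htel
    refine mul_right_cancel₀ (one_sub_X_pow_ne_zero (2 * n)) ?_
    rw [sum_range_succ _ n, show 2 * (n + 1) = 2 * n + 1 + 1 by ring, sum_range_succ,
      sum_range_succ]
    have e1 : (2 * n) * (2 * n + 1) / 2 = n * (2 * n + 1) := by
      rw [mul_assoc, Nat.mul_div_cancel_left _ two_pos]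
    have e2 : (2 * n + 1) * (2 * n + 1 + 1) / 2 = n * (2 * n + 1) + (2 * n + 1) := by
      rw [show (2 * n + 1) * (2 * n + 1 + 1) = 2 * (n * (2 * n + 1) + (2 * n + 1)) by ring,
        Nat.mul_div_cancel_left _ two_pos]
    have e3 : u n = 𝕏 ^ (n * (2 * n + 1)) := by simp [hu]
    rw [e3] at htel
    rw [e1, e2]
    simp only [Nat.Ico_succ_singleton, prod_singleton]
    have h0 : u 0 * (1 - 𝕏 ^ (2 * 0)) = 0 := by simp
    rw [h0] at htel
    simp only [show 2 * (n + 1) + 1 = 2 * n + 1 + 1 + 1 by ring] at htel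
    linear_combination - htel - 𝕏 ^ (n * (2 * n + 1 + 1 + 1)) * gaussFactor_mul n

lemma prod_gaussFactor_mul_eulerProd (n : ℕ) :
    (∏ k ∈ range n, gaussFactor k) * eulerProd (2 * n) = eulerProd n ^ 4 := by
  induction n with
  | zero => simp [eulerProd]
  | succ n ih =>
    have e1 : eulerProd (2 * (n + 1)) =
        eulerProd (2 * n) * (1 - 𝕏 ^ (2 * n + 1)) * (1 - 𝕏 ^ (2 * n + 2)) := by
      rw [eulerProd, show 2 * (n + 1) = 2 * n + 1 + 1 by ring, prod_Icc_succ_top (by lia),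
        prod_Icc_succ_top (by lia), eulerProd]
    have e2 : eulerProd (n + 1) = eulerProd n * (1 - 𝕏 ^ (n + 1)) :=
      prod_Icc_succ_top (by lia) _
    have e3 : (1 - 𝕏 ^ (n + 1)) ^ 2 = 1 - 𝕏 ^ (2 * n + 2) := by
      rw [sub_pow_char, one_pow, ← pow_mul]
      ring_nf
    rw [prod_range_succ, e1, e2, mul_pow _ _ 4, ← ih]
    linear_combination (∏ k ∈ range n, gaussFactor k) * eulerProd (2 * n) *
      ((1 - 𝕏 ^ (2 * n + 2)) * gaussFactor_mul n -
      ((1 - 𝕏 ^ (n + 1)) ^ 2 + (1 - 𝕏 ^ (2 * n + 2))) * e3)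

lemma X_pow_dvd_eulerProd_sub {m n : ℕ} (h : m ≤ n) :
    𝕏 ^ (m + 1) ∣ eulerProd n - eulerProd m := by
  induction n, h using Nat.le_induction with
  | base => simp
  | succ n hn ih =>
    have e : eulerProd (n + 1) - eulerProd m =
        (eulerProd n - eulerProd m) - eulerProd n * 𝕏 ^ (n + 1) := by
      rw [eulerProd, prod_Icc_succ_top (by lia), ← eulerProd]
      ring
    rw [e]
    exact dvd_sub ih (Dvd.dvd.mul_left (pow_dvd_pow _ (by lia)) _)

lemma isUnit_eulerProd (n : ℕ) : IsUnit (eulerProd n) := by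
  rw [PowerSeries.isUnit_iff_constantCoeff, eulerProd, map_prod]
  refine IsUnit.prod_iff.mpr fun k hk ↦ ?_
  have : k ≠ 0 := by have := mem_Icc.mp hk; lia
  simp [this]

lemma X_pow_dvd_eulerProd_pow_three_sub {n : ℕ} (hn : n ≠ 0) :
    𝕏 ^ (n + 1) ∣ eulerProd n ^ 3 - ∑ s ∈ range (2 * n), 𝕏 ^ (s * (s + 1) / 2) := by
  have h1 : 𝕏 ^ (n + 1) ∣ ∑ s ∈ range (2 * n), 𝕏 ^ (s * (s + 1) / 2) -
      ∏ k ∈ range n, gaussFactor k := by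
    rw [sum_X_pow_triangular]
    obtain ⟨n, rfl⟩ := Nat.exists_eq_succ_of_ne_zero hn
    rw [sum_range_succ', ← range_eq_Ico]
    simp only [zero_mul, pow_zero, mul_one, add_sub_cancel_right]
    refine dvd_sum fun s _ ↦ Dvd.dvd.mul_left (pow_dvd_pow _ ?_) _
    nlinarith
  have h2 : 𝕏 ^ (n + 1) ∣ eulerProd (2 * n) - eulerProd n := X_pow_dvd_eulerProd_sub (by lia)
  rw [← (isUnit_eulerProd n).dvd_mul_right]
  set T := ∑ s ∈ range (2 * n), 𝕏 ^ (s * (s + 1) / 2)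
  have e : (eulerProd n ^ 3 - T) * eulerProd n =
      (∏ k ∈ range n, gaussFactor k) * (eulerProd (2 * n) - eulerProd n) -
      (T - ∏ k ∈ range n, gaussFactor k) * eulerProd n := by
    linear_combination - prod_gaussFactor_mul_eulerProd n
  rw [e]
  exact dvd_sub (h2.mul_left _) (h1.mul_right _)

lemma pow_two_pow_sum_X_pow {ι : Type*} (S : Finset ι) (e : ι → ℕ) (k : ℕ) :
    (∑ s ∈ S, 𝕏 ^ e s) ^ 2 ^ k = ∑ s ∈ S, 𝕏 ^ (2 ^ k * e s) := by
  rw [sum_pow_char_pow]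
  exact sum_congr rfl fun s _ ↦ by rw [← pow_mul, mul_comm]

lemma X_pow_dvd_X_mul_eulerProd_pow_sub {n : ℕ} (hn : n ≠ 0) (m : ℕ) :
    𝕏 ^ (n + 1) ∣ (𝕏 * eulerProd n ^ 24) ^ (4 ^ m + 1) -
      ∑ s ∈ range (2 * n) ×ˢ range (2 * n),
        𝕏 ^ (4 ^ m * (2 * s.1 + 1) ^ 2 + (2 * s.2 + 1) ^ 2) := by
  set T := ∑ s ∈ range (2 * n), 𝕏 ^ (s * (s + 1) / 2)
  have h1 : 𝕏 * T ^ 8 = ∑ s ∈ range (2 * n), 𝕏 ^ ((2 * s + 1) ^ 2) := by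
    rw [show 8 = 2 ^ 3 by norm_num, pow_two_pow_sum_X_pow, mul_sum]
    refine sum_congr rfl fun s _ ↦ ?_
    rw [← pow_succ']
    congr 1
    obtain ⟨c, hc⟩ := Nat.even_mul_succ_self s
    rw [show (2 * s + 1) ^ 2 = 4 * (s * (s + 1)) + 1 by ring, hc, ← two_mul,
      Nat.mul_div_cancel_left _ two_pos]
    ring
  have h2 : (𝕏 * T ^ 8) ^ (4 ^ m + 1) = ∑ s ∈ range (2 * n) ×ˢ range (2 * n),
      𝕏 ^ (4 ^ m * (2 * s.1 + 1) ^ 2 + (2 * s.2 + 1) ^ 2) := by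
    rw [pow_succ, h1, show 4 ^ m = 2 ^ (2 * m) by rw [pow_mul]; norm_num, pow_two_pow_sum_X_pow,
      sum_mul_sum, sum_product]
    simp_rw [pow_add]
  rw [← h2]
  refine dvd_trans ?_ (sub_dvd_pow_sub_pow _ _ _)
  rw [← mul_sub, show 24 = 3 * 8 by norm_num, pow_mul (eulerProd n)]
  exact ((X_pow_dvd_eulerProd_pow_three_sub hn).trans (sub_dvd_pow_sub_pow _ _ _)).mul_left _

lemma etaCoeff_eq_card (m : ℕ) {N : ℕ} (hN : N ≠ 0) :
    etaCoeff (24 * (4 ^ m + 1)) N =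
      (#{s ∈ range (2 * N) ×ˢ range (2 * N) |
        4 ^ m * (2 * s.1 + 1) ^ 2 + (2 * s.2 + 1) ^ 2 = N} : ZMod 2) := by
  have hg : Nat.gcd 24 (24 * (4 ^ m + 1)) = 24 := by simp
  rw [etaCoeff, hg, Nat.mul_div_cancel_left _ (by norm_num), Nat.div_self (by norm_num)]
  rw [← Polynomial.coeff_coe]
  have e : ((X ^ (4 ^ m + 1) * ∏ n ∈ Icc 1 N, ((1 : (ZMod 2)[X]) - X ^ (1 * n)) ^
      (24 * (4 ^ m + 1)) : (ZMod 2)[X]) : PowerSeries (ZMod 2)) =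
      (𝕏 * eulerProd N ^ 24) ^ (4 ^ m + 1) := by
    rw [prod_pow, mul_pow, ← pow_mul, Polynomial.coe_mul, Polynomial.coe_pow, Polynomial.coe_pow,
      Polynomial.coe_X, eulerProd, ← Polynomial.coeToPowerSeries.ringHom_apply, map_prod]
    simp
  have h := (PowerSeries.X_pow_dvd_iff.mp (X_pow_dvd_X_mul_eulerProd_pow_sub hN m)) N (by lia)
  rw [map_sub, sub_eq_zero] at h
  rw [e, h, map_sum]
  simp_rw [PowerSeries.coeff_X_pow, card_filter]
  push_cast
  exact sum_congr rfl fun s _ ↦ if_congr eq_comm rfl rfl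

end EtaModTwo

/-- `ℓ` is represented by the quadratic form `x² + 4^k y²`. -/
def IsSqAddFourPowMulSq (k ℓ : ℕ) : Prop := ∃ a b : ℕ, a ^ 2 + (2 ^ k * b) ^ 2 = ℓ

lemma IsSqAddFourPowMulSq.of_succ {k ℓ : ℕ} (h : IsSqAddFourPowMulSq (k + 1) ℓ) :
    IsSqAddFourPowMulSq k ℓ := by
  obtain ⟨a, b, h⟩ := h
  exact ⟨a, 2 * b, by rw [← h]; ring⟩

lemma sq_add_sq_unique {p a b c d : ℕ} (hp : p.Prime) (h1 : a ^ 2 + b ^ 2 = p)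
    (h2 : c ^ 2 + d ^ 2 = p) (ha : Odd a) (hb : Even b) (hc : Odd c) (hd : Even d) :
    a = c ∧ b = d := by
  have ha0 : 0 < a := ha.pos
  have hc0 : 0 < c := hc.pos
  have hp0 : (0 : ℤ) < p := by exact_mod_cast hp.pos
  have h1' : (a : ℤ) ^ 2 + b ^ 2 = p := by exact_mod_cast h1
  have h2' : (c : ℤ) ^ 2 + d ^ 2 = p := by exact_mod_cast h2
  have hdvd : (p : ℤ) ∣ (a * d - b * c) * (a * d + b * c) :=
    ⟨d ^ 2 - b ^ 2, by linear_combination (d : ℤ) ^ 2 * h1' - (b : ℤ) ^ 2 * h2'⟩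
  rcases (Nat.prime_iff_prime_int.mp hp).dvd_or_dvd hdvd with ⟨k, hk⟩ | ⟨k, hk⟩
  · have h3 : ((a : ℤ) * c + b * d) ^ 2 + (p * k) ^ 2 = p ^ 2 := by
      rw [← hk]
      linear_combination ((c : ℤ) ^ 2 + d ^ 2) * h1' + p * h2'
    have h4 : (0 : ℤ) < a * c + b * d := by positivity
    have hk0 : k = 0 := by
      by_contra hk0
      have : 1 ≤ k ^ 2 := by
        have := sq_pos_of_ne_zero hk0
        lia
      nlinarith [sq_nonneg (p : ℤ), mul_pos h4 h4]
    rw [hk0, mul_zero, sub_eq_zero] at hk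
    have h5 : (c : ℤ) ^ 2 = a ^ 2 := by
      have : (c : ℤ) ^ 2 * p = a ^ 2 * p := by
        linear_combination (-(c : ℤ) ^ 2) * h1' + (a : ℤ) ^ 2 * h2' - (a * d + b * c) * hk
      exact mul_right_cancel₀ hp0.ne' this
    have hac : a = c := by
      have : c ^ 2 = a ^ 2 := by exact_mod_cast h5
      exact (Nat.pow_left_injective (two_ne_zero) this).symm
    subst hac
    exact ⟨rfl, Nat.pow_left_injective two_ne_zero (by simp only; lia)⟩
  · exfalso
    have h3 : ((a : ℤ) * c - b * d) ^ 2 + (p * k) ^ 2 = p ^ 2 := by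
      rw [← hk]
      linear_combination ((c : ℤ) ^ 2 + d ^ 2) * h1' + p * h2'
    have hodd : Odd ((a : ℤ) * c - b * d) := by
      refine Odd.sub_even ?_ ?_
      · exact_mod_cast ha.mul hc
      · exact_mod_cast hb.mul_right d
    have h4 : 0 < ((a : ℤ) * c - b * d) ^ 2 := by
      refine sq_pos_of_ne_zero fun h ↦ ?_
      rw [h] at hodd
      exact absurd hodd (by decide)
    have hk0 : k = 0 := by
      by_contra hk0
      have : 1 ≤ k ^ 2 := by
        have := sq_pos_of_ne_zero hk0
        lia
      nlinarith [sq_nonneg (p : ℤ)]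
    rw [hk0, mul_zero] at hk
    have hd0 : d = 0 := by
      by_contra hd0
      have : (0 : ℤ) < a * d := by positivity
      have : (0 : ℤ) ≤ b * c := by positivity
      lia
    subst hd0
    simp only [ne_eq, OfNat.ofNat_ne_zero, not_false_eq_true, zero_pow, add_zero] at h2
    exact Nat.Prime.not_prime_pow le_rfl (h2 ▸ hp)

lemma nuR_eq_self {w ℓ : ℕ} (hw : 0 < w) (hℓ : w ≤ ℓ) : nuR (24 * w) ℓ = ℓ := by
  have hg : Nat.gcd 24 (24 * w) = 24 := by simp
  rw [nuR, hg, Nat.mul_div_cancel_left _ (by norm_num), Nat.div_self (by norm_num)]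
  refine le_antisymm (Nat.sInf_le ⟨dvd_rfl, hℓ, by simp [Nat.mod_one]⟩) ?_
  refine le_csInf ⟨ℓ, dvd_rfl, hℓ, by simp [Nat.mod_one]⟩ fun N hN ↦ Nat.le_of_dvd ?_ hN.1
  exact hw.trans_le hN.2.1

lemma etaCoeff_nuR_eq_one_iff {n ℓ : ℕ} (hn : 1 ≤ n) (hp : ℓ.Prime) (hℓ : 4 ^ n + 1 ≤ ℓ) :
    etaCoeff (24 * (4 ^ n + 1)) (nuR (24 * (4 ^ n + 1)) ℓ) = 1 ↔
      IsSqAddFourPowMulSq n ℓ ∧ ¬ IsSqAddFourPowMulSq (n + 1) ℓ := by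
  rw [nuR_eq_self (by positivity) hℓ, etaCoeff_eq_card n hp.ne_zero]
  have hodd : Odd ℓ := hp.odd_of_ne_two (by
    have := Nat.one_le_pow n 4 (by norm_num)
    have : 4 ^ 1 ≤ 4 ^ n := Nat.pow_le_pow_right (by norm_num) hn
    lia)
  have hev : ∀ b, Even (2 ^ n * b) := fun b ↦
    ((Nat.even_pow.mpr ⟨even_two, by lia⟩).mul_right b)
  have haodd : ∀ a b, a ^ 2 + (2 ^ n * b) ^ 2 = ℓ → Odd a := fun a b h ↦ by
    rw [← h, Nat.odd_add] at hodd
    exact (Nat.odd_pow_iff two_ne_zero).mp (hodd.mpr ((hev b).pow_of_ne_zero two_ne_zero))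
  set S := {s ∈ Finset.range (2 * ℓ) ×ˢ Finset.range (2 * ℓ) |
    4 ^ n * (2 * s.1 + 1) ^ 2 + (2 * s.2 + 1) ^ 2 = ℓ} with hS
  have h4 : ∀ c, 4 ^ n * c ^ 2 = (2 ^ n * c) ^ 2 := fun c ↦ by
    rw [mul_pow, ← pow_mul, mul_comm n 2, pow_mul]; norm_num
  have hmem : ∀ s, s ∈ S ↔ (2 * s.2 + 1) ^ 2 + (2 ^ n * (2 * s.1 + 1)) ^ 2 = ℓ := fun s ↦ by
    rw [hS, Finset.mem_filter, h4, add_comm, and_iff_right_iff_imp]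
    intro h
    have : 1 ≤ 2 ^ n := Nat.one_le_two_pow
    rw [Finset.mem_product, Finset.mem_range, Finset.mem_range]
    have h5 : 2 * s.1 + 1 ≤ 2 ^ n * (2 * s.1 + 1) := Nat.le_mul_of_pos_left _ this
    have h6 := Nat.le_self_pow two_ne_zero (2 ^ n * (2 * s.1 + 1))
    have h7 := Nat.le_self_pow two_ne_zero (2 * s.2 + 1)
    constructor <;> lia
  have hcard : S.card ≤ 1 := by
    refine Finset.card_le_one.mpr fun s hs t ht ↦ ?_
    rw [hmem] at hs ht
    obtain ⟨h1, h2⟩ := sq_add_sq_unique hp hs ht (haodd _ _ hs) (hev _) (haodd _ _ ht) (hev _)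
    have h3 := Nat.eq_of_mul_eq_mul_left (by positivity) h2
    ext <;> lia
  have h01 : ((S.card : ℕ) : ZMod 2) = 1 ↔ S.card = 1 := by
    interval_cases S.card <;> simp
  rw [h01]
  constructor
  · intro h
    obtain ⟨s, hs⟩ := Finset.card_pos.mp (by rw [h]; exact one_pos)
    rw [hmem] at hs
    refine ⟨⟨_, _, hs⟩, ?_⟩
    rintro ⟨a, b, hab⟩
    rw [pow_succ 2 n, mul_assoc] at hab
    obtain ⟨-, h2⟩ := sq_add_sq_unique hp hs hab (haodd _ _ hs) (hev _) (haodd _ _ hab) (hev _)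
    have h3 := Nat.eq_of_mul_eq_mul_left (by positivity) h2
    lia
  · rintro ⟨⟨a, b, hab⟩, h2⟩
    refine le_antisymm hcard (Finset.card_pos.mpr ?_)
    obtain ⟨i, hi⟩ := haodd _ _ hab
    obtain ⟨j, hj | hj⟩ := Nat.even_or_odd' b
    · refine absurd ⟨a, j, ?_⟩ h2
      rw [← hab, hj]
      ring
    · refine ⟨(j, i), (hmem _).mpr ?_⟩
      simp only
      rw [← hi, ← hj, hab]

section GaussianCoefficients

open Zsqrtd

lemma finite_setOf_gaussian_norm_eq (n : ℕ) : {z : GaussianInt | z.norm = n}.Finite := by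
  refine ((Finset.Icc (-(n : ℤ)) n ×ˢ Finset.Icc (-(n : ℤ)) n).finite_toSet.image
    fun p ↦ (⟨p.1, p.2⟩ : GaussianInt)).subset fun z hz ↦ ⟨(z.re, z.im), ?_, rfl⟩
  simp only [Set.mem_ofPred_eq, norm_def] at hz
  simp only [Finset.coe_product, Finset.coe_Icc, Set.mem_prod, Set.mem_Icc]
  refine ⟨⟨?_, ?_⟩, ?_, ?_⟩ <;> nlinarith [mul_self_nonneg z.re, mul_self_nonneg z.im]

/-- The Gaussian integers of norm `n`. -/
noncomputable def normFiber (n : ℕ) : Finset GaussianInt :=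
  (finite_setOf_gaussian_norm_eq n).toFinset

lemma mem_normFiber {n : ℕ} {z : GaussianInt} : z ∈ normFiber n ↔ z.norm = n := by
  simp [normFiber]

lemma normFiber_one : normFiber 1 = {1, -1, ⟨0, 1⟩, ⟨0, -1⟩} := by
  ext ⟨a, b⟩
  rw [mem_normFiber, norm_def]
  simp only [Finset.mem_insert, Finset.mem_singleton, Zsqrtd.ext_iff, re_one, im_one, re_neg,
    im_neg]
  constructor
  · intro h
    rw [Nat.cast_one] at h
    have ha : -1 ≤ a ∧ a ≤ 1 := by constructor <;> nlinarith [mul_self_nonneg b]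
    have hb : -1 ≤ b ∧ b ≤ 1 := by constructor <;> nlinarith [mul_self_nonneg a]
    obtain ⟨ha1, ha2⟩ := ha
    obtain ⟨hb1, hb2⟩ := hb
    interval_cases a <;> interval_cases b <;> simp_all
  · rintro (⟨rfl, rfl⟩ | ⟨rfl, rfl⟩ | ⟨rfl, rfl⟩ | ⟨rfl, rfl⟩) <;> simp

lemma card_normFiber_one : (normFiber 1).card = 4 := by
  rw [normFiber_one]
  decide

lemma mem_normFiber_one {z : GaussianInt} : z ∈ normFiber 1 ↔ IsUnit z := by
  rw [mem_normFiber, ← norm_eq_one_iff' (by norm_num)]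
  simp

open Classical in
/-- The von Mangoldt function of the Gaussian integers. -/
noncomputable def gaussianMangoldt (y : GaussianInt) : ℝ :=
  if h : ∃ p : GaussianInt, Prime p ∧ ∃ k : ℕ, 0 < k ∧ Associated (p ^ k) y then
    Real.log h.choose.norm else 0

lemma gaussianMangoldt_eq_log {y p : GaussianInt} (hp : Prime p) {k : ℕ} (hk : 0 < k)
    (h : Associated (p ^ k) y) : gaussianMangoldt y = Real.log p.norm := by
  have hex : ∃ p : GaussianInt, Prime p ∧ ∃ k : ℕ, 0 < k ∧ Associated (p ^ k) y :=
    ⟨p, hp, k, hk, h⟩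
  rw [gaussianMangoldt, dif_pos hex]
  obtain ⟨hq, j, hj, hqj⟩ := hex.choose_spec
  have h1 : hex.choose ∣ p := hq.dvd_of_dvd_pow (n := k)
    ((dvd_pow_self _ hj.ne').trans (hqj.trans h.symm).dvd)
  rw [norm_eq_of_associated (by norm_num) ((hq.dvd_prime_iff_associated hp).mp h1)]

lemma exists_prime_of_gaussianMangoldt_ne_zero {y : GaussianInt} (h : gaussianMangoldt y ≠ 0) :
    ∃ p : GaussianInt, Prime p ∧ ∃ k : ℕ, 0 < k ∧ Associated (p ^ k) y := by
  by_contra h'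
  exact h (dif_neg h')

lemma one_le_gaussian_norm {z : GaussianInt} (hz : z ≠ 0) : (1 : ℤ) ≤ z.norm :=
  GaussianInt.norm_pos.mpr hz

lemma gaussianMangoldt_nonneg (y : GaussianInt) : 0 ≤ gaussianMangoldt y := by
  by_cases h : gaussianMangoldt y = 0
  · rw [h]
  · obtain ⟨p, hp, k, hk, hy⟩ := exists_prime_of_gaussianMangoldt_ne_zero h
    rw [gaussianMangoldt_eq_log hp hk hy]
    exact Real.log_nonneg (by exact_mod_cast one_le_gaussian_norm hp.ne_zero)

lemma gaussianMangoldt_of_isUnit {y : GaussianInt} (hy : IsUnit y) : gaussianMangoldt y = 0 := by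
  by_contra h
  obtain ⟨p, hp, k, hk, hpk⟩ := exists_prime_of_gaussianMangoldt_ne_zero h
  exact hp.not_isUnit (isUnit_of_dvd_unit ((dvd_pow_self _ hk.ne').trans hpk.dvd) hy)

lemma gaussian_norm_dvd {y z : GaussianInt} (h : y ∣ z) : y.norm ∣ z.norm := by
  obtain ⟨w, rfl⟩ := h
  exact ⟨_, norm_mul _ _⟩

lemma finite_setOf_gaussian_dvd {z : GaussianInt} (hz : z ≠ 0) : {y | y ∣ z}.Finite := by
  refine ((Finset.range (z.norm.natAbs + 1)).biUnion normFiber).finite_toSet.subset fun y hy ↦ ?_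
  have h1 := Int.le_of_dvd (one_le_gaussian_norm hz) (gaussian_norm_dvd hy)
  have h2 := GaussianInt.norm_nonneg y
  simp only [Finset.coe_biUnion, Set.mem_iUnion, Finset.mem_coe, Finset.mem_range, mem_normFiber]
  exact ⟨y.norm.natAbs, by lia, by lia⟩

open Classical in
/-- The divisors of a Gaussian integer. -/
noncomputable def gaussianDivisors (z : GaussianInt) : Finset GaussianInt :=
  if hz : z = 0 then ∅ else (finite_setOf_gaussian_dvd hz).toFinset

lemma mem_gaussianDivisors {y z : GaussianInt} (hz : z ≠ 0) :
    y ∈ gaussianDivisors z ↔ y ∣ z := by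
  simp [gaussianDivisors, hz]

lemma sum_gaussianMangoldt_gaussianDivisors {z : GaussianInt} (hz : z ≠ 0) :
    ∑ y ∈ gaussianDivisors z, gaussianMangoldt y = 4 * Real.log z.norm := by
  classical
  induction z using UniqueFactorizationMonoid.induction_on_prime with
  | h₁ => exact absurd rfl hz
  | h₂ x hx =>
    rw [(norm_eq_one_iff' (by norm_num) x).mpr hx]
    simp only [Int.cast_one, Real.log_one, mul_zero]
    refine Finset.sum_eq_zero fun y hy ↦ gaussianMangoldt_of_isUnit ?_
    exact isUnit_of_dvd_unit ((mem_gaussianDivisors hz).mp hy) hx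
  | h₃ a p ha hp ih =>
    obtain ⟨a', haa', hpa'⟩ :=
      (FiniteMultiplicity.of_prime_left hp ha).exists_eq_pow_mul_and_not_dvd
    set m := multiplicity p a
    have hsub : gaussianDivisors a ⊆ gaussianDivisors (p * a) := fun y hy ↦ by
      rw [mem_gaussianDivisors hz]
      exact ((mem_gaussianDivisors ha).mp hy).mul_left p
    rw [← Finset.sum_sdiff hsub, ih ha, norm_mul, Int.cast_mul, Real.log_mul
      (by exact_mod_cast (GaussianInt.norm_pos.mpr hp.ne_zero).ne')
      (by exact_mod_cast (GaussianInt.norm_pos.mpr ha).ne'), mul_add]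
    congr 1
    have hinj : Function.Injective fun u : GaussianInt ↦ u * p ^ (m + 1) :=
      mul_left_injective₀ (pow_ne_zero _ hp.ne_zero)
    have himg : (normFiber 1).image (fun u ↦ u * p ^ (m + 1)) ⊆
        gaussianDivisors (p * a) \ gaussianDivisors a := by
      intro y hy
      obtain ⟨u, hu, rfl⟩ := Finset.mem_image.mp hy
      rw [mem_normFiber_one] at hu
      rw [Finset.mem_sdiff, mem_gaussianDivisors hz, mem_gaussianDivisors ha, hu.mul_left_dvd,
        hu.mul_left_dvd]
      refine ⟨⟨a', by rw [haa']; ring⟩, fun ⟨c, hc⟩ ↦ hpa' ⟨c, ?_⟩⟩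
      refine mul_left_cancel₀ (pow_ne_zero m hp.ne_zero) ?_
      rw [← haa', hc]
      ring
    rw [← Finset.sum_subset himg, Finset.sum_image hinj.injOn]
    · rw [Finset.sum_congr rfl (g := fun _ ↦ Real.log p.norm), Finset.sum_const, card_normFiber_one]
      · simp
      · intro u hu
        refine gaussianMangoldt_eq_log hp m.succ_pos ?_
        obtain ⟨v, rfl⟩ := mem_normFiber_one.mp hu
        exact ⟨v, mul_comm _ _⟩
    · intro y hy hy'
      by_contra h
      obtain ⟨r, hr, k, hk, hrk⟩ := exists_prime_of_gaussianMangoldt_ne_zero h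
      rw [Finset.mem_sdiff, mem_gaussianDivisors hz, mem_gaussianDivisors ha,
        ← hrk.dvd_iff_dvd_left,
        ← hrk.dvd_iff_dvd_left] at hy
      by_cases hrp : Associated r p
      · have hpk : Associated (p ^ k) y := (hrp.symm.pow_pow).trans hrk
        rw [(hrp.pow_pow).dvd_iff_dvd_left, (hrp.pow_pow).dvd_iff_dvd_left] at hy
        have hk1 : k ≤ m + 1 := by
          by_contra! hlt
          obtain ⟨c, hc⟩ := (pow_dvd_pow p hlt).trans hy.1
          refine hpa' ⟨c, mul_left_cancel₀ (pow_ne_zero (m + 1) hp.ne_zero) ?_⟩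
          rw [show p ^ (m + 1) * a' = p * (p ^ m * a') by ring, ← haa', hc]
          simp only [Nat.succ_eq_add_one]
          ring
        have hk2 : m < k := by
          by_contra! hle
          exact hy.2 (haa' ▸ (pow_dvd_pow p hle).mul_right a')
        obtain rfl : k = m + 1 := by lia
        obtain ⟨u, hu⟩ := hpk
        refine hy' (Finset.mem_image.mpr ⟨u, mem_normFiber_one.mpr u.isUnit, ?_⟩)
        rw [← hu, mul_comm]
      · have hcop : IsCoprime (r ^ k) p := by
          refine IsCoprime.pow_left ((hr.irreducible.coprime_iff_not_dvd).mpr fun hd ↦ hrp ?_)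
          exact (hr.dvd_prime_iff_associated hp).mp hd
        exact hy.2 (hcop.dvd_of_dvd_mul_left hy.1)

end GaussianCoefficients

section GaussianConvolution

open Zsqrtd hiding norm_mul norm_natCast

/-- The coefficients of the Dirichlet series `¼ ∑ f z / N z ^ s` over nonzero Gaussian integers. -/
noncomputable def gaussianCoeff (f : GaussianInt → ℂ) : ArithmeticFunction ℂ :=
  ⟨fun n ↦ if n = 0 then 0 else (∑ z ∈ normFiber n, f z) / 4, if_pos rfl⟩

lemma gaussianCoeff_apply (f : GaussianInt → ℂ) {n : ℕ} (hn : n ≠ 0) :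
    gaussianCoeff f n = (∑ z ∈ normFiber n, f z) / 4 :=
  if_neg hn

/-- The coefficients of the negative logarithmic derivative attached to `gaussianCoeff f`. -/
noncomputable def gaussianMangoldtCoeff (f : GaussianInt → ℂ) : ArithmeticFunction ℂ :=
  gaussianCoeff fun z ↦ f z * gaussianMangoldt z

lemma ne_zero_of_mem_normFiber {n : ℕ} (hn : n ≠ 0) {z : GaussianInt} (hz : z ∈ normFiber n) :
    z ≠ 0 := by
  rintro rfl
  rw [mem_normFiber, norm_zero] at hz
  exact hn (by exact_mod_cast hz.symm)

lemma gaussianCoeff_mul_gaussianMangoldtCoeff (ψ : GaussianInt →* ℂ) (n : ℕ) :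
    (gaussianCoeff ψ * gaussianMangoldtCoeff ψ) n = gaussianCoeff ψ n * Real.log n := by
  rcases eq_or_ne n 0 with rfl | hn
  · simp
  have key : ∑ z ∈ normFiber n, ∑ y ∈ gaussianDivisors z, ψ z * gaussianMangoldt y =
      ∑ d ∈ n.divisorsAntidiagonal, ∑ q ∈ normFiber d.1 ×ˢ normFiber d.2,
        ψ q.1 * (ψ q.2 * gaussianMangoldt q.2) := by
    rw [Finset.sum_sigma', Finset.sum_sigma']
    refine Finset.sum_bij' (fun q _ ↦ ⟨((q.1 / q.2).norm.natAbs, q.2.norm.natAbs),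
      (q.1 / q.2, q.2)⟩) (fun q _ ↦ ⟨q.2.1 * q.2.2, q.2.2⟩) ?_ ?_ ?_ ?_ ?_
    · rintro ⟨z, y⟩ hq
      rw [Finset.mem_sigma] at hq
      dsimp only at hq
      obtain ⟨hz, hy⟩ := hq
      have hz0 := ne_zero_of_mem_normFiber hn hz
      obtain ⟨w, rfl⟩ := (mem_gaussianDivisors hz0).mp hy
      have hy0 := left_ne_zero_of_mul hz0
      simp only [Finset.mem_sigma, Nat.mem_divisorsAntidiagonal, Finset.mem_product,
        mem_normFiber, mul_div_cancel_left₀ _ hy0, Int.natCast_natAbs, abs_of_nonneg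
        (GaussianInt.norm_nonneg _), and_true, ← Int.natAbs_mul]
      rw [mem_normFiber, Zsqrtd.norm_mul] at hz
      exact ⟨by rw [mul_comm, hz, Int.natAbs_natCast], hn⟩
    · rintro ⟨⟨d, e⟩, ⟨w, y⟩⟩ hq
      simp only [Finset.mem_sigma, Nat.mem_divisorsAntidiagonal, Finset.mem_product,
        mem_normFiber] at hq
      obtain ⟨⟨rfl, h0⟩, hw, hy⟩ := hq
      have hwy : w * y ∈ normFiber (d * e) := by
        rw [mem_normFiber, Zsqrtd.norm_mul, hw, hy, Nat.cast_mul]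
      simp only [Finset.mem_sigma]
      exact ⟨hwy, (mem_gaussianDivisors (ne_zero_of_mem_normFiber h0 hwy)).mpr
        (dvd_mul_left _ _)⟩
    · rintro ⟨z, y⟩ hq
      rw [Finset.mem_sigma] at hq
      dsimp only at hq
      obtain ⟨hz, hy⟩ := hq
      have hz0 := ne_zero_of_mem_normFiber hn hz
      obtain ⟨w, rfl⟩ := (mem_gaussianDivisors hz0).mp hy
      simp only [mul_div_cancel_left₀ _ (left_ne_zero_of_mul hz0), mul_comm]
    · rintro ⟨⟨d, e⟩, ⟨w, y⟩⟩ hq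
      simp only [Finset.mem_sigma, Nat.mem_divisorsAntidiagonal, Finset.mem_product,
        mem_normFiber] at hq
      obtain ⟨⟨rfl, h0⟩, hw, hy⟩ := hq
      have hy0 : y ≠ 0 := ne_zero_of_mem_normFiber (right_ne_zero_of_mul h0)
        (mem_normFiber.mpr hy)
      simp only [mul_div_cancel_right₀ _ hy0, hw, hy, Int.natAbs_natCast]
    · rintro ⟨z, y⟩ hq
      rw [Finset.mem_sigma] at hq
      dsimp only at hq
      obtain ⟨hz, hy⟩ := hq
      have hz0 := ne_zero_of_mem_normFiber hn hz
      obtain ⟨w, rfl⟩ := (mem_gaussianDivisors hz0).mp hy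
      simp only [mul_div_cancel_left₀ _ (left_ne_zero_of_mul hz0), map_mul]
      ring
  have hlog : ∑ z ∈ normFiber n, ∑ y ∈ gaussianDivisors z, ψ z * gaussianMangoldt y =
      (∑ z ∈ normFiber n, ψ z) * (4 * Real.log n) := by
    rw [Finset.sum_mul]
    refine Finset.sum_congr rfl fun z hz ↦ ?_
    rw [← Finset.mul_sum, ← Complex.ofReal_sum,
      sum_gaussianMangoldt_gaussianDivisors (ne_zero_of_mem_normFiber hn hz), mem_normFiber.mp hz]
    push_cast
    rfl
  rw [ArithmeticFunction.mul_apply, gaussianCoeff_apply _ hn]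
  trans (∑ d ∈ n.divisorsAntidiagonal, ∑ q ∈ normFiber d.1 ×ˢ normFiber d.2,
        ψ q.1 * (ψ q.2 * gaussianMangoldt q.2)) / 16
  · rw [Finset.sum_div]
    refine Finset.sum_congr rfl fun d hd ↦ ?_
    obtain ⟨rfl, h0⟩ := Nat.mem_divisorsAntidiagonal.mp hd
    rw [gaussianMangoldtCoeff, gaussianCoeff_apply _ (left_ne_zero_of_mul h0),
      gaussianCoeff_apply _ (right_ne_zero_of_mul h0), Finset.sum_product, div_mul_div_comm,
      Finset.sum_mul_sum]
    norm_num
  · rw [← key, hlog]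
    ring

lemma gaussianCoeff_one {f : GaussianInt → ℂ} (hf : ∀ u, IsUnit u → f u = 1) :
    gaussianCoeff f 1 = 1 := by
  rw [gaussianCoeff_apply _ one_ne_zero, Finset.sum_congr rfl (g := fun _ ↦ 1)
    fun u hu ↦ hf u (mem_normFiber_one.mp hu)]
  simp [card_normFiber_one]

lemma gaussianMangoldtCoeff_one (f : GaussianInt → ℂ) : gaussianMangoldtCoeff f 1 = 0 := by
  rw [gaussianMangoldtCoeff, gaussianCoeff_apply _ one_ne_zero, Finset.sum_eq_zero, zero_div]
  intro u hu
  rw [gaussianMangoldt_of_isUnit (mem_normFiber_one.mp hu), Complex.ofReal_zero, mul_zero]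

lemma gaussianMangoldt_le {n : ℕ} {y : GaussianInt} (hy : y ∈ normFiber n) :
    gaussianMangoldt y ≤ 2 * ArithmeticFunction.vonMangoldt n := by
  by_cases h : gaussianMangoldt y = 0
  · rw [h]
    exact mul_nonneg zero_le_two ArithmeticFunction.vonMangoldt_nonneg
  obtain ⟨p, hp, k, hk, hpk⟩ := exists_prime_of_gaussianMangoldt_ne_zero h
  rw [gaussianMangoldt_eq_log hp hk hpk]
  have hn : p.norm ^ k = n := by
    rw [← mem_normFiber.mp hy, ← norm_eq_of_associated (by norm_num) hpk]
    exact (map_pow normMonoidHom p k).symm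
  obtain ⟨ℓ, hℓ, hpℓ⟩ : ∃ ℓ : ℕ, ℓ.Prime ∧ p ∣ (ℓ : GaussianInt) := by
    have h1 : p ∣ ((p.norm.natAbs.primeFactorsList.prod : ℕ) : GaussianInt) := by
      rw [Nat.prod_primeFactorsList (by simpa using hp.ne_zero)]
      refine ⟨star p, ?_⟩
      rw [← norm_eq_mul_conj, ← Int.cast_natCast, Int.natCast_natAbs,
        abs_of_nonneg (GaussianInt.norm_nonneg _)]
    rw [Nat.cast_list_prod, hp.dvd_prod_iff] at h1
    obtain ⟨a, ha, hpa⟩ := h1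
    obtain ⟨ℓ, hℓ, rfl⟩ := List.mem_map.mp ha
    exact ⟨ℓ, Nat.prime_of_mem_primeFactorsList hℓ, hpa⟩
  have hdvd : p.norm.natAbs ∣ ℓ ^ 2 := by
    have := gaussian_norm_dvd hpℓ
    rw [Zsqrtd.norm_natCast] at this
    rw [← Int.natCast_dvd_natCast, Int.natCast_natAbs, abs_of_nonneg (GaussianInt.norm_nonneg _)]
    push_cast
    rwa [sq]
  obtain ⟨j, hj, hpj⟩ := (Nat.dvd_prime_pow hℓ).mp hdvd
  have hnorm : p.norm = ((ℓ ^ j : ℕ) : ℤ) := by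
    rw [← hpj, Int.natCast_natAbs, abs_of_nonneg (GaussianInt.norm_nonneg _)]
  have hj0 : j ≠ 0 := by
    rintro rfl
    exact hp.not_isUnit ((norm_eq_one_iff' (by norm_num) p).mp (by simpa using hnorm))
  have hnℓ : n = ℓ ^ (j * k) := by
    rw [hnorm] at hn
    rw [pow_mul]
    exact_mod_cast hn.symm
  rw [hnℓ, ArithmeticFunction.vonMangoldt_apply_pow (mul_ne_zero hj0 hk.ne'),
    ArithmeticFunction.vonMangoldt_apply_prime hℓ, hnorm]
  push_cast
  rw [Real.log_pow]
  have hj' : (j : ℝ) ≤ 2 := by exact_mod_cast hj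
  exact mul_le_mul_of_nonneg_right hj' (Real.log_natCast_nonneg ℓ)

lemma card_filter_gaussianMangoldt_ne_zero_le (n : ℕ) :
    ((normFiber n).filter fun y ↦ gaussianMangoldt y ≠ 0).card ≤ 8 := by
  classical
  rcases Finset.eq_empty_or_nonempty ((normFiber n).filter fun y ↦ gaussianMangoldt y ≠ 0)
    with h | ⟨x, hx⟩
  · simp [h]
  obtain ⟨hxn, hx⟩ := Finset.mem_filter.mp hx
  obtain ⟨p, hp, k, hk, hpk⟩ := exists_prime_of_gaussianMangoldt_ne_zero hx
  have hsub : ((normFiber n).filter fun y ↦ gaussianMangoldt y ≠ 0) ⊆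
      (normFiber 1).image (fun u ↦ x * u) ∪ (normFiber 1).image (fun u ↦ star x * u) := by
    intro y hy
    obtain ⟨hyn, hy⟩ := Finset.mem_filter.mp hy
    obtain ⟨r, hr, j, hj, hrj⟩ := exists_prime_of_gaussianMangoldt_ne_zero hy
    rw [mem_normFiber] at hxn hyn
    have hps : Prime (star p) :=
      (MulEquiv.prime_iff (starRingAut : GaussianInt ≃+* GaussianInt)).mpr hp
    have hpks : Associated (star p ^ k) (star x) := by
      obtain ⟨u, hu⟩ := hpk
      refine ⟨star u, ?_⟩
      rw [← hu, star_mul', star_pow, Units.coe_star]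
    have hrx : r ∣ x * star x := by
      rw [← norm_eq_mul_conj, hxn, ← hyn, norm_eq_mul_conj]
      exact ((dvd_pow_self r hj.ne').trans hrj.dvd).mul_right _
    have aux : ∀ q : GaussianInt, Prime q → ∀ x' : GaussianInt, x'.norm = n →
        Associated (q ^ k) x' → r ∣ x' → y ∈ (normFiber 1).image (fun u ↦ x' * u) := by
      intro q hq x' hx' hqx hrx'
      have hrq : Associated r q := (hr.dvd_prime_iff_associated hq).mp
        (hr.dvd_of_dvd_pow (hrx'.trans hqx.symm.dvd))
      have h1 : q.norm ^ k = q.norm ^ j := by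
        have e1 := norm_eq_of_associated (by norm_num) hqx
        have e2 := norm_eq_of_associated (by norm_num) (hrq.symm.pow_pow.trans hrj)
        have e3 (m : ℕ) : (q ^ m).norm = q.norm ^ m := map_pow normMonoidHom q m
        rw [← e3, ← e3, e1, e2, hx', hyn]
      have h2 : 1 < q.norm := by
        refine lt_of_le_of_ne (one_le_gaussian_norm hq.ne_zero) fun h ↦ hq.not_isUnit ?_
        exact (norm_eq_one_iff' (by norm_num) q).mp h.symm
      obtain rfl := Int.pow_right_injective (by lia : 2 ≤ q.norm.natAbs) h1
      obtain ⟨u, hu⟩ := hqx.symm.trans (hrq.symm.pow_pow.trans hrj)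
      exact Finset.mem_image.mpr ⟨u, mem_normFiber_one.mpr u.isUnit, hu⟩
    rw [Finset.mem_union]
    rcases hr.dvd_or_dvd hrx with h | h
    · exact Or.inl (aux p hp x hxn hpk h)
    · exact Or.inr (aux (star p) hps (star x) (by rw [norm_conj, hxn]) hpks h)
  refine (Finset.card_le_card hsub).trans ((Finset.card_union_le _ _).trans ?_)
  have := Finset.card_image_le (s := normFiber 1) (f := fun u ↦ x * u)
  have := Finset.card_image_le (s := normFiber 1) (f := fun u ↦ star x * u)
  rw [card_normFiber_one] at *
  lia

lemma sum_gaussianMangoldt_normFiber_le (n : ℕ) :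
    ∑ y ∈ normFiber n, gaussianMangoldt y ≤ 16 * ArithmeticFunction.vonMangoldt n := by
  rw [← Finset.sum_filter_ne_zero]
  refine (Finset.sum_le_card_nsmul _ _ _ fun y hy ↦
    gaussianMangoldt_le (Finset.mem_filter.mp hy).1).trans ?_
  rw [nsmul_eq_mul]
  have : (((normFiber n).filter fun y ↦ gaussianMangoldt y ≠ 0).card : ℝ) ≤ 8 := by
    exact_mod_cast card_filter_gaussianMangoldt_ne_zero_le n
  nlinarith [ArithmeticFunction.vonMangoldt_nonneg (n := n)]

lemma norm_gaussianMangoldtCoeff_le {f : GaussianInt → ℂ} (hf : ∀ z, ‖f z‖ ≤ 1) (n : ℕ) :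
    ‖gaussianMangoldtCoeff f n‖ ≤ 4 * ArithmeticFunction.vonMangoldt n := by
  rcases eq_or_ne n 0 with rfl | hn
  · simp
  rw [gaussianMangoldtCoeff, gaussianCoeff_apply _ hn, norm_div, div_le_iff₀ (by simp)]
  refine (norm_sum_le _ _).trans ((Finset.sum_le_sum fun z _ ↦ ?_).trans
    ((sum_gaussianMangoldt_normFiber_le n).trans_eq (by norm_num; ring)))
  rw [norm_mul, Complex.norm_real, Real.norm_of_nonneg (gaussianMangoldt_nonneg z)]
  exact mul_le_of_le_one_left (gaussianMangoldt_nonneg z) (hf z)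

lemma lSeriesSummable_gaussianMangoldtCoeff {f : GaussianInt → ℂ} (hf : ∀ z, ‖f z‖ ≤ 1) {s : ℂ}
    (hs : 1 < s.re) : LSeriesSummable (gaussianMangoldtCoeff f) s := by
  have h := (ArithmeticFunction.LSeriesSummable_vonMangoldt hs).norm.mul_left 4
  refine Summable.of_norm_bounded h fun n ↦ ?_
  rcases eq_or_ne n 0 with rfl | hn
  · simp
  rw [LSeries.term_of_ne_zero hn, LSeries.term_of_ne_zero hn, norm_div, norm_div, ← mul_div_assoc]
  gcongr
  refine (norm_gaussianMangoldtCoeff_le hf n).trans_eq ?_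
  rw [Complex.norm_real, Real.norm_of_nonneg ArithmeticFunction.vonMangoldt_nonneg]

end GaussianConvolution

section GaussianLattice

open Zsqrtd hiding norm_mul norm_natCast
open HurwitzZeta

lemma gaussian_norm_eq_sq_add_sq (z : GaussianInt) : z.norm = z.re ^ 2 + z.im ^ 2 := by
  rw [norm_def]
  ring

/-- Coordinates of Gaussian integers. -/
def gaussianEquivProd : GaussianInt ≃ ℤ × ℤ where
  toFun z := (z.re, z.im)
  invFun p := ⟨p.1, p.2⟩
  left_inv _ := rfl
  right_inv _ := rfl

lemma summable_gaussian_norm_rpow {σ : ℝ} (hσ : 1 < σ) :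
    Summable fun z : GaussianInt ↦ (z.norm : ℝ) ^ (-σ) := by
  have h := EisensteinSeries.summable_one_div_norm_rpow (k := 2 * σ) (by linarith)
  let e : GaussianInt ≃ (Fin 2 → ℤ) := gaussianEquivProd.trans (finTwoArrowEquiv ℤ).symm
  refine Summable.of_nonneg_of_le (fun z ↦ Real.rpow_nonneg
    (by exact_mod_cast GaussianInt.norm_nonneg z) _) (fun z ↦ ?_) (e.summable_iff.mpr h)
  rcases eq_or_ne z 0 with rfl | hz
  · rw [norm_zero, Int.cast_zero, Real.zero_rpow (by linarith)]
    exact Real.rpow_nonneg (norm_nonneg _) _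
  have hz0 : 0 < ‖e z‖ := norm_pos_iff.mpr fun h0 ↦ hz (by
    have h1 := congrFun h0 0
    have h2 := congrFun h0 1
    exact Zsqrtd.ext h1 h2)
  have hle : ‖e z‖ ^ 2 ≤ z.norm := by
    have hN : (z.norm : ℝ) = (z.re : ℝ) ^ 2 + (z.im : ℝ) ^ 2 := by
      rw [gaussian_norm_eq_sq_add_sq]
      push_cast
      rfl
    refine Real.le_sqrt (norm_nonneg _) (by rw [hN]; positivity) |>.mp ?_
    refine (pi_norm_le_iff_of_nonneg (Real.sqrt_nonneg _)).mpr fun i ↦ Real.le_sqrt_of_sq_le ?_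
    rw [Int.norm_eq_abs, sq_abs, hN]
    fin_cases i
    · exact le_add_of_nonneg_right (sq_nonneg _)
    · exact le_add_of_nonneg_left (sq_nonneg _)
  rw [Function.comp_apply, show -(2 * σ) = (2 : ℕ) * -σ by push_cast; ring, Real.rpow_mul hz0.le,
    Real.rpow_natCast]
  exact Real.rpow_le_rpow_of_nonpos (by positivity) hle (by linarith)

lemma summable_gaussian_norm_cpow {f : GaussianInt → ℂ} {M : ℝ} (hf : ∀ z, ‖f z‖ ≤ M) {s : ℂ}
    (hs : 1 < s.re) : Summable fun z : GaussianInt ↦ f z * (z.norm : ℂ) ^ (-s) := by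
  refine Summable.of_norm_bounded ((summable_gaussian_norm_rpow hs).mul_left M) fun z ↦ ?_
  rw [norm_mul]
  rcases eq_or_ne z 0 with rfl | hz
  · rw [norm_zero, Int.cast_zero, Int.cast_zero, Complex.zero_cpow, Real.zero_rpow] <;>
      simp <;> intro h <;> simp [h] at hs <;> linarith
  have hz0 : (0 : ℝ) < z.norm := by exact_mod_cast one_le_gaussian_norm hz
  rw [← Complex.ofReal_intCast, Complex.norm_cpow_eq_rpow_re_of_pos hz0, Complex.neg_re]
  exact mul_le_mul_of_nonneg_right (hf z) (by positivity)

lemma lSeriesHasSum_gaussianCoeff {f : GaussianInt → ℂ} {s a : ℂ} (hs : s ≠ 0)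
    (h : HasSum (fun z : GaussianInt ↦ f z * (z.norm : ℂ) ^ (-s)) a) :
    LSeriesHasSum (gaussianCoeff f) s (a / 4) := by
  have h1 := (h.tsum_fiberwise fun z ↦ z.norm.natAbs).div_const 4
  refine h1.congr_fun fun n ↦ ?_
  have hset : (fun z : GaussianInt ↦ z.norm.natAbs) ⁻¹' {n} = (normFiber n : Set GaussianInt) := by
    ext z
    rw [Set.mem_preimage, Set.mem_singleton_iff, Finset.mem_coe, mem_normFiber]
    have := GaussianInt.norm_nonneg z
    lia
  rw [hset, Finset.tsum_subtype' (normFiber n) fun z : GaussianInt ↦ f z * (z.norm : ℂ) ^ (-s)]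
  rcases eq_or_ne n 0 with rfl | hn
  · rw [LSeries.term_zero, Finset.sum_eq_zero, zero_div]
    intro z hz
    rw [mem_normFiber.mp hz, Nat.cast_zero, Int.cast_zero, Complex.zero_cpow (neg_ne_zero.mpr hs),
      mul_zero]
  · rw [LSeries.term_of_ne_zero hn, gaussianCoeff_apply _ hn, div_right_comm, Finset.sum_div]
    congr 1
    refine Finset.sum_congr rfl fun z hz ↦ ?_
    rw [mem_normFiber.mp hz, Complex.cpow_neg, Int.cast_natCast, div_eq_mul_inv]

lemma lSeriesSummable_gaussianCoeff {f : GaussianInt → ℂ} {M : ℝ} (hf : ∀ z, ‖f z‖ ≤ M) {s : ℂ}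
    (hs : 1 < s.re) : LSeriesSummable (gaussianCoeff f) s :=
  (lSeriesHasSum_gaussianCoeff (by rintro rfl; norm_num at hs)
    (summable_gaussian_norm_cpow hf hs).hasSum).LSeriesSummable

/-- The product of two theta kernels, paired with its dual. -/
noncomputable def evenKernelMulFEPair (a b : UnitAddCircle) : WeakFEPair ℂ where
  f x := evenKernel a x * evenKernel b x
  g x := cosKernel a x * cosKernel b x
  hf_int := ((Complex.continuous_ofReal.comp_continuousOn (continuousOn_evenKernel a)).mul
    (Complex.continuous_ofReal.comp_continuousOn
      (continuousOn_evenKernel b))).locallyIntegrableOn measurableSet_Ioi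
  hg_int := ((Complex.continuous_ofReal.comp_continuousOn (continuousOn_cosKernel a)).mul
    (Complex.continuous_ofReal.comp_continuousOn
      (continuousOn_cosKernel b))).locallyIntegrableOn measurableSet_Ioi
  k := 1
  hk := one_pos
  ε := 1
  hε := one_ne_zero
  f₀ := (hurwitzEvenFEPair a).f₀ * (hurwitzEvenFEPair b).f₀
  g₀ := 1
  h_feq x hx := by
    have ha := (hurwitzEvenFEPair a).h_feq x hx
    have hb := (hurwitzEvenFEPair b).h_feq x hx
    simp only [hurwitzEvenFEPair, Function.comp_apply, smul_eq_mul, one_mul] at ha hb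
    rw [ha, hb, mul_mul_mul_comm, ← Complex.ofReal_mul, ← Real.rpow_add hx, smul_eq_mul]
    norm_num
  hf_top r := by
    have ha := (hurwitzEvenFEPair a).hf_top r
    have hb := (hurwitzEvenFEPair b).hf_top r
    have hb0 : (hurwitzEvenFEPair b).f =O[atTop] fun _ ↦ (1 : ℝ) := by
      have := ((hurwitzEvenFEPair b).hf_top 0).congr_right fun x ↦ Real.rpow_zero x
      simpa using this.add (Asymptotics.isBigO_const_const (hurwitzEvenFEPair b).f₀
        (one_ne_zero (α := ℝ)) atTop)
    refine ((ha.mul hb0).congr_right fun x ↦ mul_one _).add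
      (hb.const_mul_left (hurwitzEvenFEPair a).f₀) |>.congr_left fun x ↦ ?_
    simp only [hurwitzEvenFEPair, Function.comp_apply]
    ring
  hg_top r := by
    have ha := (hurwitzEvenFEPair a).hg_top r
    have hb := (hurwitzEvenFEPair b).hg_top r
    have hb0 : (hurwitzEvenFEPair b).g =O[atTop] fun _ ↦ (1 : ℝ) := by
      have := ((hurwitzEvenFEPair b).hg_top 0).congr_right fun x ↦ Real.rpow_zero x
      simpa using this.add (Asymptotics.isBigO_const_const (hurwitzEvenFEPair b).g₀
        (one_ne_zero (α := ℝ)) atTop)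
    refine ((ha.mul hb0).congr_right fun x ↦ mul_one _).add
      (hb.const_mul_left (hurwitzEvenFEPair a).g₀) |>.congr_left fun x ↦ ?_
    simp only [hurwitzEvenFEPair, Function.comp_apply]
    ring

end GaussianLattice

section GaussianContinuation

open Zsqrtd hiding norm_mul norm_natCast
open HurwitzZeta

/-- The Gaussian integers congruent to `z` modulo `q`. -/
def gaussianShift (q : ℕ) (z : GaussianInt) (p : ℤ × ℤ) : GaussianInt :=
  ⟨p.1 * q + z.re, p.2 * q + z.im⟩

lemma gaussianShift_injective (q : ℕ) [NeZero q] (z : GaussianInt) :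
    Function.Injective (gaussianShift q z) := by
  rintro ⟨a, b⟩ ⟨c, d⟩ h
  have hq : (q : ℤ) ≠ 0 := by exact_mod_cast NeZero.ne q
  simp only [gaussianShift, Zsqrtd.ext_iff, add_left_inj, mul_left_inj' hq] at h
  exact Prod.ext h.1 h.2

lemma exists_entire_hasSum_gaussianShift (q : ℕ) [NeZero q] (z : GaussianInt)
    (hz : ¬ ((q : ℤ) ∣ z.re ∧ (q : ℤ) ∣ z.im)) :
    ∃ E : ℂ → ℂ, Differentiable ℂ E ∧ E 1 = Real.pi / q ^ 2 ∧ E (-1) = 0 ∧ ∀ s : ℂ, 1 < s.re →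
      HasSum (fun p ↦ ((gaussianShift q z p).norm : ℂ) ^ (-s)) (E s / (s - 1)) := by
  have hq : (q : ℝ) ≠ 0 := by exact_mod_cast NeZero.ne q
  have hqC : (q : ℂ) ≠ 0 := by exact_mod_cast NeZero.ne q
  have hπ : (Real.pi : ℂ) ≠ 0 := by exact_mod_cast Real.pi_ne_zero
  set α : ℝ := z.re / q with hα
  set β : ℝ := z.im / q with hβ
  set P := evenKernelMulFEPair α β with hP
  have hcoe (m : ℤ) : ((m / q : ℝ) : UnitAddCircle) = 0 ↔ (q : ℤ) ∣ m := by
    rw [AddCircle.coe_eq_zero_iff]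
    constructor
    · rintro ⟨n, hn⟩
      refine ⟨n, ?_⟩
      rw [zsmul_eq_mul, mul_one, eq_div_iff hq] at hn
      rw [mul_comm]
      exact_mod_cast hn.symm
    · rintro ⟨n, rfl⟩
      refine ⟨n, ?_⟩
      rw [zsmul_eq_mul, mul_one]
      push_cast
      field_simp
  have hf₀ : P.f₀ = 0 := by
    simp only [hP, evenKernelMulFEPair, hurwitzEvenFEPair, hα, hβ, hcoe, mul_ite, mul_one, mul_zero]
    split_ifs with h1 h2
    · exact absurd ⟨h2, h1⟩ hz
    · rfl
    · rfl
  refine ⟨fun s ↦ Real.pi ^ s * q ^ (-2 * s) * (Complex.Gamma s)⁻¹ * ((s - 1) * P.Λ₀ s + 1),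
    ?_, ?_, ?_, fun s hs ↦ ?_⟩
  · refine ((Differentiable.mul ?_ ?_).mul Complex.differentiable_one_div_Gamma).mul
      (((differentiable_id.sub_const 1).mul P.differentiable_Λ₀).add_const 1)
    · exact fun s ↦ differentiableAt_id.const_cpow (Or.inl hπ)
    · exact fun s ↦ (differentiableAt_id.const_mul _).const_cpow (Or.inl hqC)
  · simp only [Complex.cpow_one, Complex.Gamma_one, mul_one, sub_self, zero_mul, zero_add, inv_one,
      Complex.cpow_neg, div_eq_mul_inv]
    norm_cast
  · simp only [show Complex.Gamma (-1) = 0 by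
      simpa using Complex.Gamma_neg_nat_eq_zero 1, inv_zero, mul_zero, zero_mul]
  have hs0 : s ≠ 0 := by rintro rfl; norm_num at hs
  have hs1 : s - 1 ≠ 0 := by
    intro h
    rw [sub_eq_zero.mp h] at hs
    norm_num at hs
  have hnorm (p : ℤ × ℤ) : ((gaussianShift q z p).norm : ℝ) =
      (q : ℝ) ^ 2 * ((p.1 + α) ^ 2 + (p.2 + β) ^ 2) := by
    rw [gaussian_norm_eq_sq_add_sq, gaussianShift, hα, hβ]
    push_cast
    field_simp
  have hpos (p : ℤ × ℤ) : 0 < (p.1 + α) ^ 2 + (p.2 + β) ^ 2 := by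
    have h0 : gaussianShift q z p ≠ 0 := by
      intro h0
      simp only [gaussianShift, Zsqrtd.ext_iff, re_zero, im_zero] at h0
      exact hz ⟨⟨-p.1, by linear_combination h0.1⟩, ⟨-p.2, by linear_combination h0.2⟩⟩
    have h1 : (0 : ℝ) < (gaussianShift q z p).norm := by exact_mod_cast one_le_gaussian_norm h0
    rw [hnorm] at h1
    exact pos_of_mul_pos_right h1 (sq_nonneg _)
  have hmellin : mellin P.f s = P.Λ s := by
    have := (P.hasMellin (s := s) (by simpa [hP, evenKernelMulFEPair] using hs)).2
    simpa [hf₀] using this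
  have hsum := hasSum_mellin_pi_mul (a := fun _ : ℤ × ℤ ↦ (1 : ℂ))
    (q := fun p ↦ (p.1 + α) ^ 2 + (p.2 + β) ^ 2) (F := P.f) (s := s) (fun p ↦ Or.inr (hpos p))
    (by linarith) (fun t ht ↦ ?_) ?_
  · have hΛ : P.Λ₀ s = P.Λ s + 1 / (1 - s) := by
      rw [P.Λ₀_eq s, hf₀, smul_zero, add_zero, hP]
      simp [evenKernelMulFEPair]
    have hΓ : Complex.Gamma s ≠ 0 := Complex.Gamma_ne_zero_of_re_pos (by linarith)
    have hq2 : (q : ℂ) ^ (-2 * s) = (q : ℂ) ^ (-s) * (q : ℂ) ^ (-s) := by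
      rw [← Complex.cpow_add _ _ hqC]
      ring_nf
    have hE : Real.pi ^ s * q ^ (-2 * s) * (Complex.Gamma s)⁻¹ * ((s - 1) * P.Λ₀ s + 1) / (s - 1) =
        Real.pi ^ s * q ^ (-2 * s) * (Complex.Gamma s)⁻¹ * mellin P.f s := by
      have : 1 - s ≠ 0 := by rwa [← neg_sub, neg_ne_zero]
      rw [hmellin, hΛ]
      field_simp
      ring
    beta_reduce
    rw [hE]
    refine (hsum.mul_left _).congr_fun fun p ↦ ?_
    have h1 : ((gaussianShift q z p).norm : ℂ) =
        (((q : ℝ) * q : ℝ) : ℂ) * (((p.1 + α) ^ 2 + (p.2 + β) ^ 2 : ℝ) : ℂ) := by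
      rw [← Complex.ofReal_intCast, hnorm, ← Complex.ofReal_mul, sq (q : ℝ)]
    rw [h1, Complex.mul_cpow_ofReal_nonneg (by positivity) (hpos p).le, Complex.ofReal_mul,
      Complex.mul_cpow_ofReal_nonneg (by positivity) (by positivity), hq2,
      Complex.cpow_neg (Real.pi : ℂ), Complex.cpow_neg (((p.1 + α) ^ 2 + (p.2 + β) ^ 2 : ℝ) : ℂ),
      Complex.ofReal_natCast]
    have : (Real.pi : ℂ) ^ s ≠ 0 := by simp [Complex.cpow_eq_zero_iff, hπ]
    field_simp
  · have h1 := hasSum_int_evenKernel α ht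
    have h2 := hasSum_int_evenKernel β ht
    have h3 := h1.mul h2 (h1.summable.mul_of_nonneg h2.summable (fun _ ↦ Real.exp_nonneg _)
      fun _ ↦ Real.exp_nonneg _)
    have h4 : P.f t = ((evenKernel α t * evenKernel β t : ℝ) : ℂ) := by
      rw [Complex.ofReal_mul]
      rfl
    rw [h4]
    refine (Complex.hasSum_ofReal.mpr h3).congr_fun fun p ↦ ?_
    rw [one_mul, ← Real.exp_add]
    congr 2
    ring
  · have h1 := ((summable_gaussian_norm_rpow hs).comp_injective
      (gaussianShift_injective q z)).mul_left (((q : ℝ) ^ 2) ^ s.re)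
    refine h1.congr fun p ↦ ?_
    rw [Function.comp_apply, hnorm, Real.mul_rpow (sq_nonneg _) (hpos p).le, ← mul_assoc,
      ← Real.rpow_add (by positivity), add_neg_cancel, Real.rpow_zero, one_mul,
      NormOneClass.norm_one,
      Real.rpow_neg (hpos p).le, one_div]

end GaussianContinuation

section GaussianPeriodic

open Zsqrtd hiding norm_mul norm_natCast

lemma exists_entire_hasSum_gaussianShift_smul (q : ℕ) [NeZero q] {f : GaussianInt → ℂ}
    (hper : ∀ z w, f (z + q * w) = f z) (h0 : f 0 = 0) (z : GaussianInt) :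
    ∃ E : ℂ → ℂ, Differentiable ℂ E ∧ E 1 = f z * (Real.pi / q ^ 2) ∧ E (-1) = 0 ∧
      ∀ s : ℂ, 1 < s.re → HasSum (fun p ↦ f (gaussianShift q z p) *
        ((gaussianShift q z p).norm : ℂ) ^ (-s)) (E s / (s - 1)) := by
  have hshift (p : ℤ × ℤ) : f (gaussianShift q z p) = f z := by
    rw [← hper z ⟨p.1, p.2⟩]
    congr 1
    ext <;> simp [gaussianShift] <;> ring
  by_cases hz : (q : ℤ) ∣ z.re ∧ (q : ℤ) ∣ z.im
  · obtain ⟨⟨a, ha⟩, b, hb⟩ := hz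
    have hfz : f z = 0 := by
      rw [← h0, ← hper 0 ⟨a, b⟩]
      congr 1
      ext <;> simp [ha, hb]
    refine ⟨0, differentiable_const 0, by simp [hfz], rfl, fun s _ ↦ ?_⟩
    simp only [hshift, hfz, zero_mul, Pi.zero_apply, zero_div]
    exact hasSum_zero
  · obtain ⟨E, hE, hE1, hE2, hE3⟩ := exists_entire_hasSum_gaussianShift q z hz
    refine ⟨fun s ↦ f z * E s, hE.const_mul _, by simp [hE1], by simp [hE2], fun s hs ↦ ?_⟩
    simp only [hshift, mul_div_assoc]
    exact (hE3 s hs).mul_left _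

/-- Division with remainder by `q` of both coordinates. -/
def gaussianDivModEquiv (q : ℕ) [NeZero q] : GaussianInt ≃ (Fin q × Fin q) × (ℤ × ℤ) :=
  (gaussianEquivProd.trans ((Int.divModEquiv q).prodCongr (Int.divModEquiv q))).trans
    ((Equiv.prodProdProdComm _ _ _ _).trans (Equiv.prodComm _ _))

lemma gaussianDivModEquiv_symm (q : ℕ) [NeZero q] (x : Fin q × Fin q) (p : ℤ × ℤ) :
    (gaussianDivModEquiv q).symm (x, p) = gaussianShift q ⟨(x.1 : ℕ), (x.2 : ℕ)⟩ p :=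
  rfl

lemma exists_norm_le_of_periodic (q : ℕ) [NeZero q] {f : GaussianInt → ℂ}
    (hper : ∀ z w, f (z + q * w) = f z) : ∃ M, ∀ z, ‖f z‖ ≤ M := by
  refine ⟨∑ x : Fin q × Fin q, ‖f ⟨(x.1 : ℕ), (x.2 : ℕ)⟩‖, fun z ↦ ?_⟩
  obtain ⟨⟨x, p⟩, rfl⟩ := (gaussianDivModEquiv q).symm.surjective z
  have : f ((gaussianDivModEquiv q).symm (x, p)) = f ⟨(x.1 : ℕ), (x.2 : ℕ)⟩ := by
    rw [← hper ⟨(x.1 : ℕ), (x.2 : ℕ)⟩ ⟨p.1, p.2⟩, gaussianDivModEquiv_symm]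
    congr 1
    ext <;> simp [gaussianShift] <;> ring
  rw [this]
  exact Finset.single_le_sum (f := fun x : Fin q × Fin q ↦ ‖f ⟨(x.1 : ℕ), (x.2 : ℕ)⟩‖)
    (fun _ _ ↦ norm_nonneg _) (Finset.mem_univ x)

lemma exists_entire_eqOn_lSeries_gaussianCoeff (q : ℕ) [NeZero q] {f : GaussianInt → ℂ}
    (hper : ∀ z w, f (z + q * w) = f z) (h0 : f 0 = 0) :
    ∃ E : ℂ → ℂ, Differentiable ℂ E ∧
      E 1 = Real.pi / (4 * q ^ 2) * ∑ x : Fin q × Fin q, f ⟨(x.1 : ℕ), (x.2 : ℕ)⟩ ∧ E (-1) = 0 ∧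
      ∀ s : ℂ, 1 < s.re → LSeries (gaussianCoeff f) s = E s / (s - 1) := by
  choose E hE hE1 hE2 hE3 using fun x : Fin q × Fin q ↦
    exists_entire_hasSum_gaussianShift_smul q hper h0 ⟨(x.1 : ℕ), (x.2 : ℕ)⟩
  refine ⟨fun s ↦ (∑ x, E x s) / 4, (Differentiable.fun_sum fun x _ ↦ hE x).div_const 4, ?_, ?_,
    fun s hs ↦ ?_⟩
  · simp only [hE1, ← Finset.sum_mul]
    ring
  · simp [hE2]
  · obtain ⟨M, hM⟩ := exists_norm_le_of_periodic q hper
    have h1 := (summable_gaussian_norm_cpow hM hs).hasSum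
    have h2 := ((gaussianDivModEquiv q).symm.hasSum_iff.mpr h1).prod_fiberwise fun x ↦ hE3 x s hs
    rw [(lSeriesHasSum_gaussianCoeff (by rintro rfl; norm_num at hs) h1).LSeries_eq,
      h2.unique (hasSum_fintype _), ← Finset.sum_div]
    ring

end GaussianPeriodic

section LogarithmicDerivative

open ArithmeticFunction
open scoped ComplexOrder

lemma mul_apply_mul_log {f g u v : ArithmeticFunction ℂ}
    (hf : ∀ n, (f * u) n = f n * Real.log n) (hg : ∀ n, (g * v) n = g n * Real.log n) (n : ℕ) :
    (f * g * (u + v)) n = (f * g) n * Real.log n := by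
  have h1 : f * g * (u + v) = (f * u) * g + f * (g * v) := by ring
  rw [h1, ArithmeticFunction.add_apply, mul_apply, mul_apply, mul_apply, ← Finset.sum_add_distrib,
    Finset.sum_mul]
  refine Finset.sum_congr rfl fun d hd ↦ ?_
  obtain ⟨rfl, h0⟩ := Nat.mem_divisorsAntidiagonal.mp hd
  rw [hf, hg, Nat.cast_mul, Real.log_mul (by exact_mod_cast left_ne_zero_of_mul h0)
    (by exact_mod_cast right_ne_zero_of_mul h0)]
  push_cast
  ring

lemma abscissaOfAbsConv_le_one {f : ℕ → ℂ} (hf : ∀ s : ℂ, 1 < s.re → LSeriesSummable f s) :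
    LSeries.abscissaOfAbsConv f ≤ 1 :=
  LSeries.abscissaOfAbsConv_le_of_forall_lt_LSeriesSummable (x := 1) fun y hy ↦
    hf y (by simpa using hy)

lemma abscissaOfAbsConv_lt_re {f : ℕ → ℂ} (hf : ∀ s : ℂ, 1 < s.re → LSeriesSummable f s) {s : ℂ}
    (hs : 1 < s.re) : LSeries.abscissaOfAbsConv f < s.re :=
  (abscissaOfAbsConv_le_one hf).trans_lt (by exact_mod_cast hs)

lemma differentiableAt_lSeries {f : ℕ → ℂ} (hf : ∀ s : ℂ, 1 < s.re → LSeriesSummable f s) {s : ℂ}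
    (hs : 1 < s.re) : DifferentiableAt ℂ (LSeries f) s :=
  (LSeries_hasDerivAt (abscissaOfAbsConv_lt_re hf hs)).differentiableAt

lemma deriv_lSeries_eq_neg_mul {f u : ArithmeticFunction ℂ}
    (hfu : ∀ n, (f * u) n = f n * Real.log n)
    (hf : ∀ s : ℂ, 1 < s.re → LSeriesSummable f s)
    (hu : ∀ s : ℂ, 1 < s.re → LSeriesSummable u s) {s : ℂ} (hs : 1 < s.re) :
    deriv (LSeries f) s = -(LSeries f s * LSeries u s) := by
  rw [LSeries_deriv (abscissaOfAbsConv_lt_re hf hs), ← LSeries_mul' (hf s hs) (hu s hs)]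
  congr 2
  funext n
  rw [LSeries.logMul, hfu, mul_comm, Complex.natCast_log]

lemma lSeries_ne_zero_of_mul_eq_log {f u : ArithmeticFunction ℂ}
    (hfu : ∀ n, (f * u) n = f n * Real.log n) (hf1 : f 1 = 1) (hu1 : u 1 = 0)
    (hf : ∀ s : ℂ, 1 < s.re → LSeriesSummable f s)
    (hu : ∀ s : ℂ, 1 < s.re → LSeriesSummable u s) {s : ℂ} (hs : 1 < s.re) :
    LSeries f s ≠ 0 := by
  set v : ℕ → ℂ := fun n ↦ u n / Real.log n with hv
  have hvu : LSeries.logMul v = u := by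
    funext n
    rw [LSeries.logMul, hv, ← Complex.natCast_log]
    rcases lt_trichotomy n 1 with h | rfl | h
    · obtain rfl : n = 0 := by lia
      simp
    · simp [hu1]
    · have : (Real.log n : ℂ) ≠ 0 := by
        exact_mod_cast (Real.log_pos (by exact_mod_cast h)).ne'
      field_simp
  have hvs : ∀ s : ℂ, 1 < s.re → LSeriesSummable v s := fun s hs ↦ by
    refine Summable.of_norm_bounded ((hu s hs).norm.mul_left (Real.log 2)⁻¹) fun n ↦ ?_
    rcases lt_trichotomy n 1 with h | rfl | h
    · obtain rfl : n = 0 := by lia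
      simp
    · simp [hv]
      positivity
    · rw [LSeries.term_of_ne_zero (by lia), LSeries.term_of_ne_zero (by lia), hv, norm_div,
        norm_div, norm_div, Complex.norm_real, mul_comm, ← div_eq_mul_inv, div_right_comm]
      have h2 : Real.log 2 ≤ Real.log n := Real.log_le_log two_pos (by exact_mod_cast h)
      have h3 : 0 < Real.log 2 := Real.log_pos one_lt_two
      rw [Real.norm_of_nonneg (h3.le.trans h2)]
      gcongr
  have hderiv {s : ℂ} (hs : 1 < s.re) :
      HasDerivAt (fun z ↦ LSeries f z * Complex.exp (-LSeries v z)) 0 s := by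
    have h1 := (differentiableAt_lSeries hf hs).hasDerivAt
    have h2 := LSeries_hasDerivAt (abscissaOfAbsConv_lt_re hvs hs)
    rw [hvu] at h2
    rw [deriv_lSeries_eq_neg_mul hfu hf hu hs] at h1
    refine (h1.mul h2.neg.cexp).congr_deriv ?_
    ring
  have hopen : IsOpen {s : ℂ | 1 < s.re} := isOpen_lt continuous_const Complex.continuous_re
  intro h0
  refine absurd (LSeries_eventually_eq_zero_iff' (f := f) |>.mp ?_) ?_
  · filter_upwards [eventually_gt_atTop 1] with x hx
    have hx' : 1 < (x : ℂ).re := hx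
    have := hopen.is_const_of_deriv_eq_zero (convex_halfSpace_re_gt 1).isPreconnected
      (fun z hz ↦ (hderiv hz).differentiableAt.differentiableWithinAt)
      (fun z hz ↦ (hderiv hz).deriv) hs hx'
    rw [h0, zero_mul, eq_comm] at this
    exact (mul_eq_zero.mp this).resolve_right (Complex.exp_ne_zero _)
  · rintro (h | h)
    · exact one_ne_zero (hf1.symm.trans (h 1 one_ne_zero))
    · have := abscissaOfAbsConv_le_one hf
      rw [h, top_le_iff] at this
      exact absurd this (by decide)

lemma nonneg_of_mul_eq_log {f u : ArithmeticFunction ℂ}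
    (hfu : ∀ n, (f * u) n = f n * Real.log n) (hf1 : f 1 = 1) (hu1 : u 1 = 0)
    (hu : ∀ n, 0 ≤ u n) (n : ℕ) : 0 ≤ f n := by
  induction n using Nat.strong_induction_on with
  | _ n ih =>
    rcases lt_trichotomy n 1 with h | rfl | h
    · obtain rfl : n = 0 := by lia
      simp
    · rw [hf1]
      exact zero_le_one
    · have hlog : 0 < Real.log n := Real.log_pos (by exact_mod_cast h)
      have h1 : 0 ≤ f n * Real.log n := by
        rw [← hfu, mul_apply]
        refine Finset.sum_nonneg fun d hd ↦ ?_
        obtain ⟨hd, h0⟩ := Nat.mem_divisorsAntidiagonal.mp hd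
        rcases eq_or_ne d.2 1 with h2 | h2
        · rw [h2, hu1, mul_zero]
        · refine mul_nonneg (ih _ ?_) (hu _)
          rw [← hd]
          have h3 : 0 < d.1 := Nat.pos_of_ne_zero fun h ↦ h0 (by rw [← hd, h, zero_mul])
          have h4 : d.2 ≠ 0 := fun h ↦ h0 (by rw [← hd, h, mul_zero])
          exact lt_mul_of_one_lt_right h3 (by lia)
      have h2 : f n = ((Real.log n)⁻¹ : ℝ) * (f n * Real.log n) := by
        have : (Real.log n : ℂ) ≠ 0 := by exact_mod_cast hlog.ne'
        rw [Complex.ofReal_inv]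
        field_simp
      rw [h2]
      exact mul_nonneg (by exact_mod_cast (inv_pos.mpr hlog).le) h1

end LogarithmicDerivative

section GaussianCharacters

open Zsqrtd hiding norm_mul norm_natCast
open ComplexConjugate
open scoped ComplexOrder

/-- The map `z ↦ N z ^ (-it)`. -/
noncomputable def gaussianTwist (t : ℝ) : GaussianInt →* ℂ where
  toFun z := (z.norm : ℂ) ^ (-(t * Complex.I))
  map_one' := by simp
  map_mul' z w := by
    have h (z : GaussianInt) : (0 : ℝ) ≤ z.norm := by exact_mod_cast GaussianInt.norm_nonneg z
    have := Complex.mul_cpow_ofReal_nonneg (h z) (h w) (-(t * Complex.I))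
    rw [Zsqrtd.norm_mul]
    push_cast at this ⊢
    exact this

lemma gaussianTwist_apply (t : ℝ) (z : GaussianInt) :
    gaussianTwist t z = (z.norm : ℂ) ^ (-(t * Complex.I)) :=
  rfl

lemma norm_gaussianTwist_le (t : ℝ) (z : GaussianInt) : ‖gaussianTwist t z‖ ≤ 1 := by
  rw [gaussianTwist_apply]
  rcases eq_or_ne z 0 with rfl | hz
  · rw [norm_zero, Int.cast_zero]
    rcases eq_or_ne (-(t * Complex.I)) 0 with h | h
    · simp [h]
    · simp [Complex.zero_cpow h]
  · have hz0 : (0 : ℝ) < z.norm := by exact_mod_cast one_le_gaussian_norm hz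
    rw [← Complex.ofReal_intCast, Complex.norm_cpow_eq_rpow_re_of_pos hz0]
    simp

/-- Characters of the Gaussian integers that are trivial on units. -/
structure IsUnitTrivialCharacter (ψ : GaussianInt →* ℂ) : Prop where
  map_unit : ∀ u, IsUnit u → ψ u = 1
  norm_le_one : ∀ z, ‖ψ z‖ ≤ 1

lemma IsUnitTrivialCharacter.mul_gaussianTwist {ψ : GaussianInt →* ℂ}
    (hψ : IsUnitTrivialCharacter ψ) (t : ℝ) : IsUnitTrivialCharacter (ψ * gaussianTwist t) where
  map_unit u hu := by
    rw [MonoidHom.mul_apply, hψ.map_unit u hu, gaussianTwist_apply,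
      (norm_eq_one_iff' (by norm_num) u).mpr hu]
    simp
  norm_le_one z := by
    rw [MonoidHom.mul_apply, norm_mul]
    exact mul_le_one₀ (hψ.norm_le_one z) (norm_nonneg _) (norm_gaussianTwist_le t z)

/-- The complex conjugate of a multiplicative map. -/
noncomputable def conjGaussian (ψ : GaussianInt →* ℂ) : GaussianInt →* ℂ :=
  ((starRingEnd ℂ : ℂ →+* ℂ) : ℂ →* ℂ).comp ψ

lemma conjGaussian_apply (ψ : GaussianInt →* ℂ) (z : GaussianInt) :
    conjGaussian ψ z = conj (ψ z) :=
  rfl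

lemma IsUnitTrivialCharacter.conj {ψ : GaussianInt →* ℂ} (hψ : IsUnitTrivialCharacter ψ) :
    IsUnitTrivialCharacter (conjGaussian ψ) where
  map_unit u hu := by rw [conjGaussian_apply, hψ.map_unit u hu, map_one]
  norm_le_one z := by
    rw [conjGaussian_apply, RCLike.norm_conj]
    exact hψ.norm_le_one z

lemma lSeries_gaussianCoeff_mul_gaussianTwist (ψ : GaussianInt →* ℂ) (t : ℝ) (s : ℂ) :
    LSeries (gaussianCoeff (ψ * gaussianTwist t : GaussianInt →* ℂ)) s =
      LSeries (gaussianCoeff ψ) (s + t * Complex.I) := by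
  refine tsum_congr fun n ↦ ?_
  rcases eq_or_ne n 0 with rfl | hn
  · simp
  rw [LSeries.term_of_ne_zero hn, LSeries.term_of_ne_zero hn,
    Complex.cpow_add _ _ (by exact_mod_cast hn), gaussianCoeff_apply _ hn, gaussianCoeff_apply _ hn,
    mul_comm ((n : ℂ) ^ s), ← div_div, div_left_inj' (by simp [Complex.cpow_eq_zero_iff, hn]),
    Finset.sum_div, Finset.sum_div, Finset.sum_div]
  refine Finset.sum_congr rfl fun z hz ↦ ?_
  rw [MonoidHom.mul_apply, gaussianTwist_apply, mem_normFiber.mp hz, Complex.cpow_neg,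
    ← div_eq_mul_inv, Int.cast_natCast, div_right_comm]

lemma lSeries_gaussianCoeff_conjGaussian (ψ : GaussianInt →* ℂ) (s : ℂ) :
    LSeries (gaussianCoeff (conjGaussian ψ)) s = conj (LSeries (gaussianCoeff ψ) (conj s)) := by
  rw [LSeries, LSeries, Complex.conj_tsum]
  refine tsum_congr fun n ↦ ?_
  rcases eq_or_ne n 0 with rfl | hn
  · simp
  rw [LSeries.term_of_ne_zero hn, LSeries.term_of_ne_zero hn, map_div₀, gaussianCoeff_apply _ hn,
    gaussianCoeff_apply _ hn, map_div₀, map_sum,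
      Complex.cpow_conj _ _ (by simp [Real.pi_ne_zero.symm]),
    Complex.conj_conj, Complex.conj_natCast,
    show conj (4 : ℂ) = 4 from Complex.conj_ofNat 4]
  simp [conjGaussian_apply]

lemma not_exists_entire_extension {ψ ψ₁ : GaussianInt →* ℂ} (hψ : IsUnitTrivialCharacter ψ)
    (hψ₁ : IsUnitTrivialCharacter ψ₁) (h : ∀ z, ψ₁ z = ‖ψ z‖) (t : ℝ) {F : ℂ → ℂ}
    (hF : Differentiable ℂ F) (hF1 : F (-1) = 0)
    (hFL : ∀ s : ℂ, 1 < s.re → F s = LSeries (gaussianCoeff ψ₁) s ^ 2 *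
      (LSeries (gaussianCoeff ψ) (s + t * Complex.I) *
        conj (LSeries (gaussianCoeff ψ) (conj s + t * Complex.I)))) : False := by
  set φ := ψ * gaussianTwist t with hφ_def
  have hφ : IsUnitTrivialCharacter φ := hψ.mul_gaussianTwist t
  set a := (gaussianCoeff ψ₁ * gaussianCoeff ψ₁) * (gaussianCoeff φ *
    gaussianCoeff (conjGaussian φ)) with ha
  set b := (gaussianMangoldtCoeff ψ₁ + gaussianMangoldtCoeff ψ₁) + (gaussianMangoldtCoeff φ +
    gaussianMangoldtCoeff (conjGaussian φ)) with hb
  have hab : ∀ n, (a * b) n = a n * Real.log n :=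
    mul_apply_mul_log (mul_apply_mul_log (gaussianCoeff_mul_gaussianMangoldtCoeff _)
      (gaussianCoeff_mul_gaussianMangoldtCoeff _)) (mul_apply_mul_log
      (gaussianCoeff_mul_gaussianMangoldtCoeff _) (gaussianCoeff_mul_gaussianMangoldtCoeff _))
  have ha1 : a 1 = 1 := by
    simp only [ha, ArithmeticFunction.mul_apply_one, gaussianCoeff_one hψ₁.map_unit,
      gaussianCoeff_one hφ.map_unit, gaussianCoeff_one hφ.conj.map_unit, mul_one]
  have hb1 : b 1 = 0 := by
    simp [hb, ArithmeticFunction.add_apply, gaussianMangoldtCoeff_one]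
  have hb0 (n : ℕ) : 0 ≤ b n := by
    rcases eq_or_ne n 0 with rfl | hn
    · simp
    simp only [hb, ArithmeticFunction.add_apply, gaussianMangoldtCoeff, gaussianCoeff_apply _ hn,
      ← add_div, ← Finset.sum_add_distrib]
    refine div_nonneg (Finset.sum_nonneg fun z _ ↦ ?_) (by norm_num)
    have h1 : ψ₁ z * gaussianMangoldt z + ψ₁ z * gaussianMangoldt z + (φ z * gaussianMangoldt z +
        conjGaussian φ z * gaussianMangoldt z) =
        ((2 * (‖ψ z‖ + (φ z).re) * gaussianMangoldt z : ℝ) : ℂ) := by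
      rw [h, conjGaussian_apply, ← add_mul, ← add_mul, ← add_mul, Complex.add_conj]
      push_cast
      ring
    rw [h1]
    have h2 : -‖ψ z‖ ≤ (φ z).re := by
      refine (neg_le_neg ?_).trans (neg_le_of_abs_le (Complex.abs_re_le_norm _))
      rw [hφ_def, MonoidHom.mul_apply, norm_mul]
      exact mul_le_of_le_one_right (norm_nonneg _) (norm_gaussianTwist_le t z)
    exact_mod_cast mul_nonneg (by linarith) (gaussianMangoldt_nonneg z)
  have ha0 : (0 : ℕ → ℂ) ≤ a := nonneg_of_mul_eq_log hab ha1 hb1 hb0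
  have hs1 (s : ℂ) (hs : 1 < s.re) := lSeriesSummable_gaussianCoeff hψ₁.norm_le_one hs
  have hsφ (s : ℂ) (hs : 1 < s.re) := lSeriesSummable_gaussianCoeff hφ.norm_le_one hs
  have hsc (s : ℂ) (hs : 1 < s.re) := lSeriesSummable_gaussianCoeff hφ.conj.norm_le_one hs
  have hsa (s : ℂ) (hs : 1 < s.re) : LSeriesSummable a s :=
    ArithmeticFunction.LSeriesSummable_mul (ArithmeticFunction.LSeriesSummable_mul (hs1 s hs)
      (hs1 s hs)) (ArithmeticFunction.LSeriesSummable_mul (hsφ s hs) (hsc s hs))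
  have hL (s : ℂ) (hs : 1 < s.re) : F s = LSeries a s := by
    rw [ha, ArithmeticFunction.LSeries_mul' (ArithmeticFunction.LSeriesSummable_mul (hs1 s hs)
      (hs1 s hs)) (ArithmeticFunction.LSeriesSummable_mul (hsφ s hs) (hsc s hs)),
      ArithmeticFunction.LSeries_mul' (hs1 s hs) (hs1 s hs),
      ArithmeticFunction.LSeries_mul' (hsφ s hs) (hsc s hs), hFL s hs,
      lSeries_gaussianCoeff_conjGaussian, lSeries_gaussianCoeff_mul_gaussianTwist,
      lSeries_gaussianCoeff_mul_gaussianTwist, sq]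
  have := LSeries.positive_of_differentiable_of_eqOn ha0 (by rw [ha1]; exact one_pos) hF (x := 1)
    (abscissaOfAbsConv_le_one hsa) (fun s hs ↦ hL s hs) (-1)
  rw [Complex.ofReal_neg, Complex.ofReal_one, hF1] at this
  exact lt_irrefl _ this

end GaussianCharacters

section GaussianNonvanishing

open ComplexConjugate

/-- Characters of the Gaussian integers modulo `q` that are trivial on units. -/
structure IsRayCharacter (q : ℕ) (ψ : GaussianInt →* ℂ) : Prop
    extends IsUnitTrivialCharacter ψ where
  periodic : ∀ z w, ψ (z + q * w) = ψ z
  map_zero : ψ 0 = 0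

lemma Differentiable.dslope_of_complex {f : ℂ → ℂ} (hf : Differentiable ℂ f) (c : ℂ) :
    Differentiable ℂ (dslope f c) :=
  differentiableOn_univ.mp ((Complex.differentiableOn_dslope univ_mem).mpr hf.differentiableOn)

lemma Differentiable.conj_comp_conj {f : ℂ → ℂ} (hf : Differentiable ℂ f) :
    Differentiable ℂ fun s ↦ conj (f (conj s)) := fun s ↦ by
  simpa [Function.comp_def] using (hf (conj s)).conj_conj

lemma dslope_eq_div {f : ℂ → ℂ} {c s : ℂ} (hc : f c = 0) (hs : s ≠ c) :
    dslope f c s = f s / (s - c) := by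
  rw [dslope_of_ne _ hs, slope_def_field, hc, sub_zero]

lemma ne_of_one_lt_re {s : ℂ} (hs : 1 < s.re) {c : ℂ} (hc : c.re ≤ 1) : s ≠ c := by
  rintro rfl
  exact absurd hs (not_lt.mpr hc)

lemma lSeries_gaussianCoeff_ne_zero {ψ : GaussianInt →* ℂ} (hψ : IsUnitTrivialCharacter ψ) {s : ℂ}
    (hs : 1 < s.re) : LSeries (gaussianCoeff ψ) s ≠ 0 :=
  lSeries_ne_zero_of_mul_eq_log (gaussianCoeff_mul_gaussianMangoldtCoeff ψ)
    (gaussianCoeff_one hψ.map_unit) (gaussianMangoldtCoeff_one _)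
    (fun _ ↦ lSeriesSummable_gaussianCoeff hψ.norm_le_one)
    (fun _ ↦ lSeriesSummable_gaussianMangoldtCoeff hψ.norm_le_one) hs

lemma lSeries_gaussianMangoldtCoeff_eq {ψ : GaussianInt →* ℂ} (hψ : IsUnitTrivialCharacter ψ)
    {s : ℂ} (hs : 1 < s.re) : LSeries (gaussianMangoldtCoeff ψ) s =
      -deriv (LSeries (gaussianCoeff ψ)) s / LSeries (gaussianCoeff ψ) s := by
  rw [deriv_lSeries_eq_neg_mul (gaussianCoeff_mul_gaussianMangoldtCoeff ψ)
    (fun _ ↦ lSeriesSummable_gaussianCoeff hψ.norm_le_one)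
    (fun _ ↦ lSeriesSummable_gaussianMangoldtCoeff hψ.norm_le_one) hs, neg_neg,
    mul_div_cancel_left₀ _ (lSeries_gaussianCoeff_ne_zero hψ hs)]

lemma eq_one_add_mul_I {s : ℂ} (hs : s.re = 1) : s = 1 + s.im * Complex.I := by
  conv_lhs => rw [← Complex.re_add_im s, hs, Complex.ofReal_one]

lemma eventuallyEq_of_eqOn_one_lt_re {f g : ℂ → ℂ} (h : ∀ s : ℂ, 1 < s.re → f s = g s) {s : ℂ}
    (hs : 1 < s.re) : f =ᶠ[nhds s] g :=
  Filter.eventuallyEq_of_mem ((isOpen_lt continuous_const Complex.continuous_re).mem_nhds hs)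
    fun z hz ↦ h z hz

lemma exists_continuousOn_of_nonprincipal {q : ℕ} [NeZero q] {ψ ψ₁ : GaussianInt →* ℂ}
    (hψ : IsRayCharacter q ψ) (hψ₁ : IsRayCharacter q ψ₁) (h : ∀ z, ψ₁ z = ‖ψ z‖)
    (hsum : ∑ x : Fin q × Fin q, ψ ⟨(x.1 : ℕ), (x.2 : ℕ)⟩ = 0) :
    ∃ G : ℂ → ℂ, ContinuousOn G {s | 1 ≤ s.re} ∧
      ∀ s, 1 < s.re → LSeries (gaussianMangoldtCoeff ψ) s = G s := by
  obtain ⟨E, hE, hE1, -, hEL⟩ := exists_entire_eqOn_lSeries_gaussianCoeff q hψ.periodic hψ.map_zero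
  obtain ⟨E₁, hE₁, -, hE₁0, hE₁L⟩ :=
    exists_entire_eqOn_lSeries_gaussianCoeff q hψ₁.periodic hψ₁.map_zero
  rw [hsum, mul_zero] at hE1
  set M := dslope E 1 with hM_def
  have hM : Differentiable ℂ M := hE.dslope_of_complex 1
  have hML (s : ℂ) (hs : 1 < s.re) : LSeries (gaussianCoeff ψ) s = M s := by
    rw [hEL s hs, hM_def, dslope_eq_div hE1 (ne_of_one_lt_re hs (by simp))]
  have hM0 (s : ℂ) (hs : 1 ≤ s.re) : M s ≠ 0 := by
    intro h0
    rcases hs.lt_or_eq with hs | hs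
    · exact lSeries_gaussianCoeff_ne_zero hψ.toIsUnitTrivialCharacter hs (by rw [hML s hs, h0])
    rw [eq_one_add_mul_I hs.symm] at h0
    set t := s.im
    set U := dslope (fun s ↦ M (s + t * Complex.I)) 1 with hU_def
    have hU : Differentiable ℂ U :=
      Differentiable.dslope_of_complex (hM.comp (differentiable_id.add_const _)) 1
    refine not_exists_entire_extension hψ.toIsUnitTrivialCharacter hψ₁.toIsUnitTrivialCharacter h t
      (F := fun s ↦ E₁ s ^ 2 * (U s * conj (U (conj s))))
      ((hE₁.pow 2).mul (hU.mul hU.conj_comp_conj)) (by simp [hE₁0]) fun s hs ↦ ?_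
    have hs1 : s ≠ 1 := ne_of_one_lt_re hs (by simp)
    have hUL (s : ℂ) (hs : 1 < s.re) :
        U s = LSeries (gaussianCoeff ψ) (s + t * Complex.I) / (s - 1) := by
      rw [hML _ (by simpa using hs), hU_def, dslope_eq_div (f := fun s ↦ M (s + t * Complex.I)) h0
        (ne_of_one_lt_re hs (by simp))]
    rw [hUL s hs, hUL (conj s) (by simpa using hs), hE₁L s hs, map_div₀, map_sub, Complex.conj_conj,
      map_one]
    field_simp [sub_ne_zero.mpr hs1]
  refine ⟨fun s ↦ -deriv M s / M s, ?_, fun s hs ↦ ?_⟩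
  · exact ((hM.contDiff.continuous_deriv le_rfl).neg.continuousOn).div
      hM.continuous.continuousOn hM0
  · rw [lSeries_gaussianMangoldtCoeff_eq hψ.toIsUnitTrivialCharacter hs,
      (eventuallyEq_of_eqOn_one_lt_re hML hs).deriv_eq, hML s hs]

lemma exists_continuousOn_of_principal {q : ℕ} [NeZero q] {ψ : GaussianInt →* ℂ}
    (hψ : IsRayCharacter q ψ) (h : ∀ z, ψ z = ‖ψ z‖)
    (hsum : ∑ x : Fin q × Fin q, ψ ⟨(x.1 : ℕ), (x.2 : ℕ)⟩ ≠ 0) :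
    ∃ G : ℂ → ℂ, ContinuousOn G {s | 1 ≤ s.re} ∧
      ∀ s, 1 < s.re → LSeries (gaussianMangoldtCoeff ψ) s - 1 / (s - 1) = G s := by
  obtain ⟨E, hE, hE1, hE0, hEL⟩ :=
    exists_entire_eqOn_lSeries_gaussianCoeff q hψ.periodic hψ.map_zero
  have hE1' : E 1 ≠ 0 := by
    have hq : (q : ℂ) ≠ 0 := by exact_mod_cast NeZero.ne q
    have hπ : (Real.pi : ℂ) ≠ 0 := by exact_mod_cast Real.pi_ne_zero
    rw [hE1]
    exact mul_ne_zero (div_ne_zero hπ (by simpa using hq)) hsum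
  have hEne (s : ℂ) (hs : 1 ≤ s.re) : E s ≠ 0 := by
    intro h0
    rcases hs.lt_or_eq with hs | hs
    · exact lSeries_gaussianCoeff_ne_zero hψ.toIsUnitTrivialCharacter hs
        (by rw [hEL s hs, h0, zero_div])
    rw [eq_one_add_mul_I hs.symm] at h0
    set t := s.im
    have ht : (t : ℂ) * Complex.I ≠ 0 := by
      intro ht
      rw [ht, add_zero] at h0
      exact hE1' h0
    set U := dslope E (1 + t * Complex.I) with hU_def
    have hU : Differentiable ℂ U := hE.dslope_of_complex _
    have hUE (s : ℂ) (hs : s ≠ 1 + t * Complex.I) : U s = E s / (s - (1 + t * Complex.I)) :=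
      dslope_eq_div h0 hs
    have hU0 : U (-1) = 0 := by
      rw [hUE _ (fun h ↦ by norm_num [Complex.ext_iff] at h), hE0, zero_div]
    refine not_exists_entire_extension hψ.toIsUnitTrivialCharacter hψ.toIsUnitTrivialCharacter h t
      (F := fun s ↦ (U s * conj (U (conj s))) * (U (s + t * Complex.I) *
        conj (U (conj s + t * Complex.I))))
      ((hU.mul hU.conj_comp_conj).mul ((hU.comp (differentiable_id.add_const _)).mul ?_))
      (by simp [hU0]) fun s hs ↦ ?_
    · have := (hU.comp (differentiable_id.add_const (t * Complex.I))).conj_comp_conj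
      simpa [Function.comp_def] using this
    have hre : (conj s).re = s.re := Complex.conj_re s
    have hne (u : ℝ) : s - (1 + u * Complex.I) ≠ 0 := sub_ne_zero.mpr (ne_of_one_lt_re hs (by simp))
    have hψc : conjGaussian ψ = ψ := MonoidHom.ext fun z ↦ by
      rw [conjGaussian_apply, h z, Complex.conj_ofReal]
    have hEc : conj (E (conj s)) = E s := by
      have h1 := lSeries_gaussianCoeff_conjGaussian ψ s
      rw [hψc, hEL s hs, hEL (conj s) (hre ▸ hs), map_div₀, map_sub, Complex.conj_conj,
        map_one] at h1
      exact ((div_left_inj' (sub_ne_zero.mpr (ne_of_one_lt_re hs (by simp)))).mp h1).symm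
    have h0 := hne 0
    have h1 := hne t
    have h2 := hne (-t)
    simp only [Complex.ofReal_zero, Complex.ofReal_neg] at h0 h1 h2
    have hs' (z : ℂ) (u : ℝ) (hz : z.re = s.re) : 1 < (z + u * Complex.I).re := by simpa [hz]
    rw [hUE s (ne_of_one_lt_re hs (by simp)), hUE (conj s) (ne_of_one_lt_re (hre ▸ hs) (by simp)),
      hUE _ (ne_of_one_lt_re (hs' s t rfl) (by simp)),
      hUE _ (ne_of_one_lt_re (hs' (conj s) t hre) (by simp)), hEL s hs, hEL _ (hs' s t rfl),
      hEL _ (hs' (conj s) t hre)]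
    simp only [map_div₀, map_sub, map_add, map_mul, map_one, Complex.conj_conj, Complex.conj_ofReal,
      Complex.conj_I, hEc]
    have e1 : s + t * Complex.I - 1 = s - (1 + -t * Complex.I) := by ring
    have e2 : s + t * -Complex.I - 1 = s - (1 + t * Complex.I) := by ring
    have e3 : s - (1 + t * -Complex.I) = s - (1 + -t * Complex.I) := by ring
    have e4 : s + t * Complex.I - (1 + t * Complex.I) = s - (1 + 0 * Complex.I) := by ring
    have e5 : s + t * -Complex.I - (1 + t * -Complex.I) = s - (1 + 0 * Complex.I) := by ring
    have e6 : s - 1 = s - (1 + 0 * Complex.I) := by ring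
    rw [e1, e2, e3, e4, e5, e6]
    field_simp
  refine ⟨fun s ↦ -deriv E s / E s, ?_, fun s hs ↦ ?_⟩
  · exact ((hE.contDiff.continuous_deriv le_rfl).neg.continuousOn).div
      hE.continuous.continuousOn hEne
  · have hs1 : s - 1 ≠ 0 := sub_ne_zero.mpr (ne_of_one_lt_re hs (by simp))
    rw [lSeries_gaussianMangoldtCoeff_eq hψ.toIsUnitTrivialCharacter hs,
      (eventuallyEq_of_eqOn_one_lt_re hEL hs).deriv_eq, hEL s hs]
    have h2 : HasDerivAt (fun s ↦ E s / (s - 1)) ((deriv E s * (s - 1) - E s) / (s - 1) ^ 2) s :=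
      ((hE s).hasDerivAt.div ((hasDerivAt_id s).sub_const 1) hs1).congr_deriv (by simp)
    have := hEne s hs.le
    rw [h2.deriv]
    field_simp
    ring

end GaussianNonvanishing

section RayClassGroup

open QuadraticAlgebra

/-- The Gaussian integers modulo `q`. -/
abbrev GaussianMod (q : ℕ) : Type := QuadraticAlgebra (ZMod q) (-1) 0

variable {q : ℕ}

instance [NeZero q] : Finite (GaussianMod q) := Finite.of_equiv _ (equivProd _ _).symm

/-- Reduction of Gaussian integers modulo `q`. -/
def gaussianReduction (q : ℕ) : GaussianInt →* GaussianMod q where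
  toFun z := ⟨z.re, z.im⟩
  map_one' := by ext <;> simp
  map_mul' z w := by ext <;> simp [add_comm]

lemma gaussianReduction_apply (z : GaussianInt) : gaussianReduction q z = ⟨z.re, z.im⟩ := rfl

lemma bijective_gaussianMod_mk [NeZero q] :
    Function.Bijective fun x : Fin q × Fin q ↦ (⟨(x.1 : ℕ), (x.2 : ℕ)⟩ : GaussianMod q) := by
  have : Nat.card (Fin q × Fin q) = Nat.card (GaussianMod q) := by
    rw [Nat.card_congr (equivProd (-1 : ZMod q) 0)]
    simp
  refine (Nat.bijective_iff_injective_and_card _).mpr ⟨fun x y h ↦ ?_, this⟩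
  have cast_inj (a b : Fin q) (h : ((a : ℕ) : ZMod q) = (b : ℕ)) : a = b := by
    rw [ZMod.natCast_eq_natCast_iff', Nat.mod_eq_of_lt a.2, Nat.mod_eq_of_lt b.2] at h
    exact Fin.ext h
  exact Prod.ext (cast_inj _ _ (congrArg QuadraticAlgebra.re h))
    (cast_inj _ _ (congrArg QuadraticAlgebra.im h))

/-- Units of the Gaussian integers modulo `q` which are real or purely imaginary. -/
def axisUnits (q : ℕ) : Subgroup (GaussianMod q)ˣ where
  carrier := {u | u.1.re = 0 ∨ u.1.im = 0}
  one_mem' := by simp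
  mul_mem' {u v} hu hv := by
    simp only [Set.mem_ofPred_eq, Units.val_mul, re_mul, im_mul] at *
    rcases hu with hu | hu <;> rcases hv with hv | hv <;> simp [hu, hv]
  inv_mem' {u} hu := by
    have hre := congrArg QuadraticAlgebra.re u.inv_mul
    have him := congrArg QuadraticAlgebra.im u.inv_mul
    simp only [Set.mem_ofPred_eq, re_mul, im_mul, re_one, im_one] at *
    rcases hu with hu | hu
    · simp only [hu, mul_zero, zero_mul, add_zero, zero_add] at hre him
      exact Or.inl (by grind)
    · simp only [hu, mul_zero, zero_mul, add_zero, zero_add] at hre him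
      exact Or.inr (by grind)

lemma mem_axisUnits {u : (GaussianMod q)ˣ} : u ∈ axisUnits q ↔ u.1.re = 0 ∨ u.1.im = 0 := Iff.rfl

/-- The ray class group modulo `q` of the Gaussian integers, modulo rational residues. -/
abbrev RingClassGroup (q : ℕ) : Type := (GaussianMod q)ˣ ⧸ axisUnits q

/-- The multiplicative map on the Gaussian integers attached to a ring class character. -/
noncomputable def ringClassMulChar (χ : RingClassGroup q →* ℂˣ) : MulChar (GaussianMod q) ℂ :=
  MulChar.ofUnitHom (χ.comp (QuotientGroup.mk' (axisUnits q)))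

/-- The multiplicative map on the Gaussian integers attached to a ring class character. -/
noncomputable def ringClassCharacter (χ : RingClassGroup q →* ℂˣ) : GaussianInt →* ℂ :=
  (ringClassMulChar χ).toMonoidHom.comp (gaussianReduction q)

lemma ringClassCharacter_apply (χ : RingClassGroup q →* ℂˣ) (z : GaussianInt) :
    ringClassCharacter χ z = ringClassMulChar χ (gaussianReduction q z) := rfl

lemma ringClassMulChar_coe (χ : RingClassGroup q →* ℂˣ) (u : (GaussianMod q)ˣ) :
    ringClassMulChar χ u = χ u :=
  MulChar.ofUnitHom_coe _ _

lemma ringClassCharacter_of_unit (χ : RingClassGroup q →* ℂˣ) {z : GaussianInt}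
    {u : (GaussianMod q)ˣ} (h : (u : GaussianMod q) = gaussianReduction q z) :
    ringClassCharacter χ z = χ u := by
  rw [ringClassCharacter_apply, ← h, ringClassMulChar_coe]

lemma ringClassCharacter_of_not_isUnit (χ : RingClassGroup q →* ℂˣ) {z : GaussianInt}
    (h : ¬ IsUnit (gaussianReduction q z)) : ringClassCharacter χ z = 0 :=
  MulChar.map_nonunit (ringClassMulChar χ) h

lemma norm_ringClassCharacter_apply_unit [NeZero q] (χ : RingClassGroup q →* ℂˣ)
    (x : RingClassGroup q) : ‖(χ x : ℂ)‖ = 1 := by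
  have : Finite (RingClassGroup q) := inferInstance
  refine Complex.norm_eq_one_of_pow_eq_one (n := Nat.card (RingClassGroup q)) ?_ Nat.card_pos.ne'
  rw [← Units.val_pow_eq_pow_val, ← map_pow, pow_card_eq_one', map_one, Units.val_one]

lemma norm_ringClassCharacter [NeZero q] (χ : RingClassGroup q →* ℂˣ) (z : GaussianInt) :
    ringClassCharacter (1 : RingClassGroup q →* ℂˣ) z = ‖ringClassCharacter χ z‖ := by
  by_cases h : IsUnit (gaussianReduction q z)
  · obtain ⟨u, hu⟩ := h
    rw [ringClassCharacter_of_unit _ hu, ringClassCharacter_of_unit _ hu,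
      norm_ringClassCharacter_apply_unit]
    simp
  · rw [ringClassCharacter_of_not_isUnit _ h, ringClassCharacter_of_not_isUnit _ h]
    simp

lemma isRayCharacter_ringClassCharacter (hq : 1 < q) (χ : RingClassGroup q →* ℂˣ) :
    IsRayCharacter q (ringClassCharacter χ) where
  map_unit z hz := by
    have h := hz.map (gaussianReduction q)
    obtain ⟨u, hu⟩ := h
    rw [ringClassCharacter_of_unit _ hu, (QuotientGroup.eq_one_iff u).mpr, map_one, Units.val_one]
    rw [mem_axisUnits, hu, gaussianReduction_apply]
    have h1 : z.norm = 1 := (Zsqrtd.norm_eq_one_iff' (by norm_num) z).mpr hz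
    rw [Zsqrtd.norm_def] at h1
    have h2 : z.re = 0 ∨ z.im = 0 := by
      by_contra! h0
      have := Int.one_le_abs h0.1
      have := Int.one_le_abs h0.2
      nlinarith [sq_abs z.re, sq_abs z.im]
    rcases h2 with h | h <;> simp [h]
  norm_le_one z := by
    have : NeZero q := ⟨by lia⟩
    by_cases h : IsUnit (gaussianReduction q z)
    · obtain ⟨u, hu⟩ := h
      rw [ringClassCharacter_of_unit _ hu, norm_ringClassCharacter_apply_unit]
    · rw [ringClassCharacter_of_not_isUnit _ h]
      simp
  periodic z w := by
    have : gaussianReduction q (z + q * w) = gaussianReduction q z := by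
      ext <;> simp [gaussianReduction_apply]
    rw [ringClassCharacter_apply, this, ← ringClassCharacter_apply]
  map_zero := by
    have : Fact (1 < q) := ⟨hq⟩
    have h : gaussianReduction q 0 = 0 := by ext <;> simp [gaussianReduction_apply]
    rw [ringClassCharacter_apply, h, MulChar.map_zero]

lemma sum_ringClassCharacter [NeZero q] [Fintype (GaussianMod q)] (χ : RingClassGroup q →* ℂˣ) :
    ∑ x : Fin q × Fin q, ringClassCharacter χ ⟨(x.1 : ℕ), (x.2 : ℕ)⟩ =
      ∑ x, ringClassMulChar χ x := by
  rw [← bijective_gaussianMod_mk.sum_comp]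
  refine Finset.sum_congr rfl fun x _ ↦ ?_
  rw [ringClassCharacter_apply]
  congr 1
  ext <;> simp [gaussianReduction_apply]

lemma ringClassMulChar_one : ringClassMulChar (1 : RingClassGroup q →* ℂˣ) = 1 := by
  ext u
  rw [ringClassMulChar_coe, MulChar.one_apply_coe]
  simp

lemma ringClassMulChar_ne_one {χ : RingClassGroup q →* ℂˣ} (hχ : χ ≠ 1) :
    ringClassMulChar χ ≠ 1 := by
  contrapose! hχ
  ext u
  rw [MonoidHom.comp_apply, QuotientGroup.mk'_apply, ← ringClassMulChar_coe, hχ,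
    MulChar.one_apply_coe]
  simp

lemma sum_ringClassCharacter_of_ne_one [NeZero q] {χ : RingClassGroup q →* ℂˣ} (hχ : χ ≠ 1) :
    ∑ x : Fin q × Fin q, ringClassCharacter χ ⟨(x.1 : ℕ), (x.2 : ℕ)⟩ = 0 := by
  have := Fintype.ofFinite (GaussianMod q)
  rw [sum_ringClassCharacter, MulChar.sum_eq_zero_of_ne_one (ringClassMulChar_ne_one hχ)]

lemma sum_ringClassCharacter_one_ne_zero [NeZero q] :
    ∑ x : Fin q × Fin q,
      ringClassCharacter (1 : RingClassGroup q →* ℂˣ) ⟨(x.1 : ℕ), (x.2 : ℕ)⟩ ≠ 0 := by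
  have := Fintype.ofFinite (GaussianMod q)
  classical
  rw [sum_ringClassCharacter, ringClassMulChar_one, MulChar.sum_one_eq_card_units]
  exact_mod_cast Fintype.card_ne_zero

lemma exists_continuousOn_ringClassCharacter (hq : 1 < q) (χ : RingClassGroup q →* ℂˣ)
    [Decidable (χ = 1)] :
    ∃ G : ℂ → ℂ, ContinuousOn G {s | 1 ≤ s.re} ∧ ∀ s, 1 < s.re →
      LSeries (gaussianMangoldtCoeff (ringClassCharacter χ)) s -
        (if χ = 1 then 1 else 0) / (s - 1) = G s := by
  have : NeZero q := ⟨by lia⟩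
  have h := isRayCharacter_ringClassCharacter hq χ
  split_ifs with hχ
  · subst hχ
    exact exists_continuousOn_of_principal h (norm_ringClassCharacter 1)
      sum_ringClassCharacter_one_ne_zero
  · obtain ⟨G, hG, hGL⟩ := exists_continuousOn_of_nonprincipal h
      (isRayCharacter_ringClassCharacter hq 1) (norm_ringClassCharacter χ)
      (sum_ringClassCharacter_of_ne_one hχ)
    exact ⟨G, hG, fun s hs ↦ by rw [zero_div, sub_zero, hGL s hs]⟩

end RayClassGroup

section RingClassCharacters

open QuadraticAlgebra

lemma sum_monoidHom_apply_eq_ite {G : Type*} [CommGroup G] [Finite G] [Fintype (G →* ℂˣ)] (x : G)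
    [Decidable (x = 1)] :
    ∑ χ : G →* ℂˣ, (χ x : ℂ) = if x = 1 then (Nat.card G : ℂ) else 0 := by
  split_ifs with hx
  · simp only [hx, map_one, Units.val_one, Finset.sum_const, Finset.card_univ, nsmul_eq_mul,
      mul_one]
    rw [← Nat.card_eq_fintype_card,
      Nat.card_congr (CommGroup.monoidHom_mulEquiv_of_hasEnoughRootsOfUnity G ℂ).some.toEquiv]
  · obtain ⟨χ₀, hχ₀⟩ := CommGroup.exists_apply_ne_one_of_hasEnoughRootsOfUnity G ℂ hx
    refine eq_zero_of_mul_eq_self_left (b := (χ₀ x : ℂ)) (by simpa using hχ₀) ?_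
    rw [Finset.mul_sum]
    exact Fintype.sum_equiv (Equiv.mulLeft χ₀) _ _ fun χ ↦ by simp

lemma finite_monoidHom_units_complex {G : Type*} [CommGroup G] [Finite G] : Finite (G →* ℂˣ) :=
  Finite.of_equiv _ (CommGroup.monoidHom_mulEquiv_of_hasEnoughRootsOfUnity G ℂ).some.toEquiv.symm

variable {q : ℕ}

lemma isUnit_gaussianReduction {z : GaussianInt} (h : IsUnit (z.norm : ZMod q)) :
    IsUnit (gaussianReduction q z) := by
  have h1 : gaussianReduction q (z * star z) = algebraMap (ZMod q) _ (z.norm : ZMod q) := by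
    rw [← Zsqrtd.norm_eq_mul_conj, gaussianReduction_apply]
    ext <;> simp
  rw [map_mul] at h1
  exact isUnit_of_mul_isUnit_left (h1 ▸ h.map _)

open scoped Classical in
/-- The indicator function of the Gaussian integers coprime to `q` which are congruent to a
rational integer or a multiple of `i` modulo `q`. -/
noncomputable def axisIndicator (q : ℕ) (z : GaussianInt) : ℝ :=
  if IsUnit (gaussianReduction q z) ∧ ((q : ℤ) ∣ z.re ∨ (q : ℤ) ∣ z.im) then 1 else 0

lemma axisIndicator_nonneg (z : GaussianInt) : 0 ≤ axisIndicator q z := by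
  unfold axisIndicator
  split_ifs <;> simp

lemma axisIndicator_le_one (z : GaussianInt) : axisIndicator q z ≤ 1 := by
  unfold axisIndicator
  split_ifs <;> simp

lemma sum_ringClassCharacter_apply [NeZero q] [Fintype (RingClassGroup q →* ℂˣ)] (z : GaussianInt) :
    ∑ χ : RingClassGroup q →* ℂˣ, ringClassCharacter χ z =
      Nat.card (RingClassGroup q) * axisIndicator q z := by
  classical
  rw [axisIndicator]
  by_cases h : IsUnit (gaussianReduction q z)
  · obtain ⟨u, hu⟩ := h
    simp only [ringClassCharacter_of_unit _ hu]
    rw [sum_monoidHom_apply_eq_ite (u : RingClassGroup q), ← hu]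
    have : (u : RingClassGroup q) = 1 ↔ ((q : ℤ) ∣ z.re ∨ (q : ℤ) ∣ z.im) := by
      rw [QuotientGroup.eq_one_iff, mem_axisUnits, hu, gaussianReduction_apply,
        ← ZMod.intCast_zmod_eq_zero_iff_dvd, ← ZMod.intCast_zmod_eq_zero_iff_dvd]
    simp only [this, u.isUnit, true_and]
    split_ifs <;> simp
  · simp [ringClassCharacter_of_not_isUnit _ h, h]

lemma ZMod.exists_fin_two_mul_eq {n : ℕ} (y : ZMod (2 ^ (n + 1))) :
    ∃ j : Fin (2 ^ n), 2 * y = 2 * (j : ℕ) := by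
  refine ⟨⟨y.val % 2 ^ n, Nat.mod_lt _ (by positivity)⟩, ?_⟩
  have h : ((2 * y.val : ℕ) : ZMod (2 ^ (n + 1))) = (2 * (y.val % 2 ^ n) : ℕ) := by
    rw [ZMod.natCast_eq_natCast_iff]
    have := (Nat.mod_modEq y.val (2 ^ n)).symm.mul_left' 2
    rwa [← pow_succ'] at this
  simpa using h

lemma ZMod.eq_two_mul_or_eq_two_mul_add_one {n : ℕ} (x : ZMod (2 ^ (n + 1))) :
    (∃ y, x = 2 * y) ∨ ∃ y, x = 2 * y + 1 := by
  rcases Nat.even_or_odd' x.val with ⟨y, hy | hy⟩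
  · exact Or.inl ⟨y, by rw [← ZMod.natCast_zmod_val x, hy]; push_cast; rfl⟩
  · exact Or.inr ⟨y, by rw [← ZMod.natCast_zmod_val x, hy]; push_cast; rfl⟩

lemma ZMod.two_mul_ne_one {n : ℕ} (y : ZMod (2 ^ (n + 1))) : 2 * y ≠ 1 := by
  intro h
  have h1 := congrArg (ZMod.castHom (dvd_pow_self 2 n.succ_ne_zero) (ZMod 2)) h
  rw [map_mul, map_one, map_ofNat, show (OfNat.ofNat 2 : ZMod 2) = 0 from rfl, zero_mul] at h1
  exact zero_ne_one h1

lemma ZMod.isUnit_two_mul_add_one {n : ℕ} (y : ZMod (2 ^ (n + 1))) : IsUnit (2 * y + 1) := by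
  have h := (ZMod.isUnit_iff_coprime (2 * y.val + 1) (2 ^ (n + 1))).mpr
    (Nat.Coprime.pow_right _ (by simp))
  simpa using h

lemma isUnit_gaussianReduction_one_two_mul (n : ℕ) (j : Fin (2 ^ n)) :
    IsUnit (gaussianReduction (2 ^ (n + 1)) ⟨1, 2 * (j : ℕ)⟩) := by
  refine isUnit_gaussianReduction ?_
  rw [Zsqrtd.norm_def]
  push_cast
  convert ZMod.isUnit_two_mul_add_one (2 * ((j : ℕ) : ZMod (2 ^ (n + 1))) ^ 2) using 1
  ring

lemma bijective_ringClassGroup_mk (n : ℕ) :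
    Function.Bijective fun j : Fin (2 ^ n) ↦
      ((isUnit_gaussianReduction_one_two_mul n j).unit : RingClassGroup (2 ^ (n + 1))) := by
  constructor
  · intro j k hjk
    rw [QuotientGroup.eq] at hjk
    set u := (isUnit_gaussianReduction_one_two_mul n j).unit with hu
    set v := (isUnit_gaussianReduction_one_two_mul n k).unit with hv
    obtain ⟨w, hw⟩ : ∃ w, w = u⁻¹ * v := ⟨_, rfl⟩
    have huv : (u : GaussianMod (2 ^ (n + 1))) * w = v := by rw [hw, ← Units.val_mul]; simp
    rw [← hw, mem_axisUnits] at hjk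
    have hre := congrArg QuadraticAlgebra.re huv
    have him := congrArg QuadraticAlgebra.im huv
    simp only [hu, hv, IsUnit.unit_spec, gaussianReduction_apply, re_mul, im_mul] at hre him
    push_cast at hre him
    rcases hjk with h | h
    · rw [h] at hre
      exact absurd (by linear_combination hre)
        (ZMod.two_mul_ne_one (-(((j : ℕ) : ZMod _) * w.1.im)))
    · rw [h] at hre him
      have h1 : (w : GaussianMod (2 ^ (n + 1))).re = 1 := by linear_combination hre
      rw [h1] at him
      have h2 : ((2 * (j : ℕ) : ℕ) : ZMod (2 ^ (n + 1))) = (2 * (k : ℕ) : ℕ) := by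
        push_cast
        linear_combination him
      have := j.2
      have := k.2
      rw [ZMod.natCast_eq_natCast_iff', Nat.mod_eq_of_lt (by rw [pow_succ]; lia),
        Nat.mod_eq_of_lt (by rw [pow_succ]; lia)] at h2
      exact Fin.ext (Nat.eq_of_mul_eq_mul_left two_pos h2)
  · intro x
    induction x using QuotientGroup.induction_on with | H u
    suffices h : ∃ j : Fin (2 ^ n), ∃ w : GaussianMod (2 ^ (n + 1)), (w.re = 0 ∨ w.im = 0) ∧
        gaussianReduction (2 ^ (n + 1)) ⟨1, 2 * (j : ℕ)⟩ * w = u by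
      obtain ⟨j, w, hw, hwu⟩ := h
      refine ⟨j, ?_⟩
      rw [QuotientGroup.eq, mem_axisUnits]
      have : ((isUnit_gaussianReduction_one_two_mul n j).unit⁻¹ * u).1 = w := by
        rw [Units.val_mul, ← hwu]
        exact Units.inv_mul_cancel_left (isUnit_gaussianReduction_one_two_mul n j).unit w
      rwa [this]
    have hre := congrArg QuadraticAlgebra.re u.mul_inv
    have him := congrArg QuadraticAlgebra.im u.mul_inv
    simp only [re_mul, im_mul, re_one, im_one] at hre him
    generalize hc : (u⁻¹).1.re = c at hre him
    generalize hd : (u⁻¹).1.im = d at hre him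
    obtain ⟨a, ha⟩ : ∃ a, a = u.1.re := ⟨_, rfl⟩
    obtain ⟨b, hb⟩ : ∃ b, b = u.1.im := ⟨_, rfl⟩
    rw [← ha, ← hb] at hre him
    have hnorm : (a ^ 2 + b ^ 2) * (c ^ 2 + d ^ 2) = 1 := by grind
    rcases ZMod.eq_two_mul_or_eq_two_mul_add_one a with ⟨y, hy⟩ | ⟨y, hy⟩ <;>
      rcases ZMod.eq_two_mul_or_eq_two_mul_add_one b with ⟨t, ht⟩ | ⟨t, ht⟩
    · exact absurd (by rw [hy, ht] at hnorm; linear_combination hnorm)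
        (ZMod.two_mul_ne_one (2 * (y ^ 2 + t ^ 2) * (c ^ 2 + d ^ 2)))
    · obtain ⟨e, he⟩ := (ZMod.isUnit_two_mul_add_one t).exists_right_inv
      obtain ⟨j, hj⟩ := ZMod.exists_fin_two_mul_eq (-(y * e))
      rw [← ht] at he
      refine ⟨j, ⟨0, b⟩, Or.inl rfl, ?_⟩
      ext
      · simp [gaussianReduction_apply, ← hj, ← ha, hy]
        linear_combination 2 * y * he
      · simp [gaussianReduction_apply, ← hb]
    · obtain ⟨e, he⟩ := (ZMod.isUnit_two_mul_add_one y).exists_right_inv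
      obtain ⟨j, hj⟩ := ZMod.exists_fin_two_mul_eq (t * e)
      rw [← hy] at he
      refine ⟨j, ⟨a, 0⟩, Or.inr rfl, ?_⟩
      ext
      · simp [gaussianReduction_apply, ← ha]
      · simp [gaussianReduction_apply, ← hj, ← hb, ht]
        linear_combination 2 * t * he
    · exact absurd (by rw [hy, ht] at hnorm; linear_combination hnorm)
        (ZMod.two_mul_ne_one ((2 * y ^ 2 + 2 * y + 2 * t ^ 2 + 2 * t + 1) * (c ^ 2 + d ^ 2)))

lemma card_ringClassGroup_two_pow (n : ℕ) : Nat.card (RingClassGroup (2 ^ (n + 1))) = 2 ^ n := by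
  rw [← Nat.card_congr (Equiv.ofBijective _ (bijective_ringClassGroup_mk n)), Nat.card_fin]

end RingClassCharacters

section AxisCoefficients

open ArithmeticFunction

variable {q : ℕ}

/-- The weight of the Gaussian prime powers of norm `k` that lie on the axes modulo `q`. -/
noncomputable def axisMangoldt (q k : ℕ) : ℝ :=
  (∑ z ∈ normFiber k, axisIndicator q z * gaussianMangoldt z) / 4

lemma axisMangoldt_nonneg (k : ℕ) : 0 ≤ axisMangoldt q k :=
  div_nonneg (Finset.sum_nonneg fun _ _ ↦
    mul_nonneg (axisIndicator_nonneg _) (gaussianMangoldt_nonneg _)) zero_le_four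

lemma axisMangoldt_le (k : ℕ) : axisMangoldt q k ≤ 4 * vonMangoldt k := by
  have h : ∑ z ∈ normFiber k, axisIndicator q z * gaussianMangoldt z ≤ 16 * vonMangoldt k :=
    (Finset.sum_le_sum fun z _ ↦ mul_le_of_le_one_left (gaussianMangoldt_nonneg z)
      (axisIndicator_le_one z)).trans (sum_gaussianMangoldt_normFiber_le k)
  rw [axisMangoldt]
  linarith

lemma card_mul_axisMangoldt [NeZero q] [Fintype (RingClassGroup q →* ℂˣ)] {k : ℕ} (hk : k ≠ 0) :
    Nat.card (RingClassGroup q) * (axisMangoldt q k : ℂ) =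
      ∑ χ : RingClassGroup q →* ℂˣ, gaussianMangoldtCoeff (ringClassCharacter χ) k := by
  simp only [gaussianMangoldtCoeff, gaussianCoeff_apply _ hk]
  rw [← Finset.sum_div, Finset.sum_comm, axisMangoldt]
  push_cast
  rw [mul_div_assoc', Finset.mul_sum]
  simp only [← Finset.sum_mul, sum_ringClassCharacter_apply, mul_assoc]

lemma sum_Icc_vonMangoldt_le (n : ℕ) :
    ∑ k ∈ Finset.Icc 1 n, vonMangoldt k ≤ (Real.log 4 + 4) * n := by
  have := Chebyshev.psi_le_const_mul_self n.cast_nonneg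
  rwa [Chebyshev.psi, Nat.floor_natCast] at this

lemma tendsto_sum_axisMangoldt_div (hq : 1 < q) :
    Tendsto (fun n : ℕ ↦ (∑ k ∈ Finset.Icc 1 n, axisMangoldt q k) / n) atTop
      (nhds (Nat.card (RingClassGroup q) : ℝ)⁻¹) := by
  classical
  have : NeZero q := ⟨by lia⟩
  have : Finite (RingClassGroup q →* ℂˣ) :=
    finite_monoidHom_units_complex (G := RingClassGroup q)
  have := Fintype.ofFinite (RingClassGroup q →* ℂˣ)
  choose G hG hGL using fun χ : RingClassGroup q →* ℂˣ ↦ exists_continuousOn_ringClassCharacter hq χ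
  have hcard : (Nat.card (RingClassGroup q) : ℂ) ≠ 0 := by exact_mod_cast Nat.card_pos.ne'
  refine tendsto_sum_div_of_continuousOn_LSeries_sub axisMangoldt_nonneg
    (M := 4 * (Real.log 4 + 4)) (fun n ↦ ?_)
    (G := fun s ↦ (Nat.card (RingClassGroup q) : ℂ)⁻¹ * ∑ χ, G χ s)
    (continuousOn_const.mul (continuousOn_finsetSum _ fun χ _ ↦ hG χ)) fun s hs ↦ ?_
  · calc ∑ k ∈ Finset.Icc 1 n, axisMangoldt q k ≤ ∑ k ∈ Finset.Icc 1 n, 4 * vonMangoldt k :=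
        Finset.sum_le_sum fun k _ ↦ axisMangoldt_le k
      _ ≤ _ := by
        rw [← Finset.mul_sum, mul_assoc]
        exact mul_le_mul_of_nonneg_left (sum_Icc_vonMangoldt_le n) zero_le_four
  · have hsum : ∑ χ : RingClassGroup q →* ℂˣ, LSeries (gaussianMangoldtCoeff
        (ringClassCharacter χ)) s = Nat.card (RingClassGroup q) *
          LSeries (fun n ↦ (axisMangoldt q n : ℂ)) s := by
      rw [← LSeries_sum fun χ _ ↦
        lSeriesSummable_gaussianMangoldtCoeff
          (isRayCharacter_ringClassCharacter hq χ).norm_le_one hs, ← LSeries_smul]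
      refine LSeries_congr (fun {n} hn ↦ ?_) s
      rw [Pi.smul_apply, smul_eq_mul, card_mul_axisMangoldt hn, Finset.sum_apply]
    rw [eq_inv_mul_iff_mul_eq₀ hcard, ← Finset.sum_congr rfl fun χ _ ↦ hGL χ s hs,
      Finset.sum_sub_distrib, hsum, ← Finset.sum_div, Finset.sum_ite_eq' Finset.univ]
    push_cast
    simp only [Finset.mem_univ, if_true]
    field_simp

lemma tendsto_sum_vonMangoldt_div :
    Tendsto (fun n : ℕ ↦ (∑ k ∈ Finset.Icc 1 n, vonMangoldt k) / n) atTop (nhds 1) := by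
  refine tendsto_sum_div_of_continuousOn_LSeries_sub (fun _ ↦ vonMangoldt_nonneg)
    sum_Icc_vonMangoldt_le (vonMangoldt.continuousOn_LFunctionResidueClassAux (1 : ZMod 1))
    fun s hs ↦ ?_
  rw [vonMangoldt.eqOn_LFunctionResidueClassAux isUnit_one hs]
  have : ∀ n : ℕ, vonMangoldt.residueClass (1 : ZMod 1) n = vonMangoldt n := fun n ↦
    by
    have h : n ∈ {n : ℕ | (n : ZMod 1) = 1} := Subsingleton.elim _ _
    rw [vonMangoldt.residueClass, Set.indicator_of_mem h]
  simp only [this]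
  simp

end AxisCoefficients

section AxisPrimes

open ArithmeticFunction

lemma gaussian_prime_of_prime_norm {z : GaussianInt} {p : ℕ} (hp : p.Prime) (hz : z.norm = p) :
    Prime z := by
  have unit_iff (w : GaussianInt) : IsUnit w ↔ w.norm.natAbs = 1 := Zsqrtd.norm_eq_one_iff.symm
  refine Irreducible.prime ⟨fun h ↦ ?_, fun {x y} h ↦ ?_⟩
  · rw [unit_iff, hz, Int.natAbs_natCast] at h
    exact hp.one_lt.ne' h
  · rw [h, Zsqrtd.norm_mul] at hz
    have := congrArg Int.natAbs hz
    rw [Int.natAbs_mul, Int.natAbs_natCast] at this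
    rw [unit_iff, unit_iff]
    rcases (Nat.dvd_prime hp).mp (Dvd.intro _ this) with h | h
    · exact Or.inl h
    · exact Or.inr (by simpa [h, hp.ne_zero] using this)

lemma gaussianMangoldt_of_mem_normFiber {p : ℕ} (hp : p.Prime) {z : GaussianInt}
    (hz : z ∈ normFiber p) : gaussianMangoldt z = Real.log p := by
  rw [mem_normFiber] at hz
  rw [gaussianMangoldt_eq_log (gaussian_prime_of_prime_norm hp hz) one_pos (by rw [pow_one]), hz,
    Int.cast_natCast]

lemma mem_normFiber_iff_sq_add_sq {p : ℕ} {z : GaussianInt} :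
    z ∈ normFiber p ↔ z.re.natAbs ^ 2 + z.im.natAbs ^ 2 = p := by
  rw [mem_normFiber, Zsqrtd.norm_def, ← Int.natCast_inj]
  push_cast
  rw [sq_abs, sq_abs]
  ring_nf

lemma axisIndicator_of_mem_normFiber {n p : ℕ} (hp : Odd p) {z : GaussianInt} (hz : z ∈ normFiber p)
    [Decidable (2 ^ n ∣ z.re.natAbs ∨ 2 ^ n ∣ z.im.natAbs)] :
    axisIndicator (2 ^ n) z = if 2 ^ n ∣ z.re.natAbs ∨ 2 ^ n ∣ z.im.natAbs then 1 else 0 := by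
  have h : IsUnit (gaussianReduction (2 ^ n) z) := by
    refine isUnit_gaussianReduction ?_
    rw [mem_normFiber.mp hz, Int.cast_natCast, ZMod.isUnit_iff_coprime]
    exact (Nat.coprime_two_right.mpr hp).pow_right n
  rw [axisIndicator]
  simp only [h, true_and, Int.natCast_dvd]

lemma card_pair_product_pair {a b : ℤ} (ha : a ≠ 0) (hb : b ≠ 0) :
    (({a, -a} : Finset ℤ) ×ˢ ({b, -b} : Finset ℤ)).card = 4 := by
  rw [Finset.card_product, Finset.card_pair (by lia), Finset.card_pair (by lia)]

lemma card_filter_normFiber {n p : ℕ} (hn : n ≠ 0) (hp : p.Prime) (hodd : Odd p)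
    (h : IsSqAddFourPowMulSq n p) :
    ((normFiber p).filter
      fun z ↦ 2 ^ n ∣ z.re.natAbs ∨ 2 ^ n ∣ z.im.natAbs).card = 8 := by
  obtain ⟨a, b, hab⟩ := h
  have heven (c : ℕ) : Even (2 ^ n * c) := ((even_two.pow_of_ne_zero hn).mul_right c)
  have odd_left {x c : ℕ} (hx : x ^ 2 + (2 ^ n * c) ^ 2 = p) : Odd x := by
    have : Odd (x ^ 2 + (2 ^ n * c) ^ 2) := hx ▸ hodd
    exact Nat.Odd.of_mul_left (n := x) (by
      rw [← sq]
      exact (Nat.odd_add.mp this).mpr ((heven c).pow_of_ne_zero two_ne_zero))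
  have ha : Odd a := odd_left hab
  set B := 2 ^ n * b with hB
  have hB0 : B ≠ 0 := by
    intro h0
    rw [h0, zero_pow two_ne_zero, add_zero] at hab
    exact Nat.Prime.not_prime_pow le_rfl (hab ▸ hp)
  have ha0 : a ≠ 0 := ha.pos.ne'
  have huniq {x y : ℕ} (hxy : x ^ 2 + y ^ 2 = p) (hy : 2 ^ n ∣ y) : x = a ∧ y = B := by
    obtain ⟨c, rfl⟩ := hy
    exact sq_add_sq_unique hp hxy hab (odd_left hxy) (heven c) ha (heven b)
  have hne : (a : ℤ) ≠ B ∧ (a : ℤ) ≠ -B := by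
    have := heven b
    rw [← hB] at this
    constructor <;> grind
  let f : ℤ × ℤ ↪ GaussianInt := ⟨fun x ↦ ⟨x.1, x.2⟩, fun x y h ↦
    Prod.ext (congrArg Zsqrtd.re h) (congrArg Zsqrtd.im h)⟩
  have hset : ((normFiber p).filter fun z ↦ 2 ^ n ∣ z.re.natAbs ∨ 2 ^ n ∣ z.im.natAbs) =
      ((({(a : ℤ), -(a : ℤ)} : Finset ℤ) ×ˢ ({(B : ℤ), -(B : ℤ)} : Finset ℤ)) ∪
        (({(B : ℤ), -(B : ℤ)} : Finset ℤ) ×ˢ ({(a : ℤ), -(a : ℤ)} : Finset ℤ))).map f := by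
    ext z
    simp only [Finset.mem_filter, mem_normFiber_iff_sq_add_sq, Finset.mem_map, Finset.mem_union,
      Finset.mem_product, Finset.mem_insert, Finset.mem_singleton, ← Int.natAbs_eq_iff]
    constructor
    · rintro ⟨hz, hd⟩
      refine ⟨(z.re, z.im), ?_, rfl⟩
      rcases hd with hd | hd
      · rw [add_comm] at hz
        exact Or.inr (huniq hz hd).symm
      · exact Or.inl (huniq hz hd)
    · rintro ⟨⟨x, y⟩, hxy, rfl⟩
      change x.natAbs ^ 2 + y.natAbs ^ 2 = p ∧ (2 ^ n ∣ x.natAbs ∨ 2 ^ n ∣ y.natAbs)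
      rcases hxy with ⟨hx, hy⟩ | ⟨hx, hy⟩ <;> dsimp only at hx hy <;> rw [hx, hy]
      · exact ⟨hab, Or.inr (Dvd.intro _ rfl)⟩
      · exact ⟨by rw [add_comm, hab], Or.inl (Dvd.intro _ rfl)⟩
  rw [hset, Finset.card_map, Finset.card_union_of_disjoint, card_pair_product_pair (by simpa)
    (by simpa), card_pair_product_pair (by simpa) (by simpa)]
  rw [Finset.disjoint_product]
  exact Or.inl (by simp; grind)

lemma axisMangoldt_of_prime {n p : ℕ} (hn : n ≠ 0) (hp : p.Prime) (hodd : Odd p)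
    [Decidable (IsSqAddFourPowMulSq n p)] :
    axisMangoldt (2 ^ n) p = if IsSqAddFourPowMulSq n p then 2 * Real.log p else 0 := by
  have h1 : axisMangoldt (2 ^ n) p = (∑ z ∈ normFiber p,
      if 2 ^ n ∣ z.re.natAbs ∨ 2 ^ n ∣ z.im.natAbs then Real.log p else 0) / 4 := by
    rw [axisMangoldt]
    congr 1
    refine Finset.sum_congr rfl fun z hz ↦ ?_
    rw [axisIndicator_of_mem_normFiber hodd hz, gaussianMangoldt_of_mem_normFiber hp hz, ite_mul,
      one_mul, zero_mul]
  rw [h1, ← Finset.sum_filter, Finset.sum_const, nsmul_eq_mul]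
  split_ifs with h
  · rw [card_filter_normFiber hn hp hodd h]
    push_cast
    ring
  · rw [Finset.filter_false_of_mem, Finset.card_empty, Nat.cast_zero, zero_mul, zero_div]
    intro z hz
    rw [mem_normFiber_iff_sq_add_sq] at hz
    rintro (⟨c, hc⟩ | ⟨c, hc⟩)
    · exact h ⟨_, c, by rw [← hc, add_comm, hz]⟩
    · exact h ⟨_, c, by rw [← hc, hz]⟩

open scoped Classical in
/-- The sum of `log p` over the primes `p ≤ N` satisfying `P`. -/
noncomputable def thetaOn (P : ℕ → Prop) (N : ℕ) : ℝ :=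
  ∑ p ∈ Finset.Icc 1 N with p.Prime ∧ P p, Real.log p

lemma tendsto_sqrt_div : Tendsto (fun N : ℕ ↦ √(N : ℝ) / N) atTop (nhds 0) := by
  simp only [Real.sqrt_div_self]
  exact (Real.tendsto_sqrt_atTop.comp tendsto_natCast_atTop_atTop).inv_tendsto_atTop

lemma sum_Icc_not_prime_vonMangoldt (N : ℕ) :
    ∑ k ∈ Finset.Icc 1 N, (if k.Prime then 0 else vonMangoldt k) =
      Chebyshev.psi N - Chebyshev.theta N := by
  rw [Chebyshev.psi_sub_theta_eq_sum_not_prime, Finset.sum_filter, Nat.floor_natCast]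
  simp only [ite_not]
  rfl

lemma tendsto_thetaOn_of_vonMangoldt_bound {a : ℕ → ℝ} {P : ℕ → Prop} {c C D : ℝ} (hC : 0 ≤ C)
    (ha : ∀ k, ¬ k.Prime → |a k| ≤ C * vonMangoldt k)
    (hP : ∀ k, k.Prime → k ≠ 2 → P k → a k = D * Real.log k)
    (hnP : ∀ k, k.Prime → k ≠ 2 → ¬ P k → a k = 0)
    (h : Tendsto (fun N : ℕ ↦ (∑ k ∈ Finset.Icc 1 N, a k) / N) atTop (nhds c)) :
    Tendsto (fun N : ℕ ↦ D * thetaOn P N / N) atTop (nhds c) := by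
  classical
  obtain ⟨K, hK⟩ := Chebyshev.psi_sub_theta_le_mul_sqrt
  set E := |a 2 - if P 2 then D * Real.log 2 else 0| with hE
  have hbound (N : ℕ) :
      |∑ k ∈ Finset.Icc 1 N, a k - D * thetaOn P N| ≤ C * (K * √N) + E := by
    rw [thetaOn, Finset.sum_filter, Finset.mul_sum, ← Finset.sum_sub_distrib]
    calc _ ≤ ∑ k ∈ Finset.Icc 1 N, (C * (if k.Prime then 0 else vonMangoldt k) +
          if k = 2 then E else 0) := by
          refine (Finset.abs_sum_le_sum_abs _ _).trans (Finset.sum_le_sum fun k _ ↦ ?_)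
          by_cases hk : k.Prime
          · rcases eq_or_ne k 2 with rfl | hk2
            · simp [hE, Nat.prime_two]
            · by_cases hPk : P k
              · simp [hk, hPk, hk2, hP k hk hk2 hPk]
              · simp [hk, hPk, hk2, hnP k hk hk2 hPk]
          · have hk2 : k ≠ 2 := by rintro rfl; exact hk Nat.prime_two
            simpa [hk, hk2] using ha k hk
      _ ≤ _ := by
          rw [Finset.sum_add_distrib, ← Finset.mul_sum, sum_Icc_not_prime_vonMangoldt,
            Finset.sum_ite_eq']
          refine add_le_add (mul_le_mul_of_nonneg_left (hK N) hC) ?_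
          split_ifs
          exacts [le_rfl, abs_nonneg _]
  have hlim : Tendsto (fun N : ℕ ↦ C * K * (√(N : ℝ) / N) + E / N) atTop (nhds 0) := by
    simpa using (tendsto_sqrt_div.const_mul (C * K)).add (tendsto_const_div_atTop_nhds_zero_nat E)
  have hdiff : Tendsto (fun N : ℕ ↦ (∑ k ∈ Finset.Icc 1 N, a k) / N - D * thetaOn P N / N) atTop
      (nhds 0) := by
    refine squeeze_zero_norm (fun N ↦ ?_) hlim
    rw [← sub_div, norm_div, Real.norm_natCast, Real.norm_eq_abs]
    refine (div_le_div_of_nonneg_right (hbound N) N.cast_nonneg).trans_eq ?_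
    ring
  simpa using h.sub hdiff

lemma tendsto_thetaOn_isSqAddFourPowMulSq (n : ℕ) :
    Tendsto (fun N ↦ thetaOn (IsSqAddFourPowMulSq (n + 1)) N / N) atTop
      (nhds ((1 / 2) ^ (n + 1))) := by
  classical
  have h := tendsto_sum_axisMangoldt_div (q := 2 ^ (n + 1)) (Nat.one_lt_two_pow n.succ_ne_zero)
  rw [card_ringClassGroup_two_pow] at h
  have h2 := tendsto_thetaOn_of_vonMangoldt_bound (P := IsSqAddFourPowMulSq (n + 1)) (D := 2)
    zero_le_four (fun k _ ↦ by
      rw [abs_of_nonneg (axisMangoldt_nonneg k)]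
      exact axisMangoldt_le k)
    (fun k hk hk2 hPk ↦ by
      rw [axisMangoldt_of_prime n.succ_ne_zero hk (hk.odd_of_ne_two hk2), if_pos hPk])
    (fun k hk hk2 hPk ↦ by
      rw [axisMangoldt_of_prime n.succ_ne_zero hk (hk.odd_of_ne_two hk2), if_neg hPk]) h
  have h3 := h2.const_mul (1 / 2)
  convert h3 using 2 with N
  · ring
  · push_cast
    rw [pow_succ', one_div_pow, one_div (2 ^ n)]

lemma tendsto_thetaOn_true :
    Tendsto (fun N ↦ thetaOn (fun _ ↦ True) N / N) atTop (nhds 1) := by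
  have h := tendsto_thetaOn_of_vonMangoldt_bound (P := fun _ ↦ True) (D := 1) zero_le_one
    (fun k _ ↦ by rw [abs_of_nonneg vonMangoldt_nonneg, one_mul])
    (fun k hk _ _ ↦ by rw [vonMangoldt_apply_prime hk, one_mul]) (fun k _ _ h ↦ absurd trivial h)
    tendsto_sum_vonMangoldt_div
  simpa using h

end AxisPrimes

section PrimeCounts

open scoped Classical in
/-- The number of primes `p ≤ N` satisfying `P`. -/
noncomputable def primeCountOn (P : ℕ → Prop) (N : ℕ) : ℕ :=
  ((Finset.Icc 1 N).filter fun p ↦ p.Prime ∧ P p).card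

lemma primeCountOn_eq_card (P : ℕ → Prop) [DecidablePred P] (N : ℕ) :
    primeCountOn P N = ((Finset.Icc 1 N).filter fun p ↦ p.Prime ∧ P p).card := by
  rw [primeCountOn]
  congr!

lemma primeCountOn_true (N : ℕ) : primeCountOn (fun _ ↦ True) N = Nat.primeCounting N := by
  classical
  rw [primeCountOn_eq_card, Nat.primeCounting, Nat.primeCounting', Nat.count_eq_card_filter_range]
  congr 1
  ext p
  simp only [Finset.mem_filter, Finset.mem_Icc, Finset.mem_range, and_true]
  exact ⟨fun h ↦ ⟨by lia, h.2⟩, fun h ↦ ⟨⟨h.2.pos, by lia⟩, h.2⟩⟩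

lemma thetaOn_true (N : ℕ) : thetaOn (fun _ ↦ True) N = Chebyshev.theta N := by
  classical
  rw [thetaOn, Chebyshev.theta, Nat.floor_natCast]
  simp only [and_true]
  rfl

lemma primeCountOn_mul_log_sub_thetaOn (P : ℕ → Prop) (N : ℕ) [DecidablePred P] :
    primeCountOn P N * Real.log N - thetaOn P N =
      ∑ p ∈ Finset.Icc 1 N with p.Prime ∧ P p, (Real.log N - Real.log p) := by
  rw [Finset.sum_sub_distrib, Finset.sum_const, nsmul_eq_mul, primeCountOn_eq_card, thetaOn]
  congr!

lemma tendsto_primeCounting_mul_log_sub_theta_div :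
    Tendsto (fun N : ℕ ↦ ((Nat.primeCounting N : ℝ) * Real.log N - Chebyshev.theta N) / N) atTop
      (nhds 0) := by
  have h := Chebyshev.primeCounting_sub_theta_div_log_isBigO.comp_tendsto
    (tendsto_natCast_atTop_atTop (R := ℝ))
  have hlog : Tendsto (fun N : ℕ ↦ Real.log N) atTop atTop :=
    Real.tendsto_log_atTop.comp tendsto_natCast_atTop_atTop
  have h1 := h.mul (Asymptotics.isBigO_refl (fun N : ℕ ↦ Real.log N / N) atTop)
  have h2 := h1.trans_tendsto (hlog.inv_tendsto_atTop.congr' ?_)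
  · refine h2.congr' ?_
    filter_upwards [hlog.eventually_gt_atTop 0, eventually_gt_atTop 0] with N hN hN0
    simp only [Function.comp_apply, Nat.floor_natCast]
    field_simp
  · filter_upwards [hlog.eventually_gt_atTop 0, eventually_gt_atTop 0] with N hN hN0
    simp only [Function.comp_apply, Pi.inv_apply]
    have : (N : ℝ) ≠ 0 := Nat.cast_ne_zero.mpr hN0.ne'
    field_simp

lemma tendsto_primeCountOn {P : ℕ → Prop} {c : ℝ}
    (h : Tendsto (fun N ↦ thetaOn P N / N) atTop (nhds c)) :
    Tendsto (fun N ↦ primeCountOn P N * (Real.log N / N)) atTop (nhds c) := by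
  classical
  have hnonneg {N p : ℕ} (hp : p ∈ Finset.Icc 1 N) : 0 ≤ Real.log N - Real.log p := by
    rw [Finset.mem_Icc] at hp
    exact sub_nonneg.mpr (Real.log_le_log (mod_cast hp.1) (mod_cast hp.2))
  have hsq : Tendsto (fun N ↦ (primeCountOn P N * Real.log N - thetaOn P N) / N) atTop
      (nhds 0) := by
    refine squeeze_zero (fun N ↦ ?_) (fun N ↦ ?_) tendsto_primeCounting_mul_log_sub_theta_div
    · rw [primeCountOn_mul_log_sub_thetaOn]
      exact div_nonneg (Finset.sum_nonneg fun p hp ↦ hnonneg (Finset.mem_filter.mp hp).1)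
        N.cast_nonneg
    · refine div_le_div_of_nonneg_right ?_ N.cast_nonneg
      rw [← primeCountOn_true, ← thetaOn_true, primeCountOn_mul_log_sub_thetaOn,
        primeCountOn_mul_log_sub_thetaOn]
      exact Finset.sum_le_sum_of_subset_of_nonneg
        (Finset.monotone_filter_right _ fun p _ hp ↦ ⟨hp.1, trivial⟩)
        fun p hp _ ↦ hnonneg (Finset.mem_filter.mp hp).1
  refine (by simpa using hsq.add h : Tendsto _ atTop (nhds c)).congr fun N ↦ ?_
  ring

lemma primePi_eq_primeCountOn (N : ℕ) : primePi N = primeCountOn (fun _ ↦ True) N := by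
  rw [primeCountOn_true, Nat.primeCounting, Nat.primeCounting', Nat.count_eq_card_filter_range,
    primePi]

lemma primeCountOn_isSqAddFourPowMulSq_sub (n N : ℕ) :
    (primeCountOn (IsSqAddFourPowMulSq n) N : ℝ) - primeCountOn (IsSqAddFourPowMulSq (n + 1)) N =
      primeCountOn (fun p ↦ IsSqAddFourPowMulSq n p ∧ ¬ IsSqAddFourPowMulSq (n + 1) p) N := by
  classical
  rw [sub_eq_iff_eq_add', ← Nat.cast_add, primeCountOn_eq_card, primeCountOn_eq_card,
    primeCountOn_eq_card, ← Finset.card_union_of_disjoint]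
  · congr 2
    ext p
    have := IsSqAddFourPowMulSq.of_succ (k := n) (ℓ := p)
    simp only [Finset.mem_filter, Finset.mem_union]
    tauto
  · refine Finset.disjoint_filter.mpr fun p _ h h' ↦ h'.2.2 h.2

lemma abs_etaDensityCount_sub_le {n : ℕ} (hn : 1 ≤ n) (N : ℕ) :
    |(etaDensityCount (24 * (4 ^ n + 1)) N : ℝ) -
      primeCountOn (fun p ↦ IsSqAddFourPowMulSq n p ∧ ¬ IsSqAddFourPowMulSq (n + 1) p) N| ≤
      (4 ^ n + 1 : ℕ) := by
  classical
  have h5 : 5 ≤ 4 ^ n + 1 := by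
    have := Nat.pow_le_pow_right (show 0 < 4 by lia) hn
    lia
  have key (p : ℕ) (hp : p.Prime) (hle : 4 ^ n + 1 ≤ p) := etaCoeff_nuR_eq_one_iff hn hp hle
  rw [etaDensityCount, primeCountOn_eq_card]
  have hcard := Finset.card_range (4 ^ n + 1)
  generalize 4 ^ n + 1 = w at *
  set S := (Finset.range (N + 1)).filter fun ℓ ↦
    ℓ.Prime ∧ 5 ≤ ℓ ∧ etaCoeff (24 * w) (nuR (24 * w) ℓ) = 1
  set T := (Finset.Icc 1 N).filter fun p ↦
    p.Prime ∧ IsSqAddFourPowMulSq n p ∧ ¬ IsSqAddFourPowMulSq (n + 1) p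
  have hST : S ⊆ T ∪ Finset.range w := by
    intro p hp
    simp only [S, T, Finset.mem_filter, Finset.mem_union, Finset.mem_range, Finset.mem_Icc] at hp ⊢
    by_cases h : w ≤ p
    · exact Or.inl ⟨⟨hp.2.1.pos, by lia⟩, hp.2.1, (key p hp.2.1 h).mp hp.2.2.2⟩
    · exact Or.inr (not_le.mp h)
  have hTS : T ⊆ S ∪ Finset.range w := by
    intro p hp
    simp only [S, T, Finset.mem_filter, Finset.mem_union, Finset.mem_range, Finset.mem_Icc] at hp ⊢
    by_cases h : w ≤ p
    · exact Or.inl ⟨by lia, hp.2.1, by lia, (key p hp.2.1 h).mpr hp.2.2⟩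
    · exact Or.inr (not_le.mp h)
  have h1 := (Finset.card_le_card hST).trans (Finset.card_union_le _ _)
  have h2 := (Finset.card_le_card hTS).trans (Finset.card_union_le _ _)
  rw [hcard] at h1 h2
  rw [abs_sub_le_iff]
  constructor <;> rw [sub_le_iff_le_add'] <;> exact_mod_cast (by lia)

end PrimeCounts

/-- Theorem D, `ℚ(i)`-dihedral case: `D(24 ⬝ w_n) = 2^{-(n+1)}` for `n ≥ 1`,
where `w_n = 4^n + 1`. -/
theorem etaPowerDensity_dihedral_gaussian (n : ℕ) (hn : 1 ≤ n) :
    Tendsto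
      (fun x : ℕ =>
        (etaDensityCount (24 * (4 ^ n + 1)) x : ℝ) / (primePi x : ℝ))
      atTop (nhds ((1 / 2 : ℝ) ^ (n + 1))) := by
  obtain ⟨m, rfl⟩ : ∃ m, n = m + 1 := ⟨n - 1, by lia⟩
  have hlog : Tendsto (fun N : ℕ ↦ Real.log N / N) atTop (nhds 0) := by
    have := Real.tendsto_pow_log_div_mul_add_atTop 1 0 1 one_ne_zero
    simpa [Function.comp_def] using this.comp tendsto_natCast_atTop_atTop
  have hcount := (tendsto_primeCountOn (tendsto_thetaOn_isSqAddFourPowMulSq m)).sub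
    (tendsto_primeCountOn (tendsto_thetaOn_isSqAddFourPowMulSq (m + 1)))
  have herr : Tendsto (fun N : ℕ ↦ ((etaDensityCount (24 * (4 ^ (m + 1) + 1)) N : ℝ) -
      primeCountOn (fun p ↦ IsSqAddFourPowMulSq (m + 1) p ∧
        ¬ IsSqAddFourPowMulSq (m + 1 + 1) p) N) * (Real.log N / N)) atTop (nhds 0) := by
    refine squeeze_zero_norm (fun N ↦ ?_)
      (by simpa only [mul_zero] using hlog.const_mul ((4 ^ (m + 1) + 1 : ℕ) : ℝ))
    rw [norm_mul, Real.norm_eq_abs, Real.norm_of_nonneg (by positivity)]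
    exact mul_le_mul_of_nonneg_right (abs_etaDensityCount_sub_le hn N) (by positivity)
  have hpi := tendsto_primeCountOn tendsto_thetaOn_true
  have hquot := (herr.add hcount).div hpi one_ne_zero
  have hval : (0 + ((1 / 2 : ℝ) ^ (m + 1) - (1 / 2) ^ (m + 1 + 1))) / 1 =
      (1 / 2) ^ (m + 1 + 1) := by ring
  rw [hval] at hquot
  refine hquot.congr' ?_
  filter_upwards [eventually_gt_atTop 1] with N hN
  have hN0 : Real.log N / N ≠ 0 :=
    (div_pos (Real.log_pos (mod_cast hN)) (by positivity)).ne'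
  rw [Pi.div_apply, ← sub_mul, ← add_mul, primeCountOn_isSqAddFourPowMulSq_sub,
    sub_add_cancel, mul_div_mul_right _ _ hN0, primePi_eq_primeCountOn]
end

section
/- Mod-2 q-expansion of Δ (equation (2.3)): For all natural numbers N ≥ 1 and all m with 1 ≤ m ≤ N, the coefficient of X^m in the polynomial X · ∏_{n=1}^{N} (1 − X^n)^{24} over ZMod 2 equals 1 if and only if m = k² for some odd natural number k. -/
open Polynomial

open Finset in
/-- Telescoping identity behind Shanks' finite form of Gauss's triangular number series. -/
theorem sum_shanks_telescope {R : Type*} [CommRing R] (q : R) (n m : ℕ) (hm : m ≤ n) :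
    ∑ s ∈ range m, (∏ k ∈ range s, (1 - q ^ (2 * k + 1))) *
        (∏ k ∈ Ico s n, (1 - q ^ (2 * k + 2))) *
        ((1 - q ^ (2 * n + 2)) * q ^ (s * (2 * n + 3)) -
          (1 - q ^ (2 * n + 1)) * q ^ (s * (2 * n + 1))) =
      (∏ k ∈ range m, (1 - q ^ (2 * k + 1))) * (∏ k ∈ Ico m n, (1 - q ^ (2 * k + 2))) *
        ((1 - q ^ (2 * m)) * q ^ (m * (2 * n + 1))) := by
  induction m with
  | zero => simp
  | succ m ih =>
    rw [sum_range_succ, ih (by omega), prod_range_succ,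
      prod_eq_prod_Ico_succ_bot (show m < n by omega)]
    ring

open Finset in
/-- Shanks' finite form of Gauss's triangular number series, with denominators cleared. -/
theorem prod_mul_sum_triangular {R : Type*} [CommRing R] (q : R) (n : ℕ) :
    (∏ k ∈ range n, (1 - q ^ (2 * k + 1))) * ∑ k ∈ range (2 * n), q ^ (k * (k + 1) / 2) =
      ∑ s ∈ range n, (∏ k ∈ range s, (1 - q ^ (2 * k + 1))) *
        (∏ k ∈ Ico s n, (1 - q ^ (2 * k + 2))) * q ^ (s * (2 * n + 1)) := by
  induction n with
  | zero => simp
  | succ n ih =>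
    have h := sum_shanks_telescope q n n le_rfl
    have hsplit : ∑ s ∈ range n, (∏ k ∈ range s, (1 - q ^ (2 * k + 1))) *
          (∏ k ∈ Ico s (n + 1), (1 - q ^ (2 * k + 2))) * q ^ (s * (2 * (n + 1) + 1)) =
        ∑ s ∈ range n, (∏ k ∈ range s, (1 - q ^ (2 * k + 1))) *
          (∏ k ∈ Ico s n, (1 - q ^ (2 * k + 2))) *
          ((1 - q ^ (2 * n + 2)) * q ^ (s * (2 * n + 3)) -
            (1 - q ^ (2 * n + 1)) * q ^ (s * (2 * n + 1))) +
        (1 - q ^ (2 * n + 1)) * ∑ s ∈ range n, (∏ k ∈ range s, (1 - q ^ (2 * k + 1))) *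
          (∏ k ∈ Ico s n, (1 - q ^ (2 * k + 2))) * q ^ (s * (2 * n + 1)) := by
      rw [mul_sum, ← sum_add_distrib]
      refine sum_congr rfl fun s hs => ?_
      rw [prod_Ico_succ_top (by have := mem_range.1 hs; omega)]
      ring
    have e1 : 2 * n * (2 * n + 1) / 2 = n * (2 * n + 1) := by
      rw [mul_assoc, Nat.mul_div_cancel_left _ two_pos]
    have e2 : (2 * n + 1) * (2 * n + 1 + 1) / 2 = (n + 1) * (2 * n + 1) := by
      rw [show (2 * n + 1) * (2 * n + 1 + 1) = 2 * ((n + 1) * (2 * n + 1)) by ring,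
        Nat.mul_div_cancel_left _ two_pos]
    rw [sum_range_succ _ n, hsplit, h, ← ih, show 2 * (n + 1) = 2 * n + 1 + 1 by ring,
      sum_range_succ, sum_range_succ, e1, e2, prod_range_succ, prod_Ico_succ_top le_rfl]
    simp only [Ico_self, prod_empty]
    ring

open Finset in
theorem prod_range_two_mul {M : Type*} [CommMonoid M] (f : ℕ → M) (n : ℕ) :
    ∏ k ∈ range (2 * n), f k = (∏ k ∈ range n, f (2 * k)) * ∏ k ∈ range n, f (2 * k + 1) := by
  induction n with
  | zero => simp
  | succ n ih =>
    rw [show 2 * (n + 1) = 2 * n + 1 + 1 by ring, prod_range_succ, prod_range_succ, ih,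
      prod_range_succ, prod_range_succ]
    simp only [mul_assoc, mul_left_comm]

open Finset in
theorem pow_dvd_prod_one_sub_pow_sub {R : Type*} [CommRing R] (q : R) {n m : ℕ} (h : n ≤ m) :
    q ^ (n + 1) ∣ ∏ k ∈ range m, (1 - q ^ (k + 1)) - ∏ k ∈ range n, (1 - q ^ (k + 1)) := by
  induction m, h using Nat.le_induction with
  | base => simp
  | succ m hm ih =>
    have h : q ^ (n + 1) ∣ (∏ k ∈ range m, (1 - q ^ (k + 1))) * q ^ (m + 1) :=
      (pow_dvd_pow q (by omega)).mul_left _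
    rw [prod_range_succ]
    convert ih.sub h using 1
    ring

open Finset in
theorem isCoprime_prod_one_sub_pow {R : Type*} [CommRing R] (q : R) (n : ℕ) :
    IsCoprime q (∏ k ∈ range n, (1 - q ^ (k + 1))) :=
  IsCoprime.prod_right fun k _ => ⟨q ^ k, 1, by ring⟩

open Finset in
/-- In characteristic two, `∏ (1 - q ^ n) ^ 3` is the triangular number series. -/
theorem pow_dvd_sum_triangular_sub_prod_cube {R : Type*} [CommRing R] [CharP R 2]
    (q : R) {n : ℕ} (hn : n ≠ 0) :
    q ^ (n + 1) ∣ ∑ k ∈ range (2 * n), q ^ (k * (k + 1) / 2) -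
      (∏ k ∈ range n, (1 - q ^ (k + 1))) ^ 3 := by
  set S := ∑ k ∈ range (2 * n), q ^ (k * (k + 1) / 2)
  set A := ∏ k ∈ range n, (1 - q ^ (2 * k + 1))
  set Q := ∏ k ∈ range n, (1 - q ^ (k + 1))
  have hB : ∏ k ∈ range n, (1 - q ^ (2 * k + 2)) = Q ^ 2 := by
    rw [← prod_pow]
    refine prod_congr rfl fun k _ => ?_
    rw [sub_pow_char, one_pow]
    ring
  have hAS : q ^ (n + 1) ∣ A * S - Q ^ 2 := by
    obtain ⟨l, rfl⟩ := Nat.exists_eq_succ_of_ne_zero hn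
    rw [prod_mul_sum_triangular, sum_range_succ', ← hB]
    simp only [prod_range_zero, one_mul, zero_mul, pow_zero, mul_one, ← range_eq_Ico,
      add_sub_cancel_right]
    exact dvd_sum fun s _ => (pow_dvd_pow q (by nlinarith)).mul_left _
  have hAQ : q ^ (n + 1) ∣ A * Q ^ 2 - Q := by
    have h := pow_dvd_prod_one_sub_pow_sub q (show n ≤ 2 * n by omega)
    rwa [prod_range_two_mul, hB] at h
  refine (isCoprime_prod_one_sub_pow q n).pow_left.dvd_of_dvd_mul_left ?_
  convert (hAS.mul_left (Q ^ 2)).sub (hAQ.mul_right S) using 1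
  ring

open Finset in
theorem coeff_X_mul_sum_triangular_pow_eight (N m : ℕ) (hm : m ≤ N) :
    (X * (∑ k ∈ range (2 * N), (X : (ZMod 2)[X]) ^ (k * (k + 1) / 2)) ^ 8).coeff m = 1 ↔
      ∃ k : ℕ, Odd k ∧ m = k ^ 2 := by
  have hS : X * (∑ k ∈ range (2 * N), (X : (ZMod 2)[X]) ^ (k * (k + 1) / 2)) ^ 8 =
      ∑ k ∈ range (2 * N), X ^ ((2 * k + 1) ^ 2) := by
    rw [show 8 = 2 ^ 3 by norm_num, sum_pow_char_pow, mul_sum]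
    refine sum_congr rfl fun k _ => ?_
    rw [← pow_mul, ← pow_succ']
    congr 1
    have := Nat.div_mul_cancel (Nat.even_mul_succ_self k).two_dvd
    linear_combination 4 * this
  rw [hS, finsetSum_coeff]
  simp only [coeff_X_pow]
  constructor
  · intro h
    obtain ⟨k, -, hk⟩ := exists_ne_zero_of_sum_ne_zero (h.trans_ne one_ne_zero)
    exact ⟨2 * k + 1, ⟨k, rfl⟩, by_contra fun hne => hk (if_neg hne)⟩
  · rintro ⟨_, ⟨k, rfl⟩, rfl⟩
    rw [sum_eq_single_of_mem k (mem_range.2 (by nlinarith)), if_pos rfl]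
    intro j _ hj
    refine if_neg fun h => hj ?_
    have := Nat.pow_left_injective two_ne_zero h
    omega

/-- Mod-2 `q`-expansion of `Δ`: the coefficient of `X^m` (for `1 ≤ m ≤ N`) in
`X · ∏_{n=1}^{N} (1 − X^n)^{24}` over `ZMod 2` is `1` iff `m` is the square of an
odd natural number. -/
theorem delta_mod_two_expansion (N : ℕ) (hN : 1 ≤ N) (m : ℕ) (hm1 : 1 ≤ m)
    (hmN : m ≤ N) :
    (X * ∏ n ∈ Finset.Icc 1 N,
        ((1 : Polynomial (ZMod 2)) - X ^ n) ^ 24).coeff m = 1 ↔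
      ∃ k : ℕ, Odd k ∧ m = k ^ 2 := by
  set S := ∑ k ∈ Finset.range (2 * N), (X : (ZMod 2)[X]) ^ (k * (k + 1) / 2)
  have hprod : ∏ n ∈ Finset.Icc 1 N, ((1 : (ZMod 2)[X]) - X ^ n) ^ 24 =
      ((∏ k ∈ Finset.range N, (1 - X ^ (k + 1))) ^ 3) ^ 2 ^ 3 := by
    rw [Finset.prod_pow, ← pow_mul, Finset.range_eq_Ico,
      Finset.prod_Ico_add' (fun n => (1 : (ZMod 2)[X]) - X ^ n) 0 N 1]
    rfl
  have hdvd : X ^ (N + 1) ∣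
      X * S ^ 8 - X * ∏ n ∈ Finset.Icc 1 N, ((1 : (ZMod 2)[X]) - X ^ n) ^ 24 := by
    rw [hprod, ← mul_sub, show 8 = 2 ^ 3 by norm_num, ← sub_pow_char_pow]
    exact ((pow_dvd_sum_triangular_sub_prod_cube X (by omega)).trans
      (dvd_pow_self _ (by norm_num))).mul_left X
  have hcoeff := X_pow_dvd_iff.1 hdvd m (by omega)
  rw [coeff_sub, sub_eq_zero] at hcoeff
  rw [← hcoeff, coeff_X_mul_sum_triangular_pow_eight N m hmN]
end
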